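/- Let 𝓛 be a second-order elliptic operator on ℝ^d satisfying the standing assumptions, and let V : ℝ^d → ℝ be Borel measurable, locally bounded, bounded from below, with λ*(𝓛,V) finite. Then for every λ > λ*(𝓛,V) and every open ball 𝓑 ⊂ ℝ^d there exists a constant δ > 0 such that λ = λ*(𝓛, V + δ·1_𝓑) and λ* is strictly monotone at V + δ·1_𝓑 on the right. -/

import Mathlib

open Metric Set Filter

noncomputable section

/-- `ℝ^d` as a Euclidean space. -/
abbrev Euc (d : ℕ) := EuclideanSpace ℝ (Fin d)

/-- First partial derivative `∂u/∂xᵢ`. -/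
def pd {d : ℕ} (u : Euc d → ℝ) (i : Fin d) (x : Euc d) : ℝ :=
  fderiv ℝ u x (EuclideanSpace.single i 1)

/-- Second partial derivative `∂²u/∂xᵢ∂xⱼ`. -/
def pd2 {d : ℕ} (u : Euc d → ℝ) (i j : Fin d) (x : Euc d) : ℝ :=
  fderiv ℝ (fun y => pd u j y) x (EuclideanSpace.single i 1)

/-- The second-order operator `𝓛u = Σ aᶦʲ ∂ᵢⱼu + Σ bᶦ ∂ᵢu`. -/
def Lop {d : ℕ} (a : Euc d → Matrix (Fin d) (Fin d) ℝ) (b : Euc d → Euc d)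
    (u : Euc d → ℝ) (x : Euc d) : ℝ :=
  (∑ i, ∑ j, a x i j * pd2 u i j x) + ∑ i, b x i * pd u i x

/-- Frobenius norm of a matrix. -/
def frob {d : ℕ} (m : Matrix (Fin d) (Fin d) ℝ) : ℝ :=
  Real.sqrt (∑ i, ∑ j, (m i j) ^ 2)

/-- The quadratic form `⟨ξ, m ξ⟩`. -/
def quadForm {d : ℕ} (m : Matrix (Fin d) (Fin d) ℝ) (ξ : Euc d) : ℝ :=
  ∑ i, ∑ j, m i j * ξ i * ξ j

/-- Local Hölder continuity on a set. -/
def LocallyHolderOn {E F : Type*} [PseudoMetricSpace E] [PseudoMetricSpace F]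
    (f : E → F) (s : Set E) : Prop :=
  ∀ x ∈ s, ∃ (C r : NNReal), 0 < r ∧ r ≤ 1 ∧ ∃ ε > 0, HolderOnWith C r f (Metric.ball x ε ∩ s)

/-- Local Hölder continuity. -/
def LocallyHolder {E F : Type*} [PseudoMetricSpace E] [PseudoMetricSpace F] (f : E → F) : Prop :=
  LocallyHolderOn f Set.univ

/-- The set of `λ ∈ ℝ` admitting a positive C² supersolution of `𝓛φ + Vφ ≤ λφ` on `D`. -/
def supersolutions {d : ℕ} (a : Euc d → Matrix (Fin d) (Fin d) ℝ) (b : Euc d → Euc d)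
    (V : Euc d → ℝ) (D : Set (Euc d)) : Set ℝ :=
  {lam | ∃ φ : Euc d → ℝ, (∀ x ∈ D, 0 < φ x) ∧ ContDiffOn ℝ 2 φ D ∧
    ∀ x ∈ D, Lop a b φ x + V x * φ x ≤ lam * φ x}

/-- The generalized principal eigenvalue `λ*(𝓛,V)` on `D`. -/
def lamStar {d : ℕ} (a : Euc d → Matrix (Fin d) (Fin d) ℝ) (b : Euc d → Euc d)
    (V : Euc d → ℝ) (D : Set (Euc d)) : ℝ :=
  sInf (supersolutions a b V D)

/-- `λ*(𝓛,V)` is finite: the defining set is nonempty and bounded below. -/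
def lamStarFinite {d : ℕ} (a : Euc d → Matrix (Fin d) (Fin d) ℝ) (b : Euc d → Euc d)
    (V : Euc d → ℝ) (D : Set (Euc d)) : Prop :=
  (supersolutions a b V D).Nonempty ∧ BddBelow (supersolutions a b V D)

/-- A ground state of `𝓛 + W` in the open connected set `D`: a positive C² solution of
minimal growth at infinity. -/
def IsGroundState {d : ℕ} (a : Euc d → Matrix (Fin d) (Fin d) ℝ) (b : Euc d → Euc d)
    (W : Euc d → ℝ) (u : Euc d → ℝ) (D : Set (Euc d)) : Prop :=
  (∀ x ∈ D, 0 < u x) ∧ ContDiffOn ℝ 2 u D ∧ (∀ x ∈ D, Lop a b u x + W x * u x = 0) ∧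
  ∀ K : Set (Euc d), IsCompact K → K ⊆ D →
    ∀ v : Euc d → ℝ, ContDiffOn ℝ 2 v (D \ K) → (∀ x ∈ D \ K, 0 < v x) →
      (∀ x ∈ D \ K, Lop a b v x + W x * v x ≤ 0) →
      ∃ K' : Set (Euc d), IsCompact K' ∧ K ⊆ K' ∧ K' ⊆ D ∧
        ∃ κ > 0, ∀ x ∈ D \ K', κ * u x ≤ v x

/-- Membership in `C₀⁺(ℝ^d)`: continuous, nonnegative, not identically zero, vanishing
at infinity. -/
def C0plus {d : ℕ} (h : Euc d → ℝ) : Prop :=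
  Continuous h ∧ (∀ x, 0 ≤ h x) ∧ (∃ x, h x ≠ 0) ∧ Tendsto h (cocompact (Euc d)) (nhds 0)

/-- `λ*` is strictly monotone at `V` on the right. -/
def StrictMonoRight {d : ℕ} (a : Euc d → Matrix (Fin d) (Fin d) ℝ) (b : Euc d → Euc d)
    (V : Euc d → ℝ) : Prop :=
  ∀ h : Euc d → ℝ, C0plus h →
    lamStar a b V Set.univ < lamStar a b (fun x => V x + h x) Set.univ

/-- `λ*` is strictly monotone at `V` (on both sides). -/
def StrictMonoAt {d : ℕ} (a : Euc d → Matrix (Fin d) (Fin d) ℝ) (b : Euc d → Euc d)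
    (V : Euc d → ℝ) : Prop :=
  ∀ h : Euc d → ℝ, C0plus h →
    lamStar a b (fun x => V x - h x) Set.univ < lamStar a b V Set.univ ∧
    lamStar a b V Set.univ < lamStar a b (fun x => V x + h x) Set.univ

/-- Standing assumptions (A1)–(A3) with `b` Borel measurable and locally bounded. -/
structure StandingB {d : ℕ} (a : Euc d → Matrix (Fin d) (Fin d) ℝ) (b : Euc d → Euc d) : Prop where
  posdef : ∀ x, (a x).PosDef
  aLip : ∀ R > 0, ∃ C > 0, ∀ x y : Euc d, ‖x‖ ≤ R → ‖y‖ ≤ R →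
    frob (a x - a y) ≤ C * ‖x - y‖
  bMeas : Measurable b
  bLocBdd : ∀ R > 0, ∃ C, ∀ x : Euc d, ‖x‖ ≤ R → ‖b x‖ ≤ C
  nondeg : ∀ R > 0, ∃ C > 0, ∀ x : Euc d, ‖x‖ ≤ R → ∀ ξ : Euc d,
    C⁻¹ * ‖ξ‖ ^ 2 ≤ quadForm (a x) ξ
  growth : ∃ C₀ > 0, ∀ x : Euc d,
    max (∑ i, b x i * x i) 0 + frob (a x) ≤ C₀ * (1 + ‖x‖ ^ 2)

/-- Standing assumptions (A1)–(A3) with `b` locally Hölder continuous. -/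
structure StandingH {d : ℕ} (a : Euc d → Matrix (Fin d) (Fin d) ℝ) (b : Euc d → Euc d) : Prop where
  posdef : ∀ x, (a x).PosDef
  aLip : ∀ R > 0, ∃ C > 0, ∀ x y : Euc d, ‖x‖ ≤ R → ‖y‖ ≤ R →
    frob (a x - a y) ≤ C * ‖x - y‖
  bHolder : LocallyHolder b
  nondeg : ∀ R > 0, ∃ C > 0, ∀ x : Euc d, ‖x‖ ≤ R → ∀ ξ : Euc d,
    C⁻¹ * ‖ξ‖ ^ 2 ≤ quadForm (a x) ξ
  growth : ∃ C₀ > 0, ∀ x : Euc d,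
    max (∑ i, b x i * x i) 0 + frob (a x) ≤ C₀ * (1 + ‖x‖ ^ 2)

open Topology

/-!
`δ ↦ λ*(V + δ·1_𝓑)` is `1`-Lipschitz and unbounded, so some `δ > 0` attains the prescribed
`λ > λ*(V)`. Put `W = V + δ·1_𝓑 - λ`. Suppose that adding `h ∈ C₀⁺` does not raise `λ*`: then for
every `κ > 0` there is `φ > 0` with `𝓛φ ≤ (κ - W - h)φ`, while `λ*(V) < λ` provides `ψ > 0` with
`𝓛ψ ≤ (δ·1_𝓑 - η - W)ψ`. A strict supersolution of `𝓛 + W`, which contradicts `λ*(W) = 0`, is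
obtained by perturbing a smooth minimum of `φ` and `Aψ`, `A` large. The minimum fails to be a
supersolution only on `E = {φ ≥ Aψ} ∩ 𝓑`, where the corrector `v ≥ 0` is used, a compactly supported
function with `𝓛v + Kv ≤ ε` everywhere and `𝓛v + Kv ≤ ε - A` on `E`. Such a `v` exists because a
supersolution is large only on a small set, by a weak Harnack inequality with an exponent above `1`.
That inequality is obtained by duality: `v` is a combination of explicit approximate Green kernels
with poles in a finite net of `E`, weighted by an equilibrium vector of the kernel matrix, and
comparison with `φ` bounds the total weight. Finally a Hopf barrier spreads the negativity of `-h`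
over `𝓑`, where `ψ` is not a strict supersolution.
-/

/-- The bilinear form `⟨a ∇u, ∇v⟩` (the carré du champ, up to a factor) of an operator with
leading coefficient `a`. -/
def gradForm {d : ℕ} (a : Euc d → Matrix (Fin d) (Fin d) ℝ) (u v : Euc d → ℝ) (x : Euc d) : ℝ :=
  ∑ i, ∑ j, a x i j * pd u i x * pd v j x

section Calculus

variable {d : ℕ} {a : Euc d → Matrix (Fin d) (Fin d) ℝ} {b : Euc d → Euc d}
  {u v : Euc d → ℝ} {x : Euc d}

lemma pd2_eq_pd_pd (u : Euc d → ℝ) (i j : Fin d) : pd2 u i j = pd (pd u j) i := rfl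

lemma contDiff_pd (hu : ContDiff ℝ 2 u) (i : Fin d) : ContDiff ℝ 1 (pd u i) :=
  (hu.fderiv_right (m := 1) (by norm_num)).clm_apply contDiff_const

lemma differentiable_pd (hu : ContDiff ℝ 2 u) (i : Fin d) : Differentiable ℝ (pd u i) :=
  (contDiff_pd hu i).differentiable (by norm_num)

lemma continuous_pd2 (hu : ContDiff ℝ 2 u) (i j : Fin d) : Continuous (pd2 u i j) :=
  ((contDiff_pd hu j).continuous_fderiv (by norm_num)).clm_apply continuous_const

lemma pd_add (hu : Differentiable ℝ u) (hv : Differentiable ℝ v) (i : Fin d) :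
    pd (fun y => u y + v y) i = fun y => pd u i y + pd v i y := by
  funext y
  simp [pd, fderiv_fun_add (hu y) (hv y)]

lemma pd_mul (hu : Differentiable ℝ u) (hv : Differentiable ℝ v) (i : Fin d) :
    pd (fun y => u y * v y) i = fun y => u y * pd v i y + v y * pd u i y := by
  funext y
  simp [pd, fderiv_fun_mul (hu y) (hv y)]

lemma pd_const_mul (hu : Differentiable ℝ u) (c : ℝ) (i : Fin d) :
    pd (fun y => c * u y) i = fun y => c * pd u i y := by
  funext y
  simp [pd, fderiv_const_mul (hu y)]

lemma pd_comp {g : ℝ → ℝ} {g' : ℝ} (hg : HasDerivAt g g' (u x)) (hu : DifferentiableAt ℝ u x)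
    (i : Fin d) : pd (fun y => g (u y)) i x = g' * pd u i x := by
  have h : fderiv ℝ (fun y => g (u y)) x = g' • fderiv ℝ u x :=
    (hg.comp_hasFDerivAt x hu.hasFDerivAt).fderiv
  simp [pd, h]

lemma pd_sum {ι : Type*} (s : Finset ι) {f : ι → Euc d → ℝ} (hf : ∀ i, Differentiable ℝ (f i))
    (k : Fin d) : pd (fun y => ∑ i ∈ s, f i y) k = fun y => ∑ i ∈ s, pd (f i) k y := by
  funext y
  simp [pd, fderiv_fun_sum fun i _ => hf i y]

lemma fderiv_eq_sum_pd (u : Euc d → ℝ) (x ξ : Euc d) :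
    fderiv ℝ u x ξ = ∑ j, ξ j * pd u j x := by
  have hξ : ξ = ∑ j, ξ j • EuclideanSpace.single j (1 : ℝ) := by
    simpa using ((EuclideanSpace.basisFun (Fin d) ℝ).sum_repr ξ).symm
  conv_lhs => rw [hξ]
  simp [pd, map_sum]

lemma gradForm_comm (ha : (a x).IsSymm) (u v : Euc d → ℝ) :
    gradForm a u v x = gradForm a v u x := by
  rw [gradForm, Finset.sum_comm]
  refine Finset.sum_congr rfl fun i _ => Finset.sum_congr rfl fun j _ => ?_
  rw [ha.apply i j]
  ring

lemma gradForm_comp_right {g : ℝ → ℝ} {g' : ℝ} (hg : HasDerivAt g g' (v x))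
    (hv : DifferentiableAt ℝ v x) :
    gradForm a u (fun y => g (v y)) x = g' * gradForm a u v x := by
  simp only [gradForm, pd_comp hg hv, Finset.mul_sum]
  exact Finset.sum_congr rfl fun i _ => Finset.sum_congr rfl fun j _ => by ring

lemma Lop_add (hu : ContDiff ℝ 2 u) (hv : ContDiff ℝ 2 v) :
    Lop a b (fun y => u y + v y) x = Lop a b u x + Lop a b v x := by
  have hu' := hu.differentiable (by norm_num)
  have hv' := hv.differentiable (by norm_num)
  simp only [Lop, pd2_eq_pd_pd, pd_add hu' hv', pd_add (differentiable_pd hu _)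
    (differentiable_pd hv _), mul_add, Finset.sum_add_distrib]
  ring

lemma Lop_const_mul (hu : ContDiff ℝ 2 u) (c : ℝ) :
    Lop a b (fun y => c * u y) x = c * Lop a b u x := by
  simp only [Lop, pd2_eq_pd_pd, pd_const_mul (hu.differentiable (by norm_num)),
    pd_const_mul (differentiable_pd hu _), mul_add, Finset.mul_sum, mul_left_comm c]

lemma Lop_sub_const_mul (hu : ContDiff ℝ 2 u) (hv : ContDiff ℝ 2 v) (c : ℝ) :
    Lop a b (fun y => u y - c * v y) x = Lop a b u x - c * Lop a b v x := by
  simp only [sub_eq_add_neg, ← neg_mul]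
  rw [Lop_add hu (contDiff_const.mul hv), Lop_const_mul hv]

lemma Lop_zero : Lop a b (fun _ => (0 : ℝ)) x = 0 := by
  simpa using Lop_const_mul (a := a) (b := b) (x := x) (contDiff_const (c := (0 : ℝ))) 0

lemma Lop_sum {ι : Type*} (s : Finset ι) (f : ι → Euc d → ℝ) (hf : ∀ i, ContDiff ℝ 2 (f i)) :
    Lop a b (fun y => ∑ i ∈ s, f i y) x = ∑ i ∈ s, Lop a b (f i) x := by
  classical
  induction s using Finset.induction_on with
  | empty => simp only [Finset.sum_empty, Lop_zero]
  | insert i s hi ih =>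
    simp only [Finset.sum_insert hi]
    rw [Lop_add (hf i) (ContDiff.sum fun j _ => hf j), ih]

lemma Lop_mul (ha : (a x).IsSymm) (hu : ContDiff ℝ 2 u) (hv : ContDiff ℝ 2 v) :
    Lop a b (fun y => u y * v y) x
      = u x * Lop a b v x + v x * Lop a b u x + 2 * gradForm a u v x := by
  have hu' := hu.differentiable (by norm_num)
  have hv' := hv.differentiable (by norm_num)
  have hpd2 : ∀ i j, pd2 (fun y => u y * v y) i j x
      = u x * pd2 v i j x + v x * pd2 u i j x + pd u i x * pd v j x + pd v i x * pd u j x := by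
    intro i j
    rw [pd2_eq_pd_pd, pd_mul hu' hv', pd_add (hu'.fun_mul (differentiable_pd hv j))
      (hv'.fun_mul (differentiable_pd hu j)), pd_mul hu' (differentiable_pd hv j),
      pd_mul hv' (differentiable_pd hu j), ← pd2_eq_pd_pd, ← pd2_eq_pd_pd]
    ring
  have hsecond : ∑ i, ∑ j, a x i j * pd2 (fun y => u y * v y) i j x
      = u x * (∑ i, ∑ j, a x i j * pd2 v i j x) + v x * (∑ i, ∑ j, a x i j * pd2 u i j x)
        + gradForm a u v x + gradForm a v u x := by
    simp only [gradForm, hpd2, Finset.mul_sum, ← Finset.sum_add_distrib]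
    exact Finset.sum_congr rfl fun i _ => Finset.sum_congr rfl fun j _ => by ring
  have hfirst : ∑ i, b x i * pd (fun y => u y * v y) i x
      = u x * (∑ i, b x i * pd v i x) + v x * ∑ i, b x i * pd u i x := by
    simp only [pd_mul hu' hv', Finset.mul_sum, ← Finset.sum_add_distrib]
    exact Finset.sum_congr rfl fun i _ => by ring
  rw [Lop, hsecond, hfirst, gradForm_comm ha v u, Lop, Lop]
  ring

lemma Lop_comp {g g₁ : ℝ → ℝ} {g₂ : ℝ} (hu : ContDiff ℝ 2 u)
    (hg : ∀ y, HasDerivAt g (g₁ (u y)) (u y)) (hg₁ : HasDerivAt g₁ g₂ (u x)) :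
    Lop a b (fun y => g (u y)) x = g₁ (u x) * Lop a b u x + g₂ * gradForm a u u x := by
  have hu' := hu.differentiable (by norm_num)
  have hpd : ∀ i, pd (fun y => g (u y)) i = fun y => g₁ (u y) * pd u i y := fun i =>
    funext fun y => pd_comp (hg y) (hu' y) i
  have hpd2 : ∀ i j, pd2 (fun y => g (u y)) i j x
      = g₁ (u x) * pd2 u i j x + g₂ * (pd u i x * pd u j x) := by
    intro i j
    have hg₁u : DifferentiableAt ℝ (fun y => g₁ (u y)) x :=
      (hg₁.comp_hasFDerivAt x (hu' x).hasFDerivAt).differentiableAt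
    have hpd_g₁ : fderiv ℝ (fun y => g₁ (u y)) x (EuclideanSpace.single i 1) = g₂ * pd u i x :=
      pd_comp hg₁ (hu' x) i
    simp only [pd2, hpd, fderiv_fun_mul hg₁u (differentiable_pd hu j x), add_apply, smul_apply,
      smul_eq_mul, hpd_g₁]
    ring
  have hsecond : ∑ i, ∑ j, a x i j * pd2 (fun y => g (u y)) i j x
      = g₁ (u x) * (∑ i, ∑ j, a x i j * pd2 u i j x) + g₂ * gradForm a u u x := by
    simp only [gradForm, hpd2, Finset.mul_sum, ← Finset.sum_add_distrib]
    exact Finset.sum_congr rfl fun i _ => Finset.sum_congr rfl fun j _ => by ring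
  simp only [Lop, hsecond, hpd, Finset.mul_sum, mul_add, mul_left_comm (g₁ (u x))]
  ring

end Calculus

section PositiveDefinite

variable {d : ℕ} {a : Euc d → Matrix (Fin d) (Fin d) ℝ} {b : Euc d → Euc d}
  {u v φ : Euc d → ℝ} {x : Euc d}

lemma isSymm_of_posDef {m : Matrix (Fin d) (Fin d) ℝ} (hm : m.PosDef) : m.IsSymm :=
  Matrix.isHermitian_iff_isSymm.1 hm.isHermitian

lemma exists_eq_sum_mul_of_posSemidef {m : Matrix (Fin d) (Fin d) ℝ} (hm : m.PosSemidef) :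
    ∃ B : Matrix (Fin d) (Fin d) ℝ, ∀ i j, m i j = ∑ k, B k i * B k j := by
  obtain ⟨B, hB⟩ : ∃ B : Matrix (Fin d) (Fin d) ℝ, m = B.conjTranspose * B := by
    open scoped MatrixOrder in
    exact CStarAlgebra.nonneg_iff_eq_star_mul_self.1 (Matrix.nonneg_iff_posSemidef.2 hm)
  exact ⟨B, fun i j => by simp [hB, Matrix.mul_apply]⟩

lemma quadForm_eq_dotProduct (m : Matrix (Fin d) (Fin d) ℝ) (ξ : Euc d) :
    quadForm m ξ = dotProduct (star ξ.ofLp) (m.mulVec ξ.ofLp) := by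
  simp only [quadForm, dotProduct, Matrix.mulVec, star_trivial, Finset.mul_sum]
  exact Finset.sum_congr rfl fun i _ => Finset.sum_congr rfl fun j _ => by ring

lemma quadForm_nonneg {m : Matrix (Fin d) (Fin d) ℝ} (hm : m.PosSemidef) (ξ : Euc d) :
    0 ≤ quadForm m ξ :=
  (quadForm_eq_dotProduct m ξ).symm ▸ hm.dotProduct_mulVec_nonneg ξ.ofLp

lemma gradForm_self_nonneg (ha : (a x).PosDef) (u : Euc d → ℝ) : 0 ≤ gradForm a u u x :=
  quadForm_nonneg ha.posSemidef (WithLp.toLp 2 fun i => pd u i x)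

/- With `r = u / v`, the product rule applied to `u = v · r` and to `v · g ∘ r` leaves
`v g''(r) ⟨a ∇r, ∇r⟩` as the only term that is not a multiple of `𝓛u` or `𝓛v`. -/
lemma Lop_perspective_le (ha : (a x).PosDef) {g g₁ : ℝ → ℝ} {g₂ : ℝ}
    (hu : ContDiff ℝ 2 u) (hv : ContDiff ℝ 2 v) (hvpos : ∀ y, 0 < v y) (hg2 : ContDiff ℝ 2 g)
    (hg : ∀ t, HasDerivAt g (g₁ t) t) (hg₁ : HasDerivAt g₁ g₂ (u x / v x)) (hconc : g₂ ≤ 0) :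
    Lop a b (fun y => v y * g (u y / v y)) x
      ≤ g₁ (u x / v x) * Lop a b u x
        + (g (u x / v x) - u x / v x * g₁ (u x / v x)) * Lop a b v x := by
  have hsym := isSymm_of_posDef ha
  set r : Euc d → ℝ := fun y => u y / v y
  have hrC : ContDiff ℝ 2 r := hu.div hv fun y => (hvpos y).ne'
  have hvr : (fun y => v y * r y) = u := funext fun y => mul_div_cancel₀ _ (hvpos y).ne'
  have hLu := Lop_mul (b := b) hsym hv hrC
  rw [hvr] at hLu
  have hLvg : Lop a b (fun y => v y * g (r y)) x = _ := Lop_mul hsym hv (hg2.comp hrC)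
  rw [Lop_comp hrC (fun y => hg (r y)) hg₁,
    gradForm_comp_right (hg (r x)) (hrC.differentiable (by norm_num) x)] at hLvg
  have hdrop : v x * (g₂ * gradForm a r r x) ≤ 0 :=
    mul_nonpos_of_nonneg_of_nonpos (hvpos x).le
      (mul_nonpos_of_nonpos_of_nonneg hconc (gradForm_self_nonneg ha r))
  change Lop a b (fun y => v y * g (r y)) x ≤ g₁ (r x) * Lop a b u x
    + (g (r x) - r x * g₁ (r x)) * Lop a b v x
  rw [hLvg, hLu]
  linarith

end PositiveDefinite
/-- A `C²` function, positive on the whole space, which satisfies `𝓛φ ≤ Uφ` on the set `s`. -/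
structure IsSupersolutionOn {d : ℕ} (a : Euc d → Matrix (Fin d) (Fin d) ℝ) (b : Euc d → Euc d)
    (U : Euc d → ℝ) (s : Set (Euc d)) (φ : Euc d → ℝ) : Prop where
  contDiff : ContDiff ℝ 2 φ
  pos : ∀ x, 0 < φ x
  Lop_le : ∀ x ∈ s, Lop a b φ x ≤ U x * φ x

section MaximumPrinciple

variable {d : ℕ} {a : Euc d → Matrix (Fin d) (Fin d) ℝ} {b : Euc d → Euc d}
  {u φ U U' : Euc d → ℝ} {s t : Set (Euc d)} {x : Euc d}

lemma deriv_deriv_nonpos_of_isLocalMax {g : ℝ → ℝ} {t : ℝ} (hg : ContinuousAt g t)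
    (h : IsLocalMax g t) : deriv (deriv g) t ≤ 0 := by
  by_contra! hpos
  have hmin := isLocalMin_of_deriv_deriv_pos hpos h.deriv_eq_zero hg
  have hconst : g =ᶠ[𝓝 t] fun _ => g t := by
    filter_upwards [h, hmin] with s hle hge using le_antisymm hle hge
  have hzero := hconst.deriv.deriv_eq
  simp only [deriv_const'] at hzero
  linarith

lemma hasDerivAt_comp_line (hu : Differentiable ℝ u) (x ξ : Euc d) (t : ℝ) :
    HasDerivAt (fun s : ℝ => u (x + s • ξ)) (∑ j, ξ j * pd u j (x + t • ξ)) t := by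
  have hline : HasDerivAt (fun s : ℝ => x + s • ξ) ξ t := by
    simpa using ((hasDerivAt_id t).smul_const ξ).const_add x
  rw [← fderiv_eq_sum_pd]
  exact (hu _).hasFDerivAt.comp_hasDerivAt t hline

lemma deriv_deriv_comp_line (hu : ContDiff ℝ 2 u) (x ξ : Euc d) :
    deriv (deriv fun t : ℝ => u (x + t • ξ)) 0 = ∑ i, ∑ j, ξ i * ξ j * pd2 u i j x := by
  have hfirst : deriv (fun t : ℝ => u (x + t • ξ)) = fun t => ∑ j, ξ j * pd u j (x + t • ξ) :=
    funext fun t => (hasDerivAt_comp_line (hu.differentiable (by norm_num)) x ξ t).deriv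
  have hsecond : HasDerivAt (fun t : ℝ => ∑ j, ξ j * pd u j (x + t • ξ))
      (∑ j, ξ j * ∑ i, ξ i * pd2 u i j (x + (0 : ℝ) • ξ)) 0 :=
    HasDerivAt.fun_sum fun j _ =>
      (hasDerivAt_comp_line (differentiable_pd hu j) x ξ 0).const_mul (ξ j)
  rw [hfirst, hsecond.deriv, Finset.sum_comm]
  simp only [Finset.mul_sum, zero_smul, add_zero]
  exact Finset.sum_congr rfl fun i _ => Finset.sum_congr rfl fun j _ => by ring

lemma sum_pd2_nonpos_of_isLocalMax (hu : ContDiff ℝ 2 u) (h : IsLocalMax u x) (ξ : Euc d) :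
    ∑ i, ∑ j, ξ i * ξ j * pd2 u i j x ≤ 0 := by
  have hline : Continuous fun t : ℝ => x + t • ξ := by fun_prop
  have hmax : IsLocalMax (fun t : ℝ => u (x + t • ξ)) 0 := by
    have htend : Tendsto (fun t : ℝ => x + t • ξ) (𝓝 0) (𝓝 x) := by simpa using hline.tendsto 0
    simpa [IsLocalMax, IsMaxFilter] using htend.eventually h
  rw [← deriv_deriv_comp_line hu]
  exact deriv_deriv_nonpos_of_isLocalMax (hu.continuous.comp hline).continuousAt hmax

lemma Lop_nonpos_of_isLocalMax (ha : (a x).PosDef) (hu : ContDiff ℝ 2 u) (h : IsLocalMax u x) :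
    Lop a b u x ≤ 0 := by
  have hpd : ∀ i, pd u i x = 0 := fun i => by simp [pd, h.fderiv_eq_zero]
  obtain ⟨B, hB⟩ := exists_eq_sum_mul_of_posSemidef ha.posSemidef
  have hLop : Lop a b u x = ∑ k, ∑ i, ∑ j, B k i * B k j * pd2 u i j x := by
    simp only [Lop, hpd, hB, mul_zero, Finset.sum_const_zero, add_zero, Finset.sum_mul]
    rw [Finset.sum_comm, Finset.sum_congr rfl fun i _ => Finset.sum_comm, Finset.sum_comm]
    exact Finset.sum_congr rfl fun k _ => Finset.sum_comm
  rw [hLop]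
  exact Finset.sum_nonpos fun k _ => sum_pd2_nonpos_of_isLocalMax hu h (WithLp.toLp 2 (B k))

lemma IsSupersolutionOn.mono (h : IsSupersolutionOn a b U s φ) (hts : t ⊆ s)
    (hU : ∀ x ∈ t, U x ≤ U' x) : IsSupersolutionOn a b U' t φ :=
  ⟨h.contDiff, h.pos, fun x hx =>
    (h.Lop_le x (hts hx)).trans (mul_le_mul_of_nonneg_right (hU x hx) (h.pos x).le)⟩

lemma IsSupersolutionOn.const_mul (h : IsSupersolutionOn a b U s φ) {c : ℝ} (hc : 0 < c) :
    IsSupersolutionOn a b U s fun x => c * φ x where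
  contDiff := contDiff_const.mul h.contDiff
  pos x := mul_pos hc (h.pos x)
  Lop_le x hx := by
    rw [Lop_const_mul h.contDiff, mul_left_comm]
    exact mul_le_mul_of_nonneg_left (h.Lop_le x hx) hc.le

lemma IsSupersolutionOn.le_mul_of_subsolution (hφ : IsSupersolutionOn a b U s φ)
    (ha : ∀ x, (a x).PosDef) (hs : IsCompact s) (hu : ContDiff ℝ 2 u) (hoff : ∀ y ∉ s, u y ≤ 0)
    {M : ℝ} (hM : 0 ≤ M) (hsub : ∀ y ∈ s, M * φ y < u y → U y * u y < Lop a b u y) (y : Euc d) :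
    u y ≤ M * φ y := by
  have hpos := hφ.pos
  by_contra! hlt
  have hy : y ∈ s := by
    by_contra hy
    exact (mul_nonneg hM (hpos y).le).not_gt (hlt.trans_le (hoff y hy))
  obtain ⟨p, hp, hmax⟩ := hs.exists_isMaxOn ⟨y, hy⟩
    ((hu.continuous.div hφ.contDiff.continuous fun z => (hpos z).ne').continuousOn)
  set c := u p / φ p
  have hMc : M < c := lt_of_lt_of_le ((lt_div_iff₀ (hpos y)).2 hlt) (hmax hy)
  have hcp : u p = c * φ p := (div_mul_cancel₀ _ (hpos p).ne').symm
  have hle : ∀ z, u z ≤ c * φ z := fun z => by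
    by_cases hz : z ∈ s
    · exact (div_le_iff₀ (hpos z)).1 (hmax hz)
    · exact (hoff z hz).trans (mul_nonneg (hM.trans hMc.le) (hpos z).le)
  have htouch : IsLocalMax (fun z => u z - c * φ z) p :=
    Eventually.of_forall fun z =>
      (sub_nonpos.2 (hle z)).trans_eq (sub_eq_zero.2 hcp).symm
  have hLop := Lop_nonpos_of_isLocalMax (b := b) (ha p)
    (hu.sub (contDiff_const.mul hφ.contDiff)) htouch
  rw [Lop_sub_const_mul hu hφ.contDiff] at hLop
  have hstrict := hsub p hp (hcp ▸ mul_lt_mul_of_pos_right hMc (hpos p))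
  have hLφ := mul_le_mul_of_nonneg_left (hφ.Lop_le p hp) (hM.trans hMc.le)
  rw [hcp] at hstrict
  linarith

end MaximumPrinciple
section Quadratic

variable {d : ℕ} {a : Euc d → Matrix (Fin d) (Fin d) ℝ} {b : Euc d → Euc d}
  {M : Matrix (Fin d) (Fin d) ℝ}

lemma pd_coord_sub (i k : Fin d) (c : ℝ) :
    pd (fun y : Euc d => y i - c) k = fun _ => if i = k then 1 else 0 := by
  funext y
  have h : HasFDerivAt (fun y : Euc d => y i - c) (EuclideanSpace.proj i : Euc d →L[ℝ] ℝ) y :=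
    (EuclideanSpace.proj i : Euc d →L[ℝ] ℝ).hasFDerivAt.sub_const c
  simp [pd, h.fderiv]

lemma pd_sum_mul_coord_sub (l : Fin d → ℝ) (p : Euc d) (k : Fin d) :
    pd (fun y : Euc d => ∑ j, l j * (y j - p j)) k = fun _ => l k := by
  have hcoord : ∀ j, Differentiable ℝ fun y : Euc d => y j - p j := fun j => by fun_prop
  rw [pd_sum _ fun j => (hcoord j).const_mul (l j)]
  simp [pd_const_mul (hcoord _), pd_coord_sub]

lemma contDiff_quadForm_sub (M : Matrix (Fin d) (Fin d) ℝ) (p : Euc d) (c : ℝ) :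
    ContDiff ℝ 2 fun y => quadForm M (y - p) + c := by
  simp only [quadForm, PiLp.sub_apply]
  fun_prop

lemma pd_quadForm_sub (hM : M.IsSymm) (p : Euc d) (c : ℝ) (k : Fin d) :
    pd (fun y => quadForm M (y - p) + c) k = fun y => ∑ j, 2 * M k j * (y j - p j) := by
  have hcoord : ∀ i, Differentiable ℝ fun y : Euc d => y i - p i := fun i => by fun_prop
  have hrow : ∀ i, Differentiable ℝ fun y : Euc d => ∑ j, M i j * (y j - p j) :=
    fun i => by fun_prop
  have hfactor : (fun y => quadForm M (y - p) + c)
      = fun y : Euc d => (∑ i, (y i - p i) * ∑ j, M i j * (y j - p j)) + c := by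
    funext y
    simp only [quadForm, PiLp.sub_apply, Finset.mul_sum, add_left_inj]
    exact Finset.sum_congr rfl fun i _ => Finset.sum_congr rfl fun j _ => by ring
  have hterm : ∀ i, pd (fun y : Euc d => (y i - p i) * ∑ j, M i j * (y j - p j)) k
      = fun y => (y i - p i) * M i k + (∑ j, M i j * (y j - p j)) * (if i = k then 1 else 0) :=
    fun i => by rw [pd_mul (hcoord i) (hrow i), pd_coord_sub, pd_sum_mul_coord_sub]
  have hconst : pd (fun _ : Euc d => c) k = fun _ => 0 := funext fun y => by simp [pd]
  rw [hfactor, pd_add (by fun_prop) (by fun_prop), pd_sum _ fun i => (hcoord i).fun_mul (hrow i),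
    hconst]
  funext y
  simp only [hterm, Finset.sum_add_distrib, mul_ite, mul_one, mul_zero, Finset.sum_ite_eq',
    Finset.mem_univ, if_true, add_zero]
  rw [← Finset.sum_add_distrib]
  exact Finset.sum_congr rfl fun j _ => by rw [hM.apply k j]; ring

lemma Lop_quadForm_sub (hM : M.IsSymm) (p : Euc d) (c : ℝ) (x : Euc d) :
    Lop a b (fun y => quadForm M (y - p) + c) x
      = 2 * (∑ i, ∑ j, a x i j * M i j) + 2 * ∑ i, b x i * ∑ j, M i j * (x j - p j) := by
  have hpd2 : ∀ i j, pd2 (fun y => quadForm M (y - p) + c) i j x = 2 * M i j := fun i j => by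
    rw [pd2_eq_pd_pd, pd_quadForm_sub hM, pd_sum_mul_coord_sub, hM.apply i j]
  simp only [Lop, hpd2, pd_quadForm_sub hM, Finset.mul_sum]
  congr 1 <;>
    exact Finset.sum_congr rfl fun i _ => Finset.sum_congr rfl fun j _ => by ring

lemma gradForm_quadForm_sub (hM : M.IsSymm) (p : Euc d) (c : ℝ) (x : Euc d) :
    gradForm a (fun y => quadForm M (y - p) + c) (fun y => quadForm M (y - p) + c) x
      = 4 * quadForm (a x) (WithLp.toLp 2 fun i => ∑ j, M i j * (x j - p j)) := by
  have hpd : ∀ k, pd (fun y => quadForm M (y - p) + c) k x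
      = 2 * ∑ j, M k j * (x j - p j) := fun k => by
    simp only [pd_quadForm_sub hM, Finset.mul_sum, mul_assoc]
  rw [gradForm, quadForm, Finset.mul_sum]
  simp only [hpd, Finset.mul_sum (a := (4 : ℝ))]
  exact Finset.sum_congr rfl fun i _ => Finset.sum_congr rfl fun j _ => by ring

end Quadratic
section Splines

lemma contDiff_two_of_hasDerivAt {f f₁ f₂ : ℝ → ℝ} (h₁ : ∀ t, HasDerivAt f (f₁ t) t)
    (h₂ : ∀ t, HasDerivAt f₁ (f₂ t) t) (hc : Continuous f₂) : ContDiff ℝ 2 f := by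
  have hf₁ : ContDiff ℝ 1 f₁ := contDiff_one_iff_deriv.2
    ⟨fun t => (h₂ t).differentiableAt, by rwa [funext fun t => (h₂ t).deriv]⟩
  have hf : ContDiff ℝ (1 + 1) f := contDiff_succ_iff_deriv.2
    ⟨fun t => (h₁ t).differentiableAt, by simp, by rwa [funext fun t => (h₁ t).deriv]⟩
  exact hf.of_le (by norm_num)

lemma hasDerivAt_comp_max_zero {F F' : ℝ → ℝ} (hF : ∀ t, HasDerivAt F (F' t) t) (h0 : F' 0 = 0)
    (t : ℝ) : HasDerivAt (fun s => F (max s 0)) (F' (max t 0)) t := by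
  have hright : ∀ s ∈ Ici (0 : ℝ), F (max s 0) = F s := fun s hs => by rw [max_eq_left hs]
  have hleft : ∀ s ∈ Iic (0 : ℝ), F (max s 0) = F 0 := fun s hs => by rw [max_eq_right hs]
  rcases lt_trichotomy t 0 with ht | rfl | ht
  · rw [max_eq_right ht.le, h0]
    exact (hasDerivAt_const t (F 0)).congr_of_eventuallyEq
      (eventually_of_mem (Iic_mem_nhds ht) hleft)
  · rw [max_self, ← hasDerivWithinAt_univ, ← Iic_union_Ici (a := (0 : ℝ))]
    refine HasDerivWithinAt.union ?_ ((hF 0).hasDerivWithinAt.congr hright (by rw [max_self]))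
    rw [h0]
    exact (hasDerivWithinAt_const (0 : ℝ) _ (F 0)).congr hleft (by rw [max_self])
  · rw [max_eq_left ht.le]
    exact (hF t).congr_of_eventuallyEq (eventually_of_mem (Ici_mem_nhds ht) hright)

/-- The `C²` function `t ↦ (t⁺)³`, the building block of cutoffs and of cubic splines. -/
def posCube (t : ℝ) : ℝ := (max t 0) ^ 3

lemma hasDerivAt_posCube (t : ℝ) : HasDerivAt posCube (3 * (max t 0) ^ 2) t :=
  hasDerivAt_comp_max_zero (F := (· ^ 3)) (F' := fun t => 3 * t ^ 2)
    (fun t => by simpa using hasDerivAt_pow 3 t) (by norm_num) t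

lemma hasDerivAt_three_mul_max_sq (t : ℝ) :
    HasDerivAt (fun t : ℝ => 3 * (max t 0) ^ 2) (6 * max t 0) t :=
  hasDerivAt_comp_max_zero (F := fun t => 3 * t ^ 2) (F' := fun t => 6 * t)
    (fun t => ((hasDerivAt_pow 2 t).const_mul 3).congr_deriv (by norm_num; ring)) (by norm_num) t

lemma contDiff_posCube : ContDiff ℝ 2 posCube :=
  contDiff_two_of_hasDerivAt hasDerivAt_posCube hasDerivAt_three_mul_max_sq (by fun_prop)

/-- A convex `C²` function vanishing on `(-∞, 1]` with derivative `1` on `[3, ∞)`: the cubic spline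
with knots `1, 2, 3`. -/
def convexRamp (t : ℝ) : ℝ := (posCube (t - 1) - 2 * posCube (t - 2) + posCube (t - 3)) / 6

/-- The derivative of `convexRamp`. -/
def convexRamp₁ (t : ℝ) : ℝ :=
  ((max (t - 1) 0) ^ 2 - 2 * (max (t - 2) 0) ^ 2 + (max (t - 3) 0) ^ 2) / 2

/-- The second derivative of `convexRamp`. -/
def convexRamp₂ (t : ℝ) : ℝ := max (t - 1) 0 - 2 * max (t - 2) 0 + max (t - 3) 0

lemma hasDerivAt_convexRamp (t : ℝ) : HasDerivAt convexRamp (convexRamp₁ t) t := by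
  have h (c : ℝ) := (hasDerivAt_posCube (t - c)).comp_sub_const t c
  exact ((((h 1).sub ((h 2).const_mul 2)).add (h 3)).div_const 6).congr_deriv
    (by simp only [convexRamp₁]; ring)

lemma hasDerivAt_convexRamp₁ (t : ℝ) : HasDerivAt convexRamp₁ (convexRamp₂ t) t := by
  have h (c : ℝ) := (hasDerivAt_three_mul_max_sq (t - c)).comp_sub_const t c
  refine (((((h 1).sub ((h 2).const_mul 2)).add (h 3)).div_const 6).congr_deriv
    (by simp only [convexRamp₂]; ring)).congr_of_eventuallyEq (Eventually.of_forall fun s => ?_)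
  simp only [convexRamp₁, Pi.add_apply, Pi.sub_apply]
  ring

lemma contDiff_convexRamp : ContDiff ℝ 2 convexRamp :=
  contDiff_two_of_hasDerivAt hasDerivAt_convexRamp hasDerivAt_convexRamp₁
    (by unfold convexRamp₂; fun_prop)

lemma convexRamp_of_le {t : ℝ} (ht : t ≤ 1) :
    convexRamp t = 0 ∧ convexRamp₁ t = 0 ∧ convexRamp₂ t = 0 := by
  simp [convexRamp, convexRamp₁, convexRamp₂, posCube, max_eq_right (by linarith : t - 1 ≤ 0),
    max_eq_right (by linarith : t - 2 ≤ 0), max_eq_right (by linarith : t - 3 ≤ 0)]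

lemma convexRamp_of_ge {t : ℝ} (ht : 3 ≤ t) :
    convexRamp t = t - 2 ∧ convexRamp₁ t = 1 ∧ convexRamp₂ t = 0 := by
  simp only [convexRamp, convexRamp₁, convexRamp₂, posCube,
    max_eq_left (by linarith : 0 ≤ t - 1), max_eq_left (by linarith : 0 ≤ t - 2),
    max_eq_left (by linarith : 0 ≤ t - 3)]
  exact ⟨by ring, by ring, by ring⟩

lemma convexRamp₂_nonneg (t : ℝ) : 0 ≤ convexRamp₂ t := by
  simp only [convexRamp₂, max_def]
  split_ifs <;> linarith

lemma convexRamp₂_le_one (t : ℝ) : convexRamp₂ t ≤ 1 := by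
  simp only [convexRamp₂, max_def]
  split_ifs <;> linarith

lemma convexRamp₁_monotone : Monotone convexRamp₁ :=
  monotone_of_hasDerivAt_nonneg hasDerivAt_convexRamp₁ convexRamp₂_nonneg

lemma convexRamp₁_nonneg (t : ℝ) : 0 ≤ convexRamp₁ t :=
  (convexRamp_of_le (min_le_right t 1)).2.1.ge.trans (convexRamp₁_monotone (min_le_left t 1))

lemma convexRamp₁_le_one (t : ℝ) : convexRamp₁ t ≤ 1 :=
  (convexRamp₁_monotone (le_max_left t 3)).trans_eq (convexRamp_of_ge (le_max_right t 3)).2.1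

lemma convexRamp_nonneg (t : ℝ) : 0 ≤ convexRamp t :=
  (convexRamp_of_le (min_le_right t 1)).1.ge.trans
    (monotone_of_hasDerivAt_nonneg hasDerivAt_convexRamp convexRamp₁_nonneg (min_le_left t 1))

lemma id_sub_convexRamp_monotone : Monotone fun t => t - convexRamp t :=
  monotone_of_hasDerivAt_nonneg (fun t => (hasDerivAt_id t).sub (hasDerivAt_convexRamp t))
    fun t => sub_nonneg.2 (convexRamp₁_le_one t)

lemma sub_two_le_convexRamp (t : ℝ) : t - 2 ≤ convexRamp t := by
  have h := id_sub_convexRamp_monotone (le_max_left t 3)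
  simp only [(convexRamp_of_ge (le_max_right t 3)).1] at h
  linarith

lemma convexRamp_le_max_sub_one (t : ℝ) : convexRamp t ≤ max (t - 1) 0 := by
  rcases le_total t 1 with ht | ht
  · exact (convexRamp_of_le ht).1.trans_le (le_max_right _ _)
  · have h := id_sub_convexRamp_monotone ht
    simp only [(convexRamp_of_le le_rfl).1] at h
    exact le_max_of_le_left (by linarith)

lemma convexRamp_le_max (t : ℝ) : convexRamp t ≤ max t 0 :=
  (convexRamp_le_max_sub_one t).trans (max_le_max_right 0 (by linarith))

lemma id_mul_convexRamp₁_sub_monotone : Monotone fun t => t * convexRamp₁ t - convexRamp t := by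
  refine monotone_of_hasDerivAt_nonneg (f' := fun t => t * convexRamp₂ t) (fun t => ?_) fun t => ?_
  · exact (((hasDerivAt_id t).mul (hasDerivAt_convexRamp₁ t)).sub
      (hasDerivAt_convexRamp t)).congr_deriv (by simp)
  · rcases le_total t 1 with ht | ht
    · simp [(convexRamp_of_le ht).2.2]
    · exact mul_nonneg (zero_le_one.trans ht) (convexRamp₂_nonneg t)

lemma convexRamp_le_id_mul (t : ℝ) : convexRamp t ≤ t * convexRamp₁ t := by
  have h := id_mul_convexRamp₁_sub_monotone (min_le_left t 1)
  simp only [convexRamp_of_le (min_le_right t 1), mul_zero, sub_self] at h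
  linarith

end Splines
/-- A locally elliptic operator: positive definite continuous leading coefficient and locally
bounded drift. Uniform ellipticity on bounded sets follows by compactness. -/
structure IsLocallyElliptic {d : ℕ} (a : Euc d → Matrix (Fin d) (Fin d) ℝ) (b : Euc d → Euc d) :
    Prop where
  posDef : ∀ x, (a x).PosDef
  continuous : Continuous a
  bounded : ∀ R > 0, ∃ C, ∀ x : Euc d, ‖x‖ ≤ R → ‖b x‖ ≤ C

section LocallyElliptic

variable {d : ℕ} {a : Euc d → Matrix (Fin d) (Fin d) ℝ} {b : Euc d → Euc d} {u : Euc d → ℝ}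

lemma abs_le_frob (m : Matrix (Fin d) (Fin d) ℝ) (i j : Fin d) : |m i j| ≤ frob m := by
  rw [frob, ← Real.sqrt_sq_eq_abs]
  refine Real.sqrt_le_sqrt ?_
  calc m i j ^ 2 ≤ ∑ j, m i j ^ 2 :=
        Finset.single_le_sum (f := fun j => m i j ^ 2) (fun j _ => sq_nonneg _) (Finset.mem_univ j)
    _ ≤ ∑ i, ∑ j, m i j ^ 2 := Finset.single_le_sum (f := fun i => ∑ j, m i j ^ 2)
        (fun i _ => Finset.sum_nonneg fun j _ => sq_nonneg _) (Finset.mem_univ i)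

lemma StandingB.isLocallyElliptic (h : StandingB a b) : IsLocallyElliptic a b where
  posDef := h.posdef
  continuous := by
    refine continuous_matrix fun i j => continuous_iff_continuousAt.2 fun x => ?_
    obtain ⟨C, -, hC⟩ := h.aLip (‖x‖ + 1) (by positivity)
    refine continuousAt_of_locally_lipschitz one_pos C fun y hy => ?_
    rw [dist_eq_norm] at hy
    have hy' : ‖y‖ ≤ ‖x‖ + 1 := by linarith [norm_sub_norm_le y x]
    rw [dist_eq_norm y x]
    exact (abs_le_frob (a y - a x) i j).trans (hC y x hy' (by linarith))
  bounded := h.bLocBdd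

lemma quadForm_smul (m : Matrix (Fin d) (Fin d) ℝ) (c : ℝ) (ξ : Euc d) :
    quadForm m (c • ξ) = c ^ 2 * quadForm m ξ := by
  simp only [quadForm, PiLp.smul_apply, smul_eq_mul, Finset.mul_sum]
  exact Finset.sum_congr rfl fun i _ => Finset.sum_congr rfl fun j _ => by ring

lemma quadForm_pos {m : Matrix (Fin d) (Fin d) ℝ} (hm : m.PosDef) {ξ : Euc d} (hξ : ξ ≠ 0) :
    0 < quadForm m ξ :=
  (quadForm_eq_dotProduct m ξ).symm ▸
    hm.dotProduct_mulVec_pos fun h => hξ (WithLp.ofLp_injective 2 h)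

lemma IsLocallyElliptic.exists_mul_sq_le_quadForm (hE : IsLocallyElliptic a b) (R : ℝ) :
    ∃ c > 0, ∀ x : Euc d, ‖x‖ ≤ R → ∀ ξ, c * ‖ξ‖ ^ 2 ≤ quadForm (a x) ξ := by
  have hcont : Continuous fun y : Euc d × Euc d => quadForm (a y.1) y.2 := by
    have hentry : ∀ i j, Continuous fun x => a x i j := fun i j => hE.continuous.matrix_elem i j
    have hentry' := fun i j => (hentry i j).comp (continuous_fst (X := Euc d) (Y := Euc d))
    simp only [Function.comp_def] at hentry'
    unfold quadForm
    fun_prop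
  obtain ⟨c, hc, hmin⟩ := ((isCompact_closedBall (0 : Euc d) R).prod
    (isCompact_sphere (0 : Euc d) 1)).exists_forall_le' hcont.continuousOn (a := 0)
    fun y hy => quadForm_pos (hE.posDef y.1) (ne_of_mem_sphere hy.2 one_ne_zero)
  refine ⟨c, hc, fun x hx ξ => ?_⟩
  rcases eq_or_ne ξ 0 with rfl | hξ
  · simp [quadForm]
  · have hunit : ‖ξ‖⁻¹ • ξ ∈ sphere (0 : Euc d) 1 := by simp [norm_smul, hξ]
    have h := hmin (x, ‖ξ‖⁻¹ • ξ) ⟨by simpa using hx, hunit⟩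
    rwa [quadForm_smul, inv_pow, inv_mul_eq_div, le_div_iff₀ (by positivity)] at h

lemma IsLocallyElliptic.exists_abs_coeff_le (hE : IsLocallyElliptic a b) (R : ℝ) :
    ∃ C ≥ 0, ∀ x : Euc d, ‖x‖ ≤ R → (∀ i j, |a x i j| ≤ C) ∧ ∀ i, |b x i| ≤ C := by
  have hcont : Continuous fun x => ∑ i, ∑ j, |a x i j| := by
    have hentry : ∀ i j, Continuous fun x => a x i j := fun i j => hE.continuous.matrix_elem i j
    fun_prop
  obtain ⟨A, hA⟩ := (isCompact_closedBall (0 : Euc d) R).bddAbove_image hcont.continuousOn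
  obtain ⟨B, hB⟩ := hE.bounded (max R 1) (by positivity)
  refine ⟨max (max A B) 0, le_max_right _ _, fun x hx => ⟨fun i j => ?_, fun i => ?_⟩⟩
  · refine le_trans ?_ ((hA ⟨x, by simpa using hx, rfl⟩).trans
      ((le_max_left A B).trans (le_max_left _ _)))
    calc |a x i j| ≤ ∑ j, |a x i j| :=
          Finset.single_le_sum (f := fun j => |a x i j|) (fun j _ => abs_nonneg _)
            (Finset.mem_univ j)
      _ ≤ ∑ i, ∑ j, |a x i j| := Finset.single_le_sum (f := fun i => ∑ j, |a x i j|)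
          (fun i _ => Finset.sum_nonneg fun j _ => abs_nonneg _) (Finset.mem_univ i)
  · have hcoord : |b x i| ≤ ‖b x‖ := by simpa using PiLp.norm_apply_le (b x) i
    exact (hcoord.trans (hB x (hx.trans (le_max_left _ _)))).trans
      ((le_max_right A B).trans (le_max_left _ _))

lemma IsLocallyElliptic.exists_abs_Lop_le (hE : IsLocallyElliptic a b) (hu : ContDiff ℝ 2 u)
    (R : ℝ) : ∃ C ≥ 0, ∀ x : Euc d, ‖x‖ ≤ R → |Lop a b u x| ≤ C := by
  obtain ⟨C, -, hC⟩ := hE.exists_abs_coeff_le R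
  have hcont : Continuous fun x => (∑ i, ∑ j, C * |pd2 u i j x|) + ∑ i, C * |pd u i x| := by
    have hpd2 := fun i j => continuous_pd2 hu i j
    have hpd := fun i => (contDiff_pd hu i).continuous
    fun_prop
  obtain ⟨D, hD⟩ := (isCompact_closedBall (0 : Euc d) R).bddAbove_image hcont.continuousOn
  refine ⟨max D 0, le_max_right _ _, fun x hx => ?_⟩
  obtain ⟨ha, hb⟩ := hC x hx
  refine le_trans ?_ ((hD ⟨x, by simpa using hx, rfl⟩).trans (le_max_left _ _))
  refine (abs_add_le _ _).trans (add_le_add ?_ ?_)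
  · refine (Finset.abs_sum_le_sum_abs _ _).trans (Finset.sum_le_sum fun i _ =>
      (Finset.abs_sum_le_sum_abs _ _).trans (Finset.sum_le_sum fun j _ => ?_))
    exact (abs_mul _ _).trans_le (mul_le_mul_of_nonneg_right (ha i j) (abs_nonneg _))
  · refine (Finset.abs_sum_le_sum_abs _ _).trans (Finset.sum_le_sum fun i _ => ?_)
    exact (abs_mul _ _).trans_le (mul_le_mul_of_nonneg_right (hb i) (abs_nonneg _))

end LocallyElliptic
/-- A `C²` function supported in the ball of radius `R` about `p`, which is a strict subsolution
of `𝓛 - K` in that ball, outside the ball of radius `r`. -/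
structure IsBarrier {d : ℕ} (a : Euc d → Matrix (Fin d) (Fin d) ℝ) (b : Euc d → Euc d)
    (p : Euc d) (r R K : ℝ) (w : Euc d → ℝ) : Prop where
  contDiff : ContDiff ℝ 2 w
  nonneg : ∀ x, 0 ≤ w x
  le_one : ∀ x, w x ≤ 1
  pos : ∀ x ∈ ball p R, 0 < w x
  eq_zero : ∀ x ∉ ball p R, w x = 0
  Lop_eq_zero : ∀ x ∉ ball p R, Lop a b w x = 0
  strict : ∀ R₁ < R, ∃ c > 0, ∀ x, r ≤ dist x p → dist x p ≤ R₁ → K * w x + c ≤ Lop a b w x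

/-- Hopf's exponential barrier, cubed so that it vanishes to second order on the sphere of radius
`R` about `p`. -/
def hopfBarrier {d : ℕ} (α R : ℝ) (p x : Euc d) : ℝ :=
  posCube (Real.exp (-α * dist x p ^ 2) - Real.exp (-α * R ^ 2))

section Barrier

variable {d : ℕ} {a : Euc d → Matrix (Fin d) (Fin d) ℝ} {b : Euc d → Euc d}
  {φ : Euc d → ℝ} {p x : Euc d} {α r R K : ℝ}

lemma dist_sq_eq_quadForm (p : Euc d) :
    (fun x : Euc d => dist x p ^ 2) = fun x => quadForm 1 (x - p) + 0 := by
  funext x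
  rw [dist_eq_norm, EuclideanSpace.real_norm_sq_eq]
  simp [quadForm, Matrix.one_apply, sq]

lemma contDiff_dist_sq (p : Euc d) : ContDiff ℝ 2 fun x : Euc d => dist x p ^ 2 :=
  dist_sq_eq_quadForm p ▸ contDiff_quadForm_sub 1 p 0

lemma gradForm_dist_sq (p x : Euc d) :
    gradForm a (fun y => dist y p ^ 2) (fun y => dist y p ^ 2) x = 4 * quadForm (a x) (x - p) := by
  rw [dist_sq_eq_quadForm, gradForm_quadForm_sub Matrix.isSymm_one]
  congr 2
  ext i
  simp [Matrix.one_apply]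

lemma contDiff_hopfBarrier (α R : ℝ) (p : Euc d) : ContDiff ℝ 2 (hopfBarrier α R p) :=
  contDiff_posCube.comp (((contDiff_const.mul (contDiff_dist_sq p)).exp).sub contDiff_const)

lemma Lop_hopfBarrier (α R : ℝ) (p x : Euc d) {e T : ℝ} (he : e = Real.exp (-α * dist x p ^ 2))
    (hT : T = max (e - Real.exp (-α * R ^ 2)) 0) :
    Lop a b (hopfBarrier α R p) x
      = 3 * α * (T ^ 2 * e) * (α * gradForm a (fun y => dist y p ^ 2) (fun y => dist y p ^ 2) x
          - Lop a b (fun y => dist y p ^ 2) x)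
        + 6 * T * (α * e) ^ 2 * gradForm a (fun y => dist y p ^ 2) (fun y => dist y p ^ 2) x := by
  have hexp : ∀ t, HasDerivAt (fun t => Real.exp (-α * t)) (-α * Real.exp (-α * t)) t := fun t =>
    ((hasDerivAt_id t).const_mul (-α)).exp.congr_deriv (by simp only [id]; ring)
  have hfirst : ∀ t, HasDerivAt (fun t => posCube (Real.exp (-α * t) - Real.exp (-α * R ^ 2)))
      (3 * max (Real.exp (-α * t) - Real.exp (-α * R ^ 2)) 0 ^ 2 * (-α * Real.exp (-α * t))) t :=
    fun t => (hasDerivAt_posCube _).comp t ((hexp t).sub_const _)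
  have hsecond : HasDerivAt
      (fun t => 3 * max (Real.exp (-α * t) - Real.exp (-α * R ^ 2)) 0 ^ 2
        * (-α * Real.exp (-α * t)))
      (6 * T * (-α * e) * (-α * e) + 3 * T ^ 2 * (-α * (-α * e))) (dist x p ^ 2) := by
    rw [hT, he]
    exact ((hasDerivAt_three_mul_max_sq _).comp (dist x p ^ 2)
      ((hexp _).sub_const (Real.exp (-α * R ^ 2)))).mul ((hexp _).const_mul (-α))
  have h := Lop_comp (a := a) (b := b) (contDiff_dist_sq p) (fun y => hfirst (dist y p ^ 2)) hsecond
  rw [← he, ← hT] at h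
  refine h.trans ?_
  ring

lemma hopfBarrier_nonneg (α R : ℝ) (p x : Euc d) : 0 ≤ hopfBarrier α R p x :=
  pow_nonneg (le_max_right _ _) 3

lemma hopfBarrier_le_one (hα : 0 ≤ α) : hopfBarrier α R p x ≤ 1 := by
  refine pow_le_one₀ (le_max_right _ _) (max_le ?_ zero_le_one)
  have hle : Real.exp (-α * dist x p ^ 2) ≤ 1 :=
    Real.exp_le_one_iff.2 (by nlinarith [sq_nonneg (dist x p)])
  linarith [Real.exp_pos (-α * R ^ 2)]

lemma exp_neg_mul_sq_lt {s t : ℝ} (hα : 0 < α) (hs : 0 ≤ s) (hst : s < t) :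
    Real.exp (-α * t ^ 2) < Real.exp (-α * s ^ 2) :=
  Real.exp_lt_exp.2
    (mul_lt_mul_of_neg_left (pow_lt_pow_left₀ hst hs two_ne_zero) (neg_neg_of_pos hα))

lemma exp_neg_mul_sq_le {s t : ℝ} (hα : 0 ≤ α) (hs : 0 ≤ s) (hst : s ≤ t) :
    Real.exp (-α * t ^ 2) ≤ Real.exp (-α * s ^ 2) :=
  Real.exp_le_exp.2
    (mul_le_mul_of_nonpos_left (pow_le_pow_left₀ hs hst 2) (neg_nonpos_of_nonneg hα))

lemma hopfBarrier_pos (hα : 0 < α) (hx : dist x p < R) : 0 < hopfBarrier α R p x :=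
  pow_pos (lt_max_of_lt_left (sub_pos.2 (exp_neg_mul_sq_lt hα dist_nonneg hx))) 3

lemma hopfBarrier_eq_zero (hα : 0 ≤ α) (hR : 0 ≤ R) (hx : R ≤ dist x p) :
    hopfBarrier α R p x = 0 := by
  rw [hopfBarrier, posCube, max_eq_right (sub_nonpos.2 (exp_neg_mul_sq_le hα hR hx))]
  norm_num

lemma Lop_hopfBarrier_eq_zero (hα : 0 ≤ α) (hR : 0 ≤ R) (hx : R ≤ dist x p) :
    Lop a b (hopfBarrier α R p) x = 0 := by
  rw [Lop_hopfBarrier α R p x rfl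
    (max_eq_right (sub_nonpos.2 (exp_neg_mul_sq_le hα hR hx))).symm]
  ring

/- Where the weighted gradient form beats `𝓛|·-p|²`, both the potential term `K w` and a definite
amount are absorbed by the first-order part of `𝓛w`. -/
lemma mul_hopfBarrier_add_le_Lop (ha : (a x).PosDef) (hα : 1 ≤ α) (hK : 0 ≤ K) {e T : ℝ}
    (he : e = Real.exp (-α * dist x p ^ 2)) (hT : T = max (e - Real.exp (-α * R ^ 2)) 0)
    (hdom : Lop a b (fun y => dist y p ^ 2) x + K + 1
      ≤ α * gradForm a (fun y => dist y p ^ 2) (fun y => dist y p ^ 2) x) :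
    K * hopfBarrier α R p x + T ^ 2 * e ≤ Lop a b (hopfBarrier α R p) x := by
  have hΓ := gradForm_self_nonneg ha fun y => dist y p ^ 2
  rw [Lop_hopfBarrier α R p x he hT, hopfBarrier, posCube, ← he, ← hT]
  generalize Lop a b (fun y => dist y p ^ 2) x = l at *
  generalize gradForm a (fun y => dist y p ^ 2) (fun y => dist y p ^ 2) x = g at *
  have he0 : 0 < e := he ▸ Real.exp_pos _
  have hT0 : 0 ≤ T := hT ▸ le_max_right _ _
  have hTe : T ≤ e := hT ▸ max_le (by linarith [Real.exp_pos (-α * R ^ 2)]) he0.le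
  calc K * T ^ 3 + T ^ 2 * e = T ^ 2 * (K * T + e) := by ring
    _ ≤ T ^ 2 * (K * e + e) := by gcongr
    _ = 1 * ((K + 1) * (T ^ 2 * e)) := by ring
    _ ≤ (3 * α) * ((α * g - l) * (T ^ 2 * e)) := by
      refine mul_le_mul (by linarith) ?_ (by positivity) (by positivity)
      exact mul_le_mul_of_nonneg_right (by linarith) (by positivity)
    _ = 3 * α * (T ^ 2 * e) * (α * g - l) := by ring
    _ ≤ 3 * α * (T ^ 2 * e) * (α * g - l) + 6 * T * (α * e) ^ 2 * g :=
      le_add_of_nonneg_right (by positivity)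

lemma norm_le_of_dist_le (h : dist x p ≤ R) : ‖x‖ ≤ ‖p‖ + R :=
  (norm_le_norm_add_norm_sub p x).trans (by rw [← dist_eq_norm, dist_comm]; linarith)

lemma IsLocallyElliptic.exists_hopf_exponent (hE : IsLocallyElliptic a b) (p : Euc d)
    (hr : 0 < r) (R K : ℝ) :
    ∃ α ≥ 1, ∀ x, r ≤ dist x p → dist x p ≤ R → Lop a b (fun y => dist y p ^ 2) x + K + 1
      ≤ α * gradForm a (fun y => dist y p ^ 2) (fun y => dist y p ^ 2) x := by
  obtain ⟨c, hc, hquad⟩ := hE.exists_mul_sq_le_quadForm (‖p‖ + R)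
  obtain ⟨C, -, hC⟩ := hE.exists_abs_Lop_le (contDiff_dist_sq p) (‖p‖ + R)
  set m := 4 * (c * r ^ 2) with hm
  have hm0 : 0 < m := by positivity
  refine ⟨max 1 ((C + K + 1) / m), le_max_left _ _, fun x hrx hxR => ?_⟩
  have hxn := norm_le_of_dist_le hxR
  have hgrad : m ≤ gradForm a (fun y => dist y p ^ 2) (fun y => dist y p ^ 2) x := by
    have hx := hquad x hxn (x - p)
    rw [← dist_eq_norm] at hx
    rw [gradForm_dist_sq, hm]
    linarith [mul_le_mul_of_nonneg_left (pow_le_pow_left₀ hr.le hrx 2) hc.le]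
  calc Lop a b (fun y => dist y p ^ 2) x + K + 1 ≤ C + K + 1 := by
        linarith [le_of_abs_le (hC x hxn)]
    _ ≤ max 1 ((C + K + 1) / m) * m := (div_le_iff₀ hm0).1 (le_max_right _ _)
    _ ≤ _ := mul_le_mul_of_nonneg_left hgrad (by positivity)

lemma IsLocallyElliptic.exists_isBarrier (hE : IsLocallyElliptic a b) (p : Euc d) (hr : 0 < r)
    (hR : 0 ≤ R) (hK : 0 ≤ K) : ∃ w : Euc d → ℝ, IsBarrier a b p r R K w := by
  obtain ⟨α, hα, hdom⟩ := hE.exists_hopf_exponent p hr R K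
  have hα0 : 0 < α := by linarith
  refine ⟨hopfBarrier α R p, contDiff_hopfBarrier α R p, hopfBarrier_nonneg α R p,
    fun x => hopfBarrier_le_one hα0.le, fun x hx => hopfBarrier_pos hα0 hx,
    fun x hx => hopfBarrier_eq_zero hα0.le hR (not_lt.1 hx),
    fun x hx => Lop_hopfBarrier_eq_zero hα0.le hR (not_lt.1 hx), fun R₁ hR₁ => ?_⟩
  rcases lt_or_ge R₁ 0 with hneg | hR₁0
  · exact ⟨1, one_pos, fun x _ hx => absurd (dist_nonneg.trans hx) hneg.not_ge⟩
  have hgap := sub_pos.2 (exp_neg_mul_sq_lt hα0 hR₁0 hR₁)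
  refine ⟨(Real.exp (-α * R₁ ^ 2) - Real.exp (-α * R ^ 2)) ^ 2 * Real.exp (-α * R₁ ^ 2),
    by positivity, fun x hrx hxR₁ => ?_⟩
  have hexp := exp_neg_mul_sq_le hα0.le dist_nonneg hxR₁
  refine le_trans ?_ (mul_hopfBarrier_add_le_Lop (R := R) (hE.posDef x) hα hK rfl rfl
    (hdom x hrx (hxR₁.trans hR₁.le)))
  gcongr
  exact (sub_le_sub_right hexp _).trans (le_max_left _ _)

lemma IsBarrier.mul_le {w : Euc d → ℝ} (hw : IsBarrier a b p r R K w) (ha : ∀ x, (a x).PosDef)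
    (hφ : IsSupersolutionOn a b (fun _ => K) (closedBall p R) φ) {m : ℝ} (hm : 0 < m)
    (hlow : ∀ y ∈ closedBall p r, m ≤ φ y) (y : Euc d) : m * w y ≤ φ y := by
  rw [← one_mul (φ y)]
  refine hφ.le_mul_of_subsolution ha (isCompact_closedBall p R) (contDiff_const.mul hw.contDiff)
    (fun y hy => ?_) zero_le_one (fun y _ hlt => ?_) y
  · rw [hw.eq_zero y fun h => hy (ball_subset_closedBall h), mul_zero]
  · rw [one_mul] at hlt
    have hyR : dist y p < R := by
      by_contra hn
      rw [hw.eq_zero y hn, mul_zero] at hlt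
      exact hlt.not_gt (hφ.pos y)
    have hyr : r ≤ dist y p := by
      by_contra! hn
      exact hlt.not_ge ((mul_le_of_le_one_right hm.le (hw.le_one y)).trans (hlow y hn.le))
    obtain ⟨c, hc, hstrict⟩ := hw.strict _ hyR
    rw [Lop_const_mul hw.contDiff]
    nlinarith [hstrict y hyr le_rfl]

end Barrier

section Equilibrium

open Matrix

variable {ι : Type*} [Fintype ι] {κ : Matrix ι ι ℝ} {c : ι → ℝ}

/-- The energy of a distribution of masses `c` for the interaction kernel `κ`. Minimising it over
nonnegative masses produces an equilibrium distribution. -/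
def massEnergy (κ : Matrix ι ι ℝ) (c : ι → ℝ) : ℝ := c ⬝ᵥ κ *ᵥ c - 2 * ∑ i, c i

lemma continuous_massEnergy (κ : Matrix ι ι ℝ) : Continuous (massEnergy κ) := by
  unfold massEnergy
  fun_prop

lemma massEnergy_add_single [DecidableEq ι] (hκ : κ.IsSymm) (c : ι → ℝ) (i : ι) (s : ℝ) :
    massEnergy κ (c + Pi.single i s)
      = massEnergy κ c + (κ i i * s ^ 2 + 2 * s * ((κ *ᵥ c) i - 1)) := by
  have hcross : c ⬝ᵥ κ *ᵥ Pi.single i s = s * (κ *ᵥ c) i := by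
    rw [dotProduct_mulVec, ← mulVec_transpose, hκ.eq, dotProduct_single, mul_comm]
  have hself : (κ *ᵥ Pi.single i s) i = κ i i * s := by simp
  have hsum : ∑ j, Pi.single i s j = s := by simp
  simp only [massEnergy, mulVec_add, dotProduct_add, add_dotProduct, single_dotProduct, hcross,
    hself, Pi.add_apply, Finset.sum_add_distrib, hsum]
  ring

lemma nonneg_of_forall_small_mul_sq_add_nonneg {k t δ : ℝ} (hδ : 0 < δ)
    (h : ∀ s, 0 < s → s ≤ δ → 0 ≤ k * s ^ 2 + 2 * s * t) : 0 ≤ t := by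
  have hlim : Tendsto (fun s => k * s / 2 + t) (𝓝[>] 0) (𝓝 t) := by
    have hcont : ContinuousAt (fun s : ℝ => k * s / 2 + t) 0 := by fun_prop
    simpa using hcont.tendsto.mono_left (nhdsWithin_le_nhds (s := Ioi 0))
  refine ge_of_tendsto hlim (mem_of_superset (Ioc_mem_nhdsGT hδ) fun s ⟨hs, hsδ⟩ => ?_)
  refine nonneg_of_mul_nonneg_right ((h s hs hsδ).trans_eq ?_) (mul_pos two_pos hs)
  ring

lemma exists_nonneg_forall_massEnergy_perturbation_nonneg (hκ : κ.IsSymm) (hdiag : ∀ i, 0 < κ i i) :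
    ∃ c : ι → ℝ, (∀ i, 0 ≤ c i) ∧ (∀ i, c i ≤ 2 / κ i i) ∧ ∀ i s, 0 ≤ c i + s →
      c i + s ≤ 2 / κ i i → 0 ≤ κ i i * s ^ 2 + 2 * s * ((κ *ᵥ c) i - 1) := by
  classical
  obtain ⟨c, hc, hmin⟩ :=
    (isCompact_Icc (a := (0 : ι → ℝ)) (b := fun i => 2 / κ i i)).exists_isMinOn
    ⟨0, le_rfl, fun i => (div_pos two_pos (hdiag i)).le⟩ (continuous_massEnergy κ).continuousOn
  refine ⟨c, hc.1, hc.2, fun i s hlow hupp => ?_⟩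
  have hmem : c + Pi.single i s ∈ Icc (0 : ι → ℝ) fun i => 2 / κ i i := by
    refine ⟨fun k => ?_, fun k => ?_⟩ <;> rcases eq_or_ne k i with rfl | hk
    · simpa using hlow
    · simpa [hk] using hc.1 k
    · simpa using hupp
    · simpa [hk] using hc.2 k
  have hle : massEnergy κ c ≤ massEnergy κ (c + Pi.single i s) := hmin hmem
  rw [massEnergy_add_single hκ] at hle
  linarith

lemma exists_equilibrium (hκ : κ.IsSymm) (hnonneg : ∀ i j, 0 ≤ κ i j) (hdiag : ∀ i, 0 < κ i i) :
    ∃ c : ι → ℝ, (∀ i, 0 ≤ c i) ∧ (∀ i, 1 ≤ (κ *ᵥ c) i) ∧ ∀ i, 0 < c i → (κ *ᵥ c) i ≤ 1 := by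
  obtain ⟨c, hc, hbox, hpert⟩ := exists_nonneg_forall_massEnergy_perturbation_nonneg hκ hdiag
  refine ⟨c, hc, fun i => ?_, fun i hi => ?_⟩
  · by_contra! hlt
    have hself : κ i i * c i ≤ (κ *ᵥ c) i :=
      Finset.single_le_sum (f := fun j => κ i j * c j)
        (fun j _ => mul_nonneg (hnonneg i j) (hc j)) (Finset.mem_univ i)
    have hgap : 0 < 2 / κ i i - c i := by
      rw [sub_pos, lt_div_iff₀ (hdiag i), mul_comm]
      linarith
    have hge := nonneg_of_forall_small_mul_sq_add_nonneg hgap fun s hs hsgap =>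
      hpert i s (add_nonneg (hc i) hs.le) (by linarith)
    linarith
  · refine sub_nonneg.1
      (nonneg_of_forall_small_mul_sq_add_nonneg (k := κ i i) hi fun s hs hsc => ?_)
    refine (hpert i (-s) (by linarith) (by linarith [hbox i])).trans_eq ?_
    ring

end Equilibrium

section Profiles

variable {α β D ε K S T t l g : ℝ}

lemma exists_rpow_interpolation {p q : ℝ} (hp : p ≤ 0) (hpq : q < p) {e : ℝ} (he : 0 < e) :
    ∃ C ≥ 0, ∀ t > 0, t ^ p ≤ e * t ^ q + C := by
  set t₀ : ℝ := e ^ (1 / (p - q)) with ht₀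
  have ht₀pos : 0 < t₀ := Real.rpow_pos_of_pos he _
  refine ⟨t₀ ^ p, (Real.rpow_pos_of_pos ht₀pos _).le, fun t ht => ?_⟩
  rcases le_total t t₀ with h | h
  · have hle : t ^ (p - q) ≤ e :=
      calc t ^ (p - q) ≤ t₀ ^ (p - q) := Real.rpow_le_rpow ht.le h (by linarith)
        _ = e := by
          rw [ht₀, ← Real.rpow_mul he.le, one_div_mul_cancel (by linarith), Real.rpow_one]
    calc t ^ p = t ^ (p - q) * t ^ q := by rw [← Real.rpow_add ht, sub_add_cancel]
      _ ≤ e * t ^ q := by gcongr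
      _ ≤ e * t ^ q + t₀ ^ p := le_add_of_nonneg_right (by positivity)
  · exact (Real.rpow_le_rpow_of_nonpos ht₀pos h hp).trans (le_add_of_nonneg_left (by positivity))

lemma rpow_neg_eq_mul (s : ℝ) (ht : 0 < t) : t ^ (-s) = t ^ (-s - 1) * t := by
  rw [← Real.rpow_add_one ht.ne', sub_add_cancel]

/- Here `l` and `g` stand for `𝓛q` and the gradient form of `q`, where `q = Q + T` is a regularised
quadratic form in dimension `D` with `𝓛Q ≈ 2D` and `|∇Q|² ≈ 4Q`; the left-hand side is then
`𝓛(q ^ (1 - α))`. The choice `4α > 2D + 1` makes the power a subsolution. -/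
lemma mul_rpow_le_Lop_profile (hα : 1 < α) (hαD : 4 * α = 2 * D + 5 / 2) (hε0 : 0 ≤ ε)
    (hε : ε * (1 + α) ≤ 1 / 2) (ht : 0 < t) (hT : 4 * α * T ≤ t) (hl : l ≤ 2 * D + ε)
    (hg : (4 - ε) * (t - T) ≤ g) :
    (α - 1) * t ^ (-α) ≤ (1 - α) * t ^ (-α) * l + (1 - α) * (-α * t ^ (-α - 1)) * g := by
  have hgrad : t + l * t ≤ α * g := by
    have hε4 : ε ≤ 1 / 4 := by nlinarith
    have hdiff : l * t ≤ (2 * D + ε) * t := by gcongr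
    have hpole : (1 - ε / 4) * (4 * α * T) ≤ (1 - ε / 4) * t :=
      mul_le_mul_of_nonneg_left hT (by linarith)
    have herr : ε * (1 + α) * t ≤ 1 / 2 * t := by gcongr
    have hexp : 4 * α * t = 2 * D * t + 5 / 2 * t := by rw [hαD]; ring
    calc t + l * t ≤ α * ((4 - ε) * (t - T)) := by
          linarith [mul_nonneg hε0 ht.le]
      _ ≤ α * g := by gcongr
  have hp : 0 < t ^ (-α - 1) := Real.rpow_pos_of_pos ht _
  rw [rpow_neg_eq_mul α ht]
  linear_combination mul_le_mul_of_nonneg_left hgrad (mul_nonneg (sub_pos.2 hα).le hp.le)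

/-- The integral of `s ^ (-β)` from `t` to `S`, in closed form for `β ≠ 1`. -/
def rpowIntegral (β S t : ℝ) : ℝ := (S ^ (1 - β) - t ^ (1 - β)) / (1 - β)

@[simp]
lemma rpowIntegral_self (β S : ℝ) : rpowIntegral β S S = 0 := by
  simp [rpowIntegral]

lemma contDiffAt_rpowIntegral (β S : ℝ) (ht : t ≠ 0) : ContDiffAt ℝ 2 (rpowIntegral β S) t :=
  (contDiffAt_const.sub (contDiffAt_id.rpow_const_of_ne ht)).div_const _

lemma hasDerivAt_rpowIntegral (hβ : β ≠ 1) (S : ℝ) (ht : 0 < t) :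
    HasDerivAt (rpowIntegral β S) (-t ^ (-β)) t := by
  have hβ' : 1 - β ≠ 0 := sub_ne_zero.2 hβ.symm
  refine (((Real.hasDerivAt_rpow_const (p := 1 - β) (Or.inl ht.ne')).const_sub
    (S ^ (1 - β))).div_const (1 - β)).congr_deriv ?_
  rw [show 1 - β - 1 = -β by ring]
  field_simp

lemma hasDerivAt_neg_rpow_neg (β : ℝ) (ht : 0 < t) :
    HasDerivAt (fun t : ℝ => -t ^ (-β)) (β * t ^ (-β - 1)) t :=
  (Real.hasDerivAt_rpow_const (p := -β) (Or.inl ht.ne')).neg.congr_deriv (by ring)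

lemma rpowIntegral_strictAntiOn (hβ : β ≠ 1) (S : ℝ) :
    StrictAntiOn (rpowIntegral β S) (Ioi 0) := by
  refine strictAntiOn_of_deriv_neg (convex_Ioi 0)
    (fun t ht => (hasDerivAt_rpowIntegral hβ S ht).continuousAt.continuousWithinAt) fun t ht => ?_
  rw [interior_Ioi] at ht
  rw [(hasDerivAt_rpowIntegral hβ S ht).deriv]
  exact neg_lt_zero.2 (Real.rpow_pos_of_pos ht _)

lemma rpowIntegral_nonneg (hβ : β ≠ 1) (ht : 0 < t) (htS : t ≤ S) : 0 ≤ rpowIntegral β S t :=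
  (rpowIntegral_self β S).ge.trans
    ((rpowIntegral_strictAntiOn hβ S).antitoneOn ht (ht.trans_le htS) htS)

lemma rpowIntegral_nonpos (hβ : β ≠ 1) (hS : 0 < S) (hSt : S ≤ t) : rpowIntegral β S t ≤ 0 :=
  ((rpowIntegral_strictAntiOn hβ S).antitoneOn hS (hS.trans_le hSt) hSt).trans_eq
    (rpowIntegral_self β S)

lemma rpowIntegral_le_mul_rpow (hβ0 : 0 ≤ β) (hβ : β ≠ 1) (ht : 0 < t) (htS : t ≤ S) :
    rpowIntegral β S t ≤ S * t ^ (-β) := by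
  have hp : 0 < t ^ (-β) := Real.rpow_pos_of_pos ht _
  rcases htS.eq_or_lt with rfl | htS
  · rw [rpowIntegral_self]
    positivity
  obtain ⟨ξ, hξ, hslope⟩ := exists_hasDerivAt_eq_slope (rpowIntegral β S) (fun t => -t ^ (-β)) htS
    (fun s hs => (hasDerivAt_rpowIntegral hβ S
      (ht.trans_le hs.1)).continuousAt.continuousWithinAt)
    (fun s hs => hasDerivAt_rpowIntegral hβ S (ht.trans hs.1))
  rw [rpowIntegral_self, eq_div_iff (by linarith)] at hslope
  calc rpowIntegral β S t = ξ ^ (-β) * (S - t) := by linarith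
    _ ≤ t ^ (-β) * S := by
      have hle : ξ ^ (-β) ≤ t ^ (-β) :=
        Real.rpow_le_rpow_of_nonpos ht hξ.1.le (neg_nonpos.2 hβ0)
      exact mul_le_mul hle (by linarith) (by linarith) hp.le
    _ = S * t ^ (-β) := mul_comm _ _

/-- The factor for which `superProfile` is affine in `rpowIntegral` up to `S / 2`. -/
def superScale (β S : ℝ) : ℝ := 3 / rpowIntegral β S (S / 2)

/-- A profile vanishing beyond `S`, which has the singularity of `rpowIntegral` at `0`. -/
def superProfile (β S t : ℝ) : ℝ := convexRamp (superScale β S * rpowIntegral β S t)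

/-- The derivative of `superProfile` on `(0, ∞)`. -/
def superProfile₁ (β S t : ℝ) : ℝ :=
  convexRamp₁ (superScale β S * rpowIntegral β S t) * (superScale β S * -t ^ (-β))

/-- The second derivative of `superProfile` on `(0, ∞)`. -/
def superProfile₂ (β S t : ℝ) : ℝ :=
  convexRamp₂ (superScale β S * rpowIntegral β S t) * (superScale β S * -t ^ (-β))
      * (superScale β S * -t ^ (-β))
    + convexRamp₁ (superScale β S * rpowIntegral β S t) * (superScale β S * (β * t ^ (-β - 1)))

lemma rpowIntegral_half_pos (hβ : β ≠ 1) (hS : 0 < S) : 0 < rpowIntegral β S (S / 2) :=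
  (rpowIntegral_self β S).ge.trans_lt
    (rpowIntegral_strictAntiOn hβ S (half_pos hS) hS (half_lt_self hS))

lemma superScale_pos (hβ : β ≠ 1) (hS : 0 < S) : 0 < superScale β S :=
  div_pos three_pos (rpowIntegral_half_pos hβ hS)

lemma three_le_superScale_mul (hβ : β ≠ 1) (hS : 0 < S) (ht : 0 < t) (htS : t ≤ S / 2) :
    3 ≤ superScale β S * rpowIntegral β S t :=
  calc (3 : ℝ) = superScale β S * rpowIntegral β S (S / 2) :=
        (div_mul_cancel₀ _ (rpowIntegral_half_pos hβ hS).ne').symm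
    _ ≤ _ := mul_le_mul_of_nonneg_left
      ((rpowIntegral_strictAntiOn hβ S).antitoneOn ht (half_pos hS) htS) (superScale_pos hβ hS).le

lemma superProfile_nonneg (β S t : ℝ) : 0 ≤ superProfile β S t := convexRamp_nonneg _

lemma contDiffAt_superProfile (β S : ℝ) (ht : t ≠ 0) : ContDiffAt ℝ 2 (superProfile β S) t :=
  contDiff_convexRamp.contDiffAt.comp t (contDiffAt_const.mul (contDiffAt_rpowIntegral β S ht))

lemma hasDerivAt_superProfile (hβ : β ≠ 1) (S : ℝ) (ht : 0 < t) :
    HasDerivAt (superProfile β S) (superProfile₁ β S t) t :=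
  (hasDerivAt_convexRamp _).comp t ((hasDerivAt_rpowIntegral hβ S ht).const_mul _)

lemma hasDerivAt_superProfile₁ (hβ : β ≠ 1) (S : ℝ) (ht : 0 < t) :
    HasDerivAt (superProfile₁ β S) (superProfile₂ β S t) t :=
  ((hasDerivAt_convexRamp₁ _).comp t ((hasDerivAt_rpowIntegral hβ S ht).const_mul _)).mul
    ((hasDerivAt_neg_rpow_neg β ht).const_mul _)

lemma superProfile_of_ge (hβ : β ≠ 1) (hS : 0 < S) (hSt : S ≤ t) :
    superProfile β S t = 0 ∧ superProfile₁ β S t = 0 ∧ superProfile₂ β S t = 0 := by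
  have hle : superScale β S * rpowIntegral β S t ≤ 0 :=
    mul_nonpos_of_nonneg_of_nonpos (superScale_pos hβ hS).le (rpowIntegral_nonpos hβ hS hSt)
  obtain ⟨h₀, h₁, h₂⟩ := convexRamp_of_le (hle.trans zero_le_one)
  simp [superProfile, superProfile₁, superProfile₂, h₀, h₁, h₂]

lemma mul_superProfile_le (hβ0 : 0 ≤ β) (hβ : β ≠ 1) (hS : 0 < S) (hK : 0 ≤ K)
    (hKS : K * S ≤ 1 / 4) (ht : 0 < t) :
    K * superProfile β S t ≤ superScale β S / 4 * t ^ (-β) := by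
  have hk := superScale_pos hβ hS
  have hp : 0 < t ^ (-β) := Real.rpow_pos_of_pos ht _
  rcases le_total S t with hSt | htS
  · rw [(superProfile_of_ge hβ hS hSt).1, mul_zero]
    positivity
  have hramp : superProfile β S t ≤ superScale β S * rpowIntegral β S t :=
    (convexRamp_le_max _).trans_eq
      (max_eq_left (mul_nonneg hk.le (rpowIntegral_nonneg hβ ht htS)))
  calc K * superProfile β S t ≤ K * (superScale β S * (S * t ^ (-β))) := by
        gcongr
        exact hramp.trans (by gcongr; exact rpowIntegral_le_mul_rpow hβ0 hβ ht htS)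
    _ = K * S * (superScale β S * t ^ (-β)) := by ring
    _ ≤ 1 / 4 * (superScale β S * t ^ (-β)) := by gcongr
    _ = superScale β S / 4 * t ^ (-β) := by ring

/- The left-hand side is `𝓛(rpowIntegral β S ∘ q)`, with `l`, `g` as in `mul_rpow_le_Lop_profile`;
here the choice `4β < 2D` makes it a supersolution. -/
lemma Lop_rpowIntegral_le (hβ : 0 ≤ β) (hβD : 4 * β = 2 * D - 1) (hε : ε * (1 + β) ≤ 1 / 2)
    (ht : 0 < t) (hl : 2 * D - ε ≤ l) (hg : g ≤ (4 + ε) * t) :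
    -t ^ (-β) * l + β * t ^ (-β - 1) * g ≤ -(1 / 2) * t ^ (-β) := by
  have hp : 0 < t ^ (-β - 1) := Real.rpow_pos_of_pos ht _
  calc -t ^ (-β) * l + β * t ^ (-β - 1) * g
      ≤ -t ^ (-β) * (2 * D - ε) + β * t ^ (-β - 1) * ((4 + ε) * t) := by
        refine add_le_add (mul_le_mul_of_nonpos_left hl ?_) (by gcongr)
        exact neg_nonpos.2 (Real.rpow_pos_of_pos ht _).le
    _ = (ε * (1 + β) - 1) * t ^ (-β) := by
        rw [rpow_neg_eq_mul β ht]
        linear_combination (t ^ (-β - 1) * t) * hβD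
    _ ≤ -(1 / 2) * t ^ (-β) :=
        mul_le_mul_of_nonneg_right (by linarith) (Real.rpow_pos_of_pos ht _).le

lemma Lop_superProfile_le (hβ0 : 0 ≤ β) (hβ : β ≠ 1) (hβD : 4 * β = 2 * D - 1) (hε0 : 0 ≤ ε)
    (hε : ε * (1 + β) ≤ 1 / 2) (hS : 0 < S) (ht : 0 < t) (hl : 2 * D - ε ≤ l) (hg0 : 0 ≤ g)
    (hg : g ≤ (4 + ε) * t) :
    superProfile₁ β S t * l + superProfile₂ β S t * g ≤ -(superScale β S / 2) * t ^ (-β)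
      + (superScale β S ^ 2 * ((S / 2) ^ (-β)) ^ 2 * ((4 + ε) * S)
        + superScale β S / 2 * (S / 2) ^ (-β)) := by
  have hS2 : 0 < S / 2 := half_pos hS
  have hk := superScale_pos hβ hS
  have hradial := Lop_rpowIntegral_le hβ0 hβD hε ht hl hg
  have hp : 0 < t ^ (-β) := Real.rpow_pos_of_pos ht _
  rcases le_total t (S / 2) with hnear | hfar
  · obtain ⟨-, h₁, h₂⟩ := convexRamp_of_ge (three_le_superScale_mul hβ hS ht hnear)
    rw [superProfile₁, superProfile₂, h₁, h₂]
    refine le_trans ?_ (le_add_of_nonneg_right (by positivity))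
    linear_combination superScale β S * hradial
  have hpS : t ^ (-β) ≤ (S / 2) ^ (-β) :=
    Real.rpow_le_rpow_of_nonpos hS2 hfar (neg_nonpos.2 hβ0)
  rcases le_total S t with hSt | htS
  · obtain ⟨-, h₁, h₂⟩ := superProfile_of_ge hβ hS hSt
    have hquad : 0 ≤ superScale β S ^ 2 * ((S / 2) ^ (-β)) ^ 2 * ((4 + ε) * S) := by positivity
    rw [h₁, h₂]
    linarith [mul_le_mul_of_nonneg_left hpS (half_pos hk).le]
  set ramp := superScale β S * rpowIntegral β S t
  have hfirst : convexRamp₁ ramp * superScale β S * (-t ^ (-β) * l + β * t ^ (-β - 1) * g) ≤ 0 :=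
    mul_nonpos_of_nonneg_of_nonpos (mul_nonneg (convexRamp₁_nonneg _) hk.le) (by linarith)
  have hsecond : convexRamp₂ ramp * (superScale β S ^ 2 * (t ^ (-β)) ^ 2 * g)
      ≤ 1 * (superScale β S ^ 2 * ((S / 2) ^ (-β)) ^ 2 * ((4 + ε) * S)) := by
    gcongr
    · exact convexRamp₂_le_one _
    · exact hg.trans (by gcongr)
  rw [superProfile₁, superProfile₂]
  linear_combination hfirst + hsecond + superScale β S / 2 * hpS

lemma exists_Lop_superProfile_add_mul_le (hβ0 : 0 ≤ β) (hβ : β ≠ 1) (hβD : 4 * β = 2 * D - 1)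
    (hε0 : 0 ≤ ε) (hε : ε * (1 + β) ≤ 1 / 2) (hK : 0 ≤ K) (hS : 0 < S) (hKS : K * S ≤ 1 / 4) :
    ∃ c > 0, ∃ C ≥ 0, ∀ t > 0, ∀ l g, 2 * D - ε ≤ l → 0 ≤ g → g ≤ (4 + ε) * t →
      superProfile₁ β S t * l + superProfile₂ β S t * g + K * superProfile β S t
        ≤ -c * t ^ (-β) + C := by
  have hk := superScale_pos hβ hS
  refine ⟨superScale β S / 4, by positivity, superScale β S ^ 2 * ((S / 2) ^ (-β)) ^ 2
    * ((4 + ε) * S) + superScale β S / 2 * (S / 2) ^ (-β), by positivity,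
    fun t ht l g hl hg0 hg => ?_⟩
  linear_combination Lop_superProfile_le hβ0 hβ hβD hε0 hε hS ht hl hg0 hg
    + mul_superProfile_le hβ0 hβ hS hK hKS ht

end Profiles

section QuadForm

variable {d : ℕ} {a : Euc d → Matrix (Fin d) (Fin d) ℝ} {b : Euc d → Euc d} {z : Euc d}

lemma abs_quadForm_le (m : Matrix (Fin d) (Fin d) ℝ) (ξ : Euc d) :
    |quadForm m ξ| ≤ (∑ i, ∑ j, |m i j|) * ‖ξ‖ ^ 2 := by
  simp only [quadForm, Finset.sum_mul]
  refine (Finset.abs_sum_le_sum_abs _ _).trans (Finset.sum_le_sum fun i _ =>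
    (Finset.abs_sum_le_sum_abs _ _).trans (Finset.sum_le_sum fun j _ => ?_))
  have hcoord : ∀ i, |ξ i| ≤ ‖ξ‖ := fun i => by simpa using PiLp.norm_apply_le ξ i
  rw [abs_mul, abs_mul, mul_assoc, sq]
  gcongr
  exacts [hcoord i, hcoord j]

lemma quadForm_neg (m : Matrix (Fin d) (Fin d) ℝ) (ξ : Euc d) :
    quadForm m (-ξ) = quadForm m ξ := by
  simp [quadForm]

lemma quadForm_sub_matrix (m n : Matrix (Fin d) (Fin d) ℝ) (ξ : Euc d) :
    quadForm (m - n) ξ = quadForm m ξ - quadForm n ξ := by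
  simp only [quadForm, ← Finset.sum_sub_distrib, Matrix.sub_apply, sub_mul]

lemma quadForm_add_le {m : Matrix (Fin d) (Fin d) ℝ} (hm : m.PosSemidef) (ξ η : Euc d) :
    quadForm m (ξ + η) ≤ 2 * quadForm m ξ + 2 * quadForm m η := by
  have parallelogram :
      quadForm m (ξ + η) + quadForm m (ξ - η) = 2 * quadForm m ξ + 2 * quadForm m η := by
    simp only [quadForm, Finset.mul_sum, ← Finset.sum_add_distrib, PiLp.add_apply, PiLp.sub_apply]
    exact Finset.sum_congr rfl fun i _ => Finset.sum_congr rfl fun j _ => by ring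
  linarith [quadForm_nonneg hm (ξ - η)]

lemma quadForm_mulVec_inv {m : Matrix (Fin d) (Fin d) ℝ} (hm : IsUnit m) (ξ : Euc d) :
    quadForm m (WithLp.toLp 2 (m⁻¹.mulVec ξ)) = quadForm m⁻¹ ξ := by
  rw [quadForm_eq_dotProduct, quadForm_eq_dotProduct, star_trivial, star_trivial,
    Matrix.mulVec_mulVec, Matrix.mul_nonsing_inv _ ((Matrix.isUnit_iff_isUnit_det m).1 hm),
    Matrix.one_mulVec, dotProduct_comm]

lemma exists_mul_sq_le_quadForm_of_posDef {m : Matrix (Fin d) (Fin d) ℝ} (hm : m.PosDef) :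
    ∃ c > 0, ∀ ξ : Euc d, c * ‖ξ‖ ^ 2 ≤ quadForm m ξ := by
  have hE : IsLocallyElliptic (fun _ : Euc d => m) fun _ => 0 :=
    ⟨fun _ => hm, continuous_const, fun _ _ => ⟨0, by simp⟩⟩
  obtain ⟨c, hc, hle⟩ := hE.exists_mul_sq_le_quadForm 0
  exact ⟨c, hc, hle 0 (by simp)⟩

lemma IsLocallyElliptic.eventually_abs_quadForm_sub_le (hE : IsLocallyElliptic a b) (z : Euc d)
    {ε : ℝ} (hε : 0 < ε) :
    ∀ᶠ x in 𝓝 z, ∀ ξ, |quadForm (a x) ξ - quadForm (a z) ξ| ≤ ε * quadForm (a z) ξ := by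
  obtain ⟨c, hc, hlow⟩ := exists_mul_sq_le_quadForm_of_posDef (hE.posDef z)
  have hlim : Tendsto (fun x => ∑ i, ∑ j, |(a x - a z) i j|) (𝓝 z) (𝓝 0) := by
    have hentry : ∀ i j, Continuous fun x => a x i j := fun i j => hE.continuous.matrix_elem i j
    have hcont : Continuous fun x => ∑ i, ∑ j, |(a x - a z) i j| := by
      simp only [Matrix.sub_apply]
      fun_prop
    simpa using hcont.tendsto z
  filter_upwards [hlim.eventually_le_const (mul_pos hε hc)] with x hx ξ
  calc |quadForm (a x) ξ - quadForm (a z) ξ| ≤ (∑ i, ∑ j, |(a x - a z) i j|) * ‖ξ‖ ^ 2 := by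
        rw [← quadForm_sub_matrix]
        exact abs_quadForm_le _ ξ
    _ ≤ ε * c * ‖ξ‖ ^ 2 := by gcongr
    _ = ε * (c * ‖ξ‖ ^ 2) := mul_assoc _ _ _
    _ ≤ ε * quadForm (a z) ξ := by gcongr; exact hlow ξ

lemma IsLocallyElliptic.eventually_abs_sum_mul_inv_sub_le (hE : IsLocallyElliptic a b) (z : Euc d)
    {ε : ℝ} (hε : 0 < ε) :
    ∀ᶠ x in 𝓝 z, |(∑ i, ∑ j, a x i j * (a z)⁻¹ i j) - d| ≤ ε := by
  have htrace : ∑ i, ∑ j, a z i j * (a z)⁻¹ i j = d := by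
    have hunit := (Matrix.isUnit_iff_isUnit_det _).1 (hE.posDef z).isUnit
    have hsymm := isSymm_of_posDef (hE.posDef z).inv
    calc ∑ i, ∑ j, a z i j * (a z)⁻¹ i j = (a z * (a z)⁻¹).trace := by
          simp only [Matrix.trace, Matrix.diag_apply, Matrix.mul_apply]
          exact Finset.sum_congr rfl fun i _ => Finset.sum_congr rfl fun j _ => by
            rw [hsymm.apply j i]
      _ = d := by simp [Matrix.mul_nonsing_inv _ hunit]
  have hcont : Continuous fun x => |(∑ i, ∑ j, a x i j * (a z)⁻¹ i j) - d| := by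
    have hentry : ∀ i j, Continuous fun x => a x i j := fun i j => hE.continuous.matrix_elem i j
    fun_prop
  exact (hcont.tendsto z).eventually_le_const (by simpa [htrace] using hε)

lemma IsLocallyElliptic.exists_abs_drift_quadForm_le (hE : IsLocallyElliptic a b)
    (M : Matrix (Fin d) (Fin d) ℝ) (R : ℝ) :
    ∃ B ≥ 0, ∀ x : Euc d, ‖x‖ ≤ R → ∀ y : Euc d,
      |∑ i, b x i * ∑ j, M i j * (x j - y j)| ≤ B * ‖x - y‖ := by
  obtain ⟨C, hC0, hC⟩ := hE.exists_abs_coeff_le R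
  refine ⟨C * ∑ i, ∑ j, |M i j|, by positivity, fun x hx y => ?_⟩
  have hcoord : ∀ j, |x j - y j| ≤ ‖x - y‖ := fun j => by simpa using PiLp.norm_apply_le (x - y) j
  calc |∑ i, b x i * ∑ j, M i j * (x j - y j)|
      ≤ ∑ i, |b x i * ∑ j, M i j * (x j - y j)| := Finset.abs_sum_le_sum_abs _ _
    _ ≤ ∑ i, C * ∑ j, |M i j| * ‖x - y‖ := by
        refine Finset.sum_le_sum fun i _ => ?_
        rw [abs_mul]
        refine mul_le_mul ((hC x hx).2 i) ((Finset.abs_sum_le_sum_abs _ _).trans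
          (Finset.sum_le_sum fun j _ => ?_)) (abs_nonneg _) hC0
        rw [abs_mul]
        exact mul_le_mul_of_nonneg_left (hcoord j) (abs_nonneg _)
    _ = C * (∑ i, ∑ j, |M i j|) * ‖x - y‖ := by
        simp only [← Finset.sum_mul, ← Finset.mul_sum, mul_assoc]

end QuadForm

/-- The squared distance from `x` to `y` in the metric of `M`, regularised by `T` so that its
negative powers have no pole. -/
def regForm {d : ℕ} (M : Matrix (Fin d) (Fin d) ℝ) (T : ℝ) (x y : Euc d) : ℝ :=
  quadForm M (x - y) + T

section RegForm

variable {d : ℕ} {M : Matrix (Fin d) (Fin d) ℝ} {T : ℝ}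

lemma regForm_pos (hM : M.PosSemidef) (hT : 0 < T) (x y : Euc d) : 0 < regForm M T x y :=
  add_pos_of_nonneg_of_pos (quadForm_nonneg hM _) hT

lemma regForm_comm (M : Matrix (Fin d) (Fin d) ℝ) (T : ℝ) (x y : Euc d) :
    regForm M T x y = regForm M T y x := by
  rw [regForm, regForm, ← quadForm_neg, neg_sub]

lemma contDiff_regForm (M : Matrix (Fin d) (Fin d) ℝ) (T : ℝ) (y : Euc d) :
    ContDiff ℝ 2 fun x => regForm M T x y :=
  contDiff_quadForm_sub M y T

lemma regForm_le_mul (hM : M.PosSemidef) {L : ℝ} (hL : 1 ≤ L) {x y : Euc d}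
    (hxy : regForm M T x y ≤ L * T) (hT : 0 ≤ T) (w : Euc d) :
    regForm M T x w ≤ 2 * L * regForm M T y w := by
  have htriangle : quadForm M (x - w) ≤ 2 * quadForm M (x - y) + 2 * quadForm M (y - w) := by
    simpa using quadForm_add_le hM (x - y) (y - w)
  unfold regForm at hxy ⊢
  have hyw := mul_nonneg (sub_nonneg.2 hL) (quadForm_nonneg hM (y - w))
  linarith

lemma rpow_regForm_le_mul (hM : M.PosSemidef) {L β : ℝ} (hL : 1 ≤ L) (hβ : 0 ≤ β) (hT : 0 < T)
    {x y : Euc d} (hxy : regForm M T x y ≤ L * T) (w : Euc d) :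
    regForm M T y w ^ (-β) ≤ (2 * L) ^ β * regForm M T x w ^ (-β) := by
  have hle := Real.rpow_le_rpow_of_nonpos (regForm_pos hM hT x w) (regForm_le_mul hM hL hxy hT.le w)
    (neg_nonpos.2 hβ)
  rwa [Real.mul_rpow (by positivity) (regForm_pos hM hT y w).le, Real.rpow_neg (by positivity),
    inv_mul_le_iff₀ (by positivity)] at hle

lemma exists_pos_forall_quadForm_le (M : Matrix (Fin d) (Fin d) ℝ) (hT : 0 < T) :
    ∃ δ > 0, ∀ ξ : Euc d, ‖ξ‖ < δ → quadForm M ξ ≤ T := by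
  have hcont : Continuous (quadForm M) := by
    simpa using (contDiff_quadForm_sub M 0 0).continuous
  have hlim := (hcont.tendsto 0).eventually_le_const (u := T) (by simpa [quadForm] using hT)
  simpa using Metric.eventually_nhds_iff.1 hlim

lemma exists_regForm_net (hM : M.PosDef) {φ : Euc d → ℝ} (hφ : Continuous φ) {A : ℝ} (hA : 0 < A)
    {E : Set (Euc d)} (hE : IsCompact E) (hφE : ∀ x ∈ E, A ≤ φ x) {T₀ Λ : ℝ} (hT₀ : 0 < T₀)
    (hΛ : 0 < Λ) :
    ∃ T > 0, T ≤ T₀ ∧ (∀ y ∈ E, ∀ x, regForm M T x y < Λ * T → A / 2 < φ x) ∧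
      ∃ t : Finset (Euc d), (∀ y ∈ t, y ∈ E) ∧ ∀ x ∈ E, ∃ y ∈ t, regForm M T x y ≤ 2 * T := by
  obtain ⟨δ, hδ, hsub⟩ := hE.exists_thickening_subset_open (isOpen_lt continuous_const hφ)
    (fun x hx => (half_lt_self hA).trans_le (hφE x hx) : E ⊆ {x | A / 2 < φ x})
  obtain ⟨m, hm, hlow⟩ := exists_mul_sq_le_quadForm_of_posDef hM
  set T := min T₀ (m * δ ^ 2 / Λ)
  have hT : 0 < T := by positivity
  have hΛT : Λ * T ≤ m * δ ^ 2 := (le_div_iff₀' hΛ).1 (min_le_right _ _)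
  refine ⟨T, hT, min_le_left _ _, fun y hy x hx => hsub (mem_thickening_iff.2 ⟨y, hy, ?_⟩), ?_⟩
  · have hclose : m * dist x y ^ 2 < m * δ ^ 2 := by
      rw [dist_eq_norm]
      unfold regForm at hx
      linarith [hlow (x - y)]
    exact lt_of_pow_lt_pow_left₀ 2 hδ.le (lt_of_mul_lt_mul_left hclose hm.le)
  · obtain ⟨η, hη, hηT⟩ := exists_pos_forall_quadForm_le M hT
    obtain ⟨t, htE, htf, ht⟩ := hE.finite_cover_balls hη
    refine ⟨htf.toFinset, fun y hy => htE (htf.mem_toFinset.1 hy), fun x hx => ?_⟩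
    obtain ⟨y, hy, hxy⟩ := mem_iUnion₂.1 (ht hx)
    refine ⟨y, htf.mem_toFinset.2 hy, ?_⟩
    have hle := hηT (x - y) (by rwa [mem_ball, dist_eq_norm] at hxy)
    unfold regForm
    linarith

end RegForm

/-- The quadratic form `M` is adapted to the operator on `closedBall z r` up to an error `ε`: the
translates of `s = quadForm M` satisfy `𝓛 s ≈ 2 d` and `⟨∇s, a ∇s⟩ ≈ 4 s`, as `‖·‖ ^ 2` does for the
Laplacian. -/
structure IsAdaptedForm {d : ℕ} (a : Euc d → Matrix (Fin d) (Fin d) ℝ) (b : Euc d → Euc d)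
    (z : Euc d) (ε r : ℝ) (M : Matrix (Fin d) (Fin d) ℝ) : Prop where
  posDef : M.PosDef
  abs_Lop_sub_le : ∀ x ∈ closedBall z r, ∀ y ∈ closedBall z r, ∀ T,
    |Lop a b (fun p => regForm M T p y) x - 2 * d| ≤ ε
  abs_gradForm_sub_le : ∀ x ∈ closedBall z r, ∀ y T,
    |gradForm a (fun p => regForm M T p y) (fun p => regForm M T p y) x
      - 4 * quadForm M (x - y)| ≤ ε * quadForm M (x - y)

lemma IsLocallyElliptic.exists_isAdaptedForm {d : ℕ} {a : Euc d → Matrix (Fin d) (Fin d) ℝ}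
    {b : Euc d → Euc d} (hE : IsLocallyElliptic a b) (z : Euc d) {ε : ℝ} (hε : 0 < ε) :
    ∃ M, ∃ r > 0, r ≤ 1 ∧ IsAdaptedForm a b z ε r M := by
  have hpos := (hE.posDef z).inv
  obtain ⟨B, hB0, hB⟩ := hE.exists_abs_drift_quadForm_le (a z)⁻¹ (‖z‖ + 1)
  obtain ⟨r₀, hr₀, hnear⟩ := Metric.eventually_nhds_iff_ball.1
    ((hE.eventually_abs_sum_mul_inv_sub_le z (ε := ε / 4) (by positivity)).and
      (hE.eventually_abs_quadForm_sub_le z (ε := ε / 4) (by positivity)))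
  set r := min (r₀ / 2) (min 1 (ε / (8 * (B + 1))))
  have hr0 : 0 < r := by positivity
  have hr1 : r ≤ 1 := (min_le_right _ _).trans (min_le_left _ _)
  have hball : closedBall z r ⊆ ball z r₀ :=
    closedBall_subset_ball ((min_le_left _ _).trans_lt (half_lt_self hr₀))
  have hBr : B * (2 * r) ≤ ε / 4 := by
    have : r * (8 * (B + 1)) ≤ ε :=
      (le_div_iff₀ (by positivity)).1 ((min_le_right _ _).trans (min_le_right _ _))
    linarith
  refine ⟨(a z)⁻¹, r, hr0, hr1, hpos, fun x hx y hy T => ?_, fun x hx y T => ?_⟩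
  · have hxz : ‖x‖ ≤ ‖z‖ + 1 := (norm_le_of_mem_closedBall hx).trans (by gcongr)
    have hxy : ‖x - y‖ ≤ 2 * r := by
      rw [← dist_eq_norm]
      linarith [dist_triangle_right x y z, mem_closedBall.1 hx, mem_closedBall.1 hy]
    have hdrift := (hB x hxz y).trans ((mul_le_mul_of_nonneg_left hxy hB0).trans hBr)
    have htrace := (hnear x (hball hx)).1
    simp only [regForm]
    rw [Lop_quadForm_sub (isSymm_of_posDef hpos)]
    rw [abs_le] at hdrift htrace ⊢
    constructor <;> linarith
  · have hquad := (hnear x (hball hx)).2 (WithLp.toLp 2 ((a z)⁻¹.mulVec (x - y).ofLp))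
    rw [quadForm_mulVec_inv (hE.posDef z).isUnit, abs_le] at hquad
    simp only [regForm]
    rw [gradForm_quadForm_sub (isSymm_of_posDef hpos), abs_le]
    change _ ≤ 4 * quadForm (a x) (WithLp.toLp 2 ((a z)⁻¹.mulVec (x - y).ofLp)) - _ ∧
      4 * quadForm (a x) (WithLp.toLp 2 ((a z)⁻¹.mulVec (x - y).ofLp)) - _ ≤ _
    constructor <;> linarith

/-- A regularised power of the quadratic form with pole at `y`, shifted so as to vanish where
`regForm M T x y = S`. For suitable `α > 1` it is a subsolution away from the pole. -/
def subKernel {d : ℕ} (M : Matrix (Fin d) (Fin d) ℝ) (α S : ℝ) (y : Euc d) (T : ℝ) (x : Euc d) :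
    ℝ :=
  regForm M T x y ^ (1 - α) - S ^ (1 - α)

/-- The radial function with profile `superProfile` centred at `y`; it has compact support, and the
operator maps it to roughly `-(regForm M T x y) ^ (-β)` near the pole. -/
def superKernel {d : ℕ} (M : Matrix (Fin d) (Fin d) ℝ) (β S : ℝ) (y : Euc d) (T : ℝ) (x : Euc d) :
    ℝ :=
  superProfile β S (regForm M T x y)

section Kernels

variable {d : ℕ} {a : Euc d → Matrix (Fin d) (Fin d) ℝ} {b : Euc d → Euc d} {z x y : Euc d}
  {M : Matrix (Fin d) (Fin d) ℝ} {T K S ε r α β : ℝ}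

lemma contDiff_subKernel (hM : M.PosSemidef) (hT : 0 < T) :
    ContDiff ℝ 2 (subKernel M α S y T) :=
  ((contDiff_regForm M T y).rpow_const_of_ne fun x => (regForm_pos hM hT x y).ne').sub
    contDiff_const

lemma contDiff_superKernel (hM : M.PosSemidef) (hT : 0 < T) :
    ContDiff ℝ 2 (superKernel M β S y T) :=
  contDiff_iff_contDiffAt.2 fun x =>
    (contDiffAt_superProfile β S (regForm_pos hM hT x y).ne').comp x
      (contDiff_regForm M T y).contDiffAt

lemma subKernel_nonpos (hα : 1 ≤ α) (hS : 0 < S) (hx : S ≤ regForm M T x y) :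
    subKernel M α S y T x ≤ 0 :=
  sub_nonpos.2 (Real.rpow_le_rpow_of_nonpos hS hx (by linarith))

lemma le_subKernel (hM : M.PosSemidef) (hT : 0 < T) (hα : 1 ≤ α) {s : ℝ}
    (hx : regForm M T x y ≤ s) : s ^ (1 - α) - S ^ (1 - α) ≤ subKernel M α S y T x :=
  sub_le_sub_right (Real.rpow_le_rpow_of_nonpos (regForm_pos hM hT x y) hx (by linarith)) _

lemma mul_subKernel_lt (hM : M.PosSemidef) (hT : 0 < T) (hα : 1 < α) (hS : 0 < S) (hK : 0 ≤ K)
    (hKS : K * S < α - 1) :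
    K * subKernel M α S y T x < (α - 1) * regForm M T x y ^ (-α) := by
  have hs := regForm_pos hM hT x y
  have hp : 0 < regForm M T x y ^ (-α) := Real.rpow_pos_of_pos hs _
  rcases le_total (regForm M T x y) S with hle | hle
  · have hpow : regForm M T x y ^ (1 - α) = regForm M T x y * regForm M T x y ^ (-α) := by
      rw [sub_eq_add_neg, Real.rpow_add hs, Real.rpow_one]
    calc K * subKernel M α S y T x ≤ K * regForm M T x y ^ (1 - α) := by
          gcongr
          exact sub_le_self _ (Real.rpow_nonneg hS.le _)
      _ = K * regForm M T x y * regForm M T x y ^ (-α) := by rw [hpow, mul_assoc]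
      _ ≤ K * S * regForm M T x y ^ (-α) := by gcongr
      _ < (α - 1) * regForm M T x y ^ (-α) := by gcongr
  · exact (mul_nonpos_of_nonneg_of_nonpos hK (subKernel_nonpos hα.le hS hle)).trans_lt
      (mul_pos (sub_pos.2 hα) hp)

lemma IsAdaptedForm.mul_subKernel_lt_Lop (hM : IsAdaptedForm a b z ε r M) (hα : 1 < α)
    (hαd : 4 * α = 2 * d + 5 / 2) (hε0 : 0 ≤ ε) (hε : ε * (1 + α) ≤ 1 / 2) (hK : 0 ≤ K) (hS : 0 < S)
    (hKS : K * S < α - 1) (hx : x ∈ closedBall z r) (hy : y ∈ closedBall z r) (hT : 0 < T)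
    (hfar : 4 * α * T ≤ regForm M T x y) :
    K * subKernel M α S y T x < Lop a b (subKernel M α S y T) x := by
  have hs : ∀ x, 0 < regForm M T x y := fun x => regForm_pos hM.posDef.posSemidef hT x y
  have hLop := Lop_comp (a := a) (b := b) (x := x) (g := fun t => t ^ (1 - α) - S ^ (1 - α))
    (g₁ := fun t => (1 - α) * t ^ (-α)) (contDiff_regForm M T y)
    (fun x => by
      simpa using (Real.hasDerivAt_rpow_const (p := 1 - α) (Or.inl (hs x).ne')).sub_const
        (S ^ (1 - α)))
    ((Real.hasDerivAt_rpow_const (p := -α) (Or.inl (hs x).ne')).const_mul _)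
  refine (mul_subKernel_lt hM.posDef.posSemidef hT hα hS hK hKS).trans_le ?_
  refine le_of_le_of_eq ?_ hLop.symm
  refine mul_rpow_le_Lop_profile hα hαd hε0 hε (hs x) hfar ?_ ?_
  · linarith [(abs_le.1 (hM.abs_Lop_sub_le x hx y hy T)).2]
  · have hgrad := (abs_le.1 (hM.abs_gradForm_sub_le x hx y T)).1
    rw [show regForm M T x y - T = quadForm M (x - y) from add_sub_cancel_right _ _]
    linarith

lemma superKernel_of_ge (hM : M.PosSemidef) (hT : 0 < T) (hβ : β ≠ 1) (hS : 0 < S)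
    (hx : S ≤ regForm M T x y) :
    superKernel M β S y T x = 0 ∧ Lop a b (superKernel M β S y T) x = 0 := by
  obtain ⟨h₀, h₁, h₂⟩ := superProfile_of_ge hβ hS hx
  refine ⟨h₀, ?_⟩
  have hLop := Lop_comp (a := a) (b := b) (x := x) (contDiff_regForm M T y)
    (fun x => hasDerivAt_superProfile hβ S (regForm_pos hM hT x y))
    (hasDerivAt_superProfile₁ hβ S (regForm_pos hM hT x y))
  rw [h₁, h₂, zero_mul, zero_mul, add_zero] at hLop
  exact hLop

lemma IsAdaptedForm.exists_Lop_superKernel_add_mul_le (hM : IsAdaptedForm a b z ε r M)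
    (ha : ∀ x, (a x).PosDef)
    (hβ0 : 0 ≤ β) (hβ : β ≠ 1) (hβd : 4 * β = 2 * d - 1) (hε0 : 0 ≤ ε)
    (hε : ε * (1 + β) ≤ 1 / 2) (hK : 0 ≤ K) (hS : 0 < S) (hKS : K * S ≤ 1 / 4) :
    ∃ c > 0, ∃ C ≥ 0, ∀ y ∈ closedBall z r, ∀ T > 0, ∀ x ∈ closedBall z r,
      Lop a b (superKernel M β S y T) x + K * superKernel M β S y T x
        ≤ -c * regForm M T x y ^ (-β) + C := by
  obtain ⟨c, hc, C, hC, hle⟩ := exists_Lop_superProfile_add_mul_le hβ0 hβ hβd hε0 hε hK hS hKS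
  refine ⟨c, hc, C, hC, fun y hy T hT x hx => ?_⟩
  have hs : ∀ x, 0 < regForm M T x y := fun x => regForm_pos hM.posDef.posSemidef hT x y
  have hLop := Lop_comp (a := a) (b := b) (x := x) (contDiff_regForm M T y)
    (fun x => hasDerivAt_superProfile hβ S (hs x)) (hasDerivAt_superProfile₁ hβ S (hs x))
  refine (congrArg (· + K * superKernel M β S y T x) hLop).trans_le
    (hle _ (hs x) _ _ ?_ (gradForm_self_nonneg (ha x) _) ?_)
  · linarith [(abs_le.1 (hM.abs_Lop_sub_le x hx y hy T)).1]
  · have hgrad := (abs_le.1 (hM.abs_gradForm_sub_le x hx y T)).2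
    have hpole : 0 ≤ (4 + ε) * T := by positivity
    rw [regForm, mul_add]
    linarith

end Kernels

/-- Kernels near a point `z`, comparable with powers of a regularised distance: `sub y T` is a
strict subsolution of `𝓛 - K` away from the pole `y`, and `super y T` is a compactly supported
function whose image under `𝓛 + K` is very negative near the pole. The exponents satisfy
`-β < p < 0`, so that `sub` is less singular than the image of `super`. -/
structure LocalKernels {d : ℕ} (a : Euc d → Matrix (Fin d) (Fin d) ℝ) (b : Euc d → Euc d)
    (z : Euc d) (K : ℝ) where
  (ρ r T₀ Λ β p lowSub lowSuper highSuper : ℝ)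
  M : Matrix (Fin d) (Fin d) ℝ
  (sub super : Euc d → ℝ → Euc d → ℝ)
  ρ_pos : 0 < ρ
  ρ_le : ρ ≤ r
  r_le : r ≤ 1
  T₀_pos : 0 < T₀
  one_le_Λ : 1 ≤ Λ
  β_pos : 0 < β
  p_neg : p < 0
  neg_β_lt : -β < p
  lowSub_pos : 0 < lowSub
  lowSuper_pos : 0 < lowSuper
  highSuper_nonneg : 0 ≤ highSuper
  posDef : M.PosDef
  sub_contDiff : ∀ y, ∀ T > 0, ContDiff ℝ 2 (sub y T)
  sub_le : ∀ y, ∀ T > 0, ∀ x, sub y T x ≤ regForm M T x y ^ p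
  sub_nonpos : ∀ y ∈ ball z ρ, ∀ T > 0, ∀ x ∉ closedBall z r, sub y T x ≤ 0
  le_sub : ∀ y ∈ ball z ρ, ∀ T > 0, T ≤ T₀ → ∀ x ∈ ball z ρ, lowSub ≤ sub y T x
  mul_sub_lt : ∀ y ∈ ball z ρ, ∀ T > 0, ∀ x ∈ closedBall z r, Λ * T ≤ regForm M T x y →
    K * sub y T x < Lop a b (sub y T) x
  super_contDiff : ∀ y, ∀ T > 0, ContDiff ℝ 2 (super y T)
  super_nonneg : ∀ y, ∀ T > 0, ∀ x, 0 ≤ super y T x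
  super_eq_zero : ∀ y ∈ ball z ρ, ∀ T > 0, ∀ x ∉ ball z r,
    super y T x = 0 ∧ Lop a b (super y T) x = 0
  super_le : ∀ y ∈ ball z ρ, ∀ T > 0, ∀ x ∈ closedBall z r,
    Lop a b (super y T) x + K * super y T x ≤ -lowSuper * regForm M T x y ^ (-β) + highSuper

section LocalKernels

variable {d : ℕ} {a : Euc d → Matrix (Fin d) (Fin d) ℝ} {b : Euc d → Euc d} {z : Euc d} {K : ℝ}

lemma half_sub_quarter_ne_one (d : ℕ) : (d : ℝ) / 2 - 1 / 4 ≠ 1 := by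
  intro h
  have hcast : ((2 * d : ℕ) : ℝ) = (5 : ℕ) := by push_cast; linarith
  have : 2 * d = 5 := Nat.cast_injective hcast
  omega

lemma exists_pos_forall_le_regForm {M : Matrix (Fin d) (Fin d) ℝ} (hM : M.PosDef) {r K : ℝ}
    (hr : 0 < r) (hK : 0 ≤ K) (z : Euc d) :
    ∃ S > 0, K * S ≤ 1 / 16 ∧ ∃ ρ > 0, ρ ≤ r / 2 ∧ ∀ y ∈ ball z ρ, ∀ T > 0,
      (∀ x ∉ ball z r, S ≤ regForm M T x y) ∧
      ∀ x ∈ ball z ρ, T ≤ S / 4 → regForm M T x y ≤ S / 2 := by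
  obtain ⟨m, hm, hlow⟩ := exists_mul_sq_le_quadForm_of_posDef hM
  set S := min (m * (r / 2) ^ 2) (1 / (16 * (K + 1)))
  have hS : 0 < S := by positivity
  have hKS : (K + 1) * S ≤ 1 / 16 := by
    have : S * (16 * (K + 1)) ≤ 1 := (le_div_iff₀ (by positivity)).1 (min_le_right _ _)
    linarith
  obtain ⟨δ, hδ, hδS⟩ := exists_pos_forall_quadForm_le M (T := S / 4) (by positivity)
  refine ⟨S, hS, by linarith, min (r / 2) (δ / 2), by positivity, min_le_left _ _,
    fun y hy T hT => ⟨fun x hx => ?_, fun x hx hTS => ?_⟩⟩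
  · have hdist : r / 2 ≤ ‖x - y‖ := by
      rw [← dist_eq_norm]
      have hxz : r ≤ dist x z := not_lt.1 hx
      linarith [dist_triangle x y z, (mem_ball.1 hy).trans_le (min_le_left _ _)]
    calc S ≤ m * (r / 2) ^ 2 := min_le_left _ _
      _ ≤ m * ‖x - y‖ ^ 2 := by gcongr
      _ ≤ quadForm M (x - y) := hlow _
      _ ≤ regForm M T x y := le_add_of_nonneg_right hT.le
  · have hdist : ‖x - y‖ < δ := by
      rw [← dist_eq_norm]
      linarith [dist_triangle_right x y z, (mem_ball.1 hx).trans_le (min_le_right _ _),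
        (mem_ball.1 hy).trans_le (min_le_right _ _)]
    unfold regForm
    linarith [hδS _ hdist]

/- The exponents `α = d / 2 + 5 / 8` and `β = d / 2 - 1 / 4` straddle the critical value `d / 2` of
`Q ^ (1 - s)` on the two sides needed for sub- and supersolutions, with `α - 1 < β`. -/
lemma IsLocallyElliptic.nonempty_localKernels (hE : IsLocallyElliptic a b) (hd : 1 ≤ d) (z : Euc d)
    (hK : 0 ≤ K) : Nonempty (LocalKernels a b z K) := by
  have hd1 : (1 : ℝ) ≤ d := by exact_mod_cast hd
  set α : ℝ := d / 2 + 5 / 8 with hα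
  set β : ℝ := d / 2 - 1 / 4 with hβ
  set ε : ℝ := 1 / (2 * (1 + α)) with hε
  have hβ1 : β ≠ 1 := half_sub_quarter_ne_one d
  have hα1 : 1 < α := by linarith
  have hε0 : 0 < ε := by positivity
  have hεα : ε * (1 + α) = 1 / 2 := by rw [hε]; field_simp
  have hεβ : ε * (1 + β) ≤ 1 / 2 := hεα ▸ (by gcongr; linarith)
  obtain ⟨M, r, hr, hr1, hM⟩ := hE.exists_isAdaptedForm z hε0
  have hM0 := hM.posDef.posSemidef
  obtain ⟨S, hS, hKS, ρ, hρ, hρr, hreg⟩ := exists_pos_forall_le_regForm hM.posDef hr hK z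
  obtain ⟨c, hc, C, hC, hsuper⟩ := hM.exists_Lop_superKernel_add_mul_le hE.posDef (by linarith) hβ1
    (by linarith) hε0.le hεβ hK hS (by linarith)
  have hball : ball z ρ ⊆ closedBall z r :=
    ball_subset_closedBall.trans (closedBall_subset_closedBall (by linarith))
  exact ⟨{
    ρ := ρ, r := r, T₀ := S / 4, Λ := 4 * α, β := β, p := 1 - α
    lowSub := (S / 2) ^ (1 - α) - S ^ (1 - α), lowSuper := c, highSuper := C
    M := M, sub := subKernel M α S, super := superKernel M β S
    ρ_pos := hρ, ρ_le := by linarith, r_le := hr1, T₀_pos := by positivity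
    one_le_Λ := by linarith, β_pos := by linarith, p_neg := by linarith, neg_β_lt := by linarith
    lowSub_pos := sub_pos.2 (Real.rpow_lt_rpow_of_neg (by positivity) (by linarith) (by linarith))
    lowSuper_pos := hc, highSuper_nonneg := hC, posDef := hM.posDef
    sub_contDiff := fun y T hT => contDiff_subKernel hM0 hT
    sub_le := fun y T _ x => sub_le_self _ (by positivity)
    sub_nonpos := fun y hy T hT x hx =>
      subKernel_nonpos hα1.le hS ((hreg y hy T hT).1 x fun h => hx (ball_subset_closedBall h))
    le_sub := fun y hy T hT hTS x hx =>
      le_subKernel hM0 hT hα1.le ((hreg y hy T hT).2 x hx hTS)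
    mul_sub_lt := fun y hy T hT x hx =>
      hM.mul_subKernel_lt_Lop hα1 (by linarith) hε0.le hεα.le hK hS (by linarith) hx (hball hy) hT
    super_contDiff := fun y T hT => contDiff_superKernel hM0 hT
    super_nonneg := fun y T _ x => superProfile_nonneg _ _ _
    super_eq_zero := fun y hy T hT x hx => superKernel_of_ge hM0 hT hβ1 hS ((hreg y hy T hT).1 x hx)
    super_le := fun y hy T hT x hx => hsuper y (hball hy) T hT x hx }⟩

end LocalKernels

/-- An equilibrium distribution on a finite net `t` at scale `T`: the masses `c` have a Riesz-type
potential which is at least `1` on the net and equal to `1` at the points carrying mass. -/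
structure LocalKernels.IsEquilibrium {d : ℕ} {a : Euc d → Matrix (Fin d) (Fin d) ℝ}
    {b : Euc d → Euc d} {z : Euc d} {K : ℝ} (k : LocalKernels a b z K) (T : ℝ)
    (t : Finset (Euc d)) (c : t → ℝ) : Prop where
  pos : 0 < T
  le : T ≤ k.T₀
  mem : ∀ y : t, (y : Euc d) ∈ ball z k.ρ
  nonneg : ∀ y, 0 ≤ c y
  one_le : ∀ x : t, 1 ≤ ∑ y : t, regForm k.M T x y ^ (-k.β) * c y
  le_one : ∀ x : t, 0 < c x → ∑ y : t, regForm k.M T x y ^ (-k.β) * c y ≤ 1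

section EquilibriumNet

variable {d : ℕ} {a : Euc d → Matrix (Fin d) (Fin d) ℝ} {b : Euc d → Euc d} {z : Euc d} {K : ℝ}
  {k : LocalKernels a b z K} {T : ℝ} {t : Finset (Euc d)} {c : t → ℝ}

lemma LocalKernels.exists_isEquilibrium (k : LocalKernels a b z K) {φ : Euc d → ℝ}
    (hφ : Continuous φ) {A : ℝ} (hA : 0 < A) {E : Set (Euc d)} (hE : IsCompact E)
    (hEρ : E ⊆ ball z k.ρ) (hφE : ∀ x ∈ E, A ≤ φ x) :
    ∃ (T : ℝ) (t : Finset (Euc d)) (c : t → ℝ), k.IsEquilibrium T t c ∧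
      (∀ y : t, ∀ x, regForm k.M T x y < k.Λ * T → A / 2 < φ x) ∧
      ∀ x ∈ E, ∃ y : t, regForm k.M T x y ≤ 2 * T := by
  obtain ⟨T, hT, hTT₀, hnear, t, htE, hcov⟩ := exists_regForm_net k.posDef hφ hA hE hφE k.T₀_pos
    (zero_lt_one.trans_le k.one_le_Λ)
  have hpos : ∀ x y, 0 < regForm k.M T x y ^ (-k.β) := fun x y =>
    Real.rpow_pos_of_pos (regForm_pos k.posDef.posSemidef hT x y) _
  obtain ⟨c, hc, hone_le, hle_one⟩ := exists_equilibrium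
    (κ := Matrix.of fun x y : t => regForm k.M T x y ^ (-k.β))
    (Matrix.IsSymm.ext fun x y => by simp only [Matrix.of_apply, regForm_comm k.M T x])
    (fun x y => (hpos x y).le) (fun x => hpos x x)
  refine ⟨T, t, c, ⟨hT, hTT₀, fun y => hEρ (htE y y.2), hc, hone_le, hle_one⟩,
    fun y => hnear y (htE y y.2), fun x hx => ?_⟩
  obtain ⟨y, hy, hxy⟩ := hcov x hx
  exact ⟨⟨y, hy⟩, hxy⟩

lemma LocalKernels.IsEquilibrium.sum_mul_sub_le (h : k.IsEquilibrium T t c) {e C : ℝ} (he : 0 ≤ e)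
    (hinterp : ∀ s > 0, s ^ k.p ≤ e * s ^ (-k.β) + C) {y₀ : t} (hy₀ : 0 < c y₀) {x : Euc d}
    (hx : regForm k.M T x y₀ ≤ k.Λ * T) :
    ∑ y : t, c y * k.sub y T x ≤ e * (2 * k.Λ) ^ k.β + C * ∑ y, c y := by
  have hM := k.posDef.posSemidef
  have hNβ : 0 ≤ (2 * k.Λ) ^ k.β := Real.rpow_nonneg (by linarith [k.one_le_Λ]) _
  have hterm : ∀ y, c y * k.sub y T x
      ≤ e * (2 * k.Λ) ^ k.β * (regForm k.M T y₀ y ^ (-k.β) * c y) + C * c y := fun y => by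
    have hcompare : regForm k.M T x y ^ (-k.β)
        ≤ (2 * k.Λ) ^ k.β * regForm k.M T y₀ y ^ (-k.β) :=
      rpow_regForm_le_mul hM k.one_le_Λ k.β_pos.le h.pos (regForm_comm k.M T x y₀ ▸ hx) y
    calc c y * k.sub y T x
        ≤ c y * (e * ((2 * k.Λ) ^ k.β * regForm k.M T y₀ y ^ (-k.β)) + C) := by
          refine mul_le_mul_of_nonneg_left ?_ (h.nonneg y)
          refine (k.sub_le y T h.pos x).trans ((hinterp _ (regForm_pos hM h.pos x y)).trans ?_)
          gcongr
      _ = _ := by ring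
  calc ∑ y : t, c y * k.sub y T x
      ≤ ∑ y : t, (e * (2 * k.Λ) ^ k.β * (regForm k.M T y₀ y ^ (-k.β) * c y) + C * c y) :=
        Finset.sum_le_sum fun y _ => hterm y
    _ = e * (2 * k.Λ) ^ k.β * (∑ y : t, regForm k.M T y₀ y ^ (-k.β) * c y) + C * ∑ y, c y := by
        rw [Finset.sum_add_distrib, ← Finset.mul_sum, ← Finset.mul_sum]
    _ ≤ _ := add_le_add (mul_le_of_le_one_right (mul_nonneg he hNβ) (h.le_one y₀ hy₀)) le_rfl

/- The kernels are strict subsolutions away from their poles; near the poles, `φ` exceeds `A / 2`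
whereas the sum of the kernels is at most `σ`. -/
lemma LocalKernels.IsEquilibrium.sum_mul_sub_le_mul (h : k.IsEquilibrium T t c)
    (ha : ∀ x, (a x).PosDef) {φ : Euc d → ℝ}
    (hφ : IsSupersolutionOn a b (fun _ => K) (closedBall z 1) φ) {A σ : ℝ} (hA : 0 < A)
    (hσ : 0 ≤ σ) (hnear : ∀ y : t, ∀ x, regForm k.M T x y < k.Λ * T → A / 2 < φ x)
    (hsub : ∀ y₀, 0 < c y₀ → ∀ x, regForm k.M T x y₀ ≤ k.Λ * T → ∑ y : t, c y * k.sub y T x ≤ σ)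
    (x : Euc d) : ∑ y : t, c y * k.sub y T x ≤ 2 * σ / A * φ x := by
  have hC : ∀ y, ContDiff ℝ 2 fun x => c y * k.sub y T x := fun y =>
    contDiff_const.mul (k.sub_contDiff _ T h.pos)
  have hM : 0 ≤ 2 * σ / A := by positivity
  refine (hφ.mono (closedBall_subset_closedBall k.r_le) fun _ _ => le_rfl).le_mul_of_subsolution
    ha (isCompact_closedBall z k.r) (ContDiff.sum fun y _ => hC y)
    (fun x hx => Finset.sum_nonpos fun y _ => ?_) hM (fun x hx hlt => ?_) x
  · exact mul_nonpos_of_nonneg_of_nonpos (h.nonneg y) (k.sub_nonpos _ (h.mem y) T h.pos x hx)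
  have hfar : ∀ y, 0 < c y → k.Λ * T ≤ regForm k.M T x y := fun y hy => by
    by_contra! hclose
    have hσφ : σ ≤ 2 * σ / A * φ x := by
      calc σ = 2 * σ / A * (A / 2) := by field_simp
        _ ≤ _ := mul_le_mul_of_nonneg_left (hnear y x hclose).le hM
    exact hlt.not_ge ((hsub y hy x hclose.le).trans hσφ)
  have hstrict : ∀ y, 0 < c y → K * (c y * k.sub y T x) < c y * Lop a b (k.sub y T) x :=
    fun y hy => by
      rw [mul_left_comm]
      exact mul_lt_mul_of_pos_left (k.mul_sub_lt _ (h.mem y) T h.pos x hx (hfar y hy)) hy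
  have hmass : ∃ y, 0 < c y := by
    by_contra! hzero
    refine hlt.not_ge (le_trans (Finset.sum_nonpos fun y _ => ?_) (mul_nonneg hM (hφ.pos x).le))
    rw [le_antisymm (hzero y) (h.nonneg y), zero_mul]
  obtain ⟨y₀, hy₀⟩ := hmass
  rw [Lop_sum _ _ hC, Finset.mul_sum]
  simp only [fun y : t => Lop_const_mul (a := a) (b := b) (x := x)
    (k.sub_contDiff y T h.pos) (c y)]
  refine Finset.sum_lt_sum (fun y _ => ?_) ⟨y₀, Finset.mem_univ _, hstrict y₀ hy₀⟩
  rcases (h.nonneg y).eq_or_lt with hy | hy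
  · rw [← hy]; simp
  · exact (hstrict y hy).le

/- The subsolution kernels are less singular than the equilibrium potential, so their sum over the
net is `o(1) + C ∑ c` near the net, where `φ ≥ A / 2`; comparing with `φ` at a point where `φ ≤ H`
bounds `A ∑ c`. -/
lemma LocalKernels.exists_mass_le (k : LocalKernels a b z K) (ha : ∀ x, (a x).PosDef) {H η : ℝ}
    (hH : 0 < H) (hη : 0 < η) : ∃ A₀ > 0, ∀ A ≥ A₀, ∀ φ : Euc d → ℝ,
      IsSupersolutionOn a b (fun _ => K) (closedBall z 1) φ → (∃ x ∈ ball z k.ρ, φ x ≤ H) →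
      ∀ (T : ℝ) (t : Finset (Euc d)) (c : t → ℝ), k.IsEquilibrium T t c →
      (∀ y : t, ∀ x, regForm k.M T x y < k.Λ * T → A / 2 < φ x) → A * ∑ y, c y ≤ η := by
  have hl := k.lowSub_pos
  have hN : 0 < (2 * k.Λ) ^ k.β := Real.rpow_pos_of_pos (by linarith [k.one_le_Λ]) _
  set e := η * k.lowSub / (4 * H * (2 * k.Λ) ^ k.β) with he
  have he0 : 0 < e := by positivity
  have heN : 4 * H * (e * (2 * k.Λ) ^ k.β) = η * k.lowSub := by rw [he]; field_simp
  obtain ⟨C, hC, hinterp⟩ := exists_rpow_interpolation k.p_neg.le k.neg_β_lt he0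
  refine ⟨max 1 (4 * H * C / k.lowSub), by positivity, ?_⟩
  intro A hA φ hφ ⟨x₁, hx₁, hφx₁⟩ T t c h hnear
  have hA0 : 0 < A := zero_lt_one.trans_le ((le_max_left _ _).trans hA)
  have hAC : 4 * H * C ≤ A * k.lowSub := (div_le_iff₀ hl).1 ((le_max_right _ _).trans hA)
  have hc0 : 0 ≤ ∑ y, c y := Finset.sum_nonneg fun y _ => h.nonneg y
  set σ := e * (2 * k.Λ) ^ k.β + C * ∑ y, c y with hσ
  have hσ0 : 0 ≤ σ := by positivity
  have hcompare : k.lowSub * ∑ y, c y ≤ 2 * σ / A * H :=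
    calc k.lowSub * ∑ y, c y = ∑ y, c y * k.lowSub := by rw [Finset.mul_sum]; simp only [mul_comm]
      _ ≤ ∑ y : t, c y * k.sub y T x₁ := Finset.sum_le_sum fun y _ =>
          mul_le_mul_of_nonneg_left (k.le_sub _ (h.mem y) T h.pos h.le x₁ hx₁) (h.nonneg y)
      _ ≤ 2 * σ / A * φ x₁ := h.sum_mul_sub_le_mul ha hφ hA0 hσ0 hnear
          (fun y₀ hy₀ x hx => h.sum_mul_sub_le he0.le hinterp hy₀ hx) x₁
      _ ≤ _ := by gcongr
  have hmass : A * k.lowSub * ∑ y, c y ≤ 2 * H * σ := by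
    calc A * k.lowSub * ∑ y, c y = A * (k.lowSub * ∑ y, c y) := mul_assoc _ _ _
      _ ≤ A * (2 * σ / A * H) := by gcongr
      _ = 2 * H * σ := by field_simp
  have habsorb := mul_le_mul_of_nonneg_right hAC hc0
  refine le_of_mul_le_mul_right ?_ hl
  linear_combination 2 * hmass + habsorb + 4 * H * hσ + heN

end EquilibriumNet

/-- A function supported in `B` which is almost a supersolution of `𝓛 + K`, up to an error `ε`, and
which gains `A` on the set `E`. Adding it to a function cancels an error of size `A` on `E`. -/
structure IsCorrector {d : ℕ} (a : Euc d → Matrix (Fin d) (Fin d) ℝ) (b : Euc d → Euc d)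
    (K A ε : ℝ) (E B : Set (Euc d)) (v : Euc d → ℝ) : Prop where
  contDiff : ContDiff ℝ 2 v
  nonneg : ∀ x, 0 ≤ v x
  eq_zero : ∀ x ∉ B, v x = 0 ∧ Lop a b v x = 0
  le : ∀ x, Lop a b v x + K * v x ≤ ε
  le_on : ∀ x ∈ E, Lop a b v x + K * v x ≤ -A + ε

section Corrector

variable {d : ℕ} {a : Euc d → Matrix (Fin d) (Fin d) ℝ} {b : Euc d → Euc d} {z : Euc d}
  {K A ε : ℝ}

lemma IsCorrector.mono {E E' B B' : Set (Euc d)} {ε' : ℝ} {v : Euc d → ℝ}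
    (h : IsCorrector a b K A ε E B v) (hε : ε ≤ ε') (hE : E' ⊆ E) (hB : B ⊆ B') :
    IsCorrector a b K A ε' E' B' v where
  contDiff := h.contDiff
  nonneg := h.nonneg
  eq_zero x hx := h.eq_zero x fun hxB => hx (hB hxB)
  le x := (h.le x).trans hε
  le_on x hx := (h.le_on x (hE hx)).trans (by linarith)

lemma IsCorrector.sum {ι : Type*} [Fintype ι] {E : ι → Set (Euc d)} {B : Set (Euc d)}
    {v : ι → Euc d → ℝ} (h : ∀ i, IsCorrector a b K A ε (E i) B (v i)) :
    IsCorrector a b K A (Fintype.card ι * ε) (⋃ i, E i) B fun x => ∑ i, v i x := by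
  have hLop : ∀ x, Lop a b (fun x => ∑ i, v i x) x = ∑ i, Lop a b (v i) x := fun x =>
    Lop_sum _ _ fun i => (h i).contDiff
  have hsum : ∀ x, Lop a b (fun x => ∑ i, v i x) x + K * ∑ i, v i x
      = ∑ i, (Lop a b (v i) x + K * v i x) := fun x => by
    rw [hLop, Finset.mul_sum, Finset.sum_add_distrib]
  refine ⟨ContDiff.sum fun i _ => (h i).contDiff, fun x => Finset.sum_nonneg fun i _ =>
    (h i).nonneg x, fun x hx => ⟨Finset.sum_eq_zero fun i _ => ((h i).eq_zero x hx).1, ?_⟩,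
    fun x => ?_, fun x hx => ?_⟩
  · rw [hLop]
    exact Finset.sum_eq_zero fun i _ => ((h i).eq_zero x hx).2
  · rw [hsum]
    exact (Finset.sum_le_sum fun i _ => (h i).le x).trans_eq (by simp)
  · obtain ⟨i, hi⟩ := mem_iUnion.1 hx
    have hgain : A ≤ ∑ j, (ε - (Lop a b (v j) x + K * v j x)) :=
      le_trans (by linarith [(h i).le_on x hi])
        (Finset.single_le_sum (f := fun j => ε - (Lop a b (v j) x + K * v j x))
          (fun j _ => sub_nonneg.2 ((h j).le x)) (Finset.mem_univ i))
    rw [Finset.sum_sub_distrib, Finset.sum_const, Finset.card_univ, nsmul_eq_mul] at hgain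
    rw [hsum]
    linarith

section Local

variable {k : LocalKernels a b z K} {T : ℝ} {t : Finset (Euc d)} {c : t → ℝ}

lemma LocalKernels.IsEquilibrium.one_le_mul_sum (h : k.IsEquilibrium T t c) {x : Euc d} {y₀ : t}
    (hx : regForm k.M T x y₀ ≤ 2 * T) :
    1 ≤ (2 * 2) ^ k.β * ∑ y : t, regForm k.M T x y ^ (-k.β) * c y := by
  refine (h.one_le y₀).trans ?_
  rw [Finset.mul_sum]
  refine Finset.sum_le_sum fun y _ => ?_
  rw [← mul_assoc]
  exact mul_le_mul_of_nonneg_right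
    (rpow_regForm_le_mul k.posDef.posSemidef one_le_two k.β_pos.le h.pos hx y) (h.nonneg y)

lemma LocalKernels.IsEquilibrium.Lop_sum_mul_super_le (h : k.IsEquilibrium T t c) {x : Euc d}
    (hx : x ∈ closedBall z k.r) :
    Lop a b (fun x => ∑ y : t, c y * k.super y T x) x + K * ∑ y : t, c y * k.super y T x
      ≤ -k.lowSuper * (∑ y : t, regForm k.M T x y ^ (-k.β) * c y)
        + k.highSuper * ∑ y, c y := by
  rw [Lop_sum _ _ fun y : t => contDiff_const.mul (k.super_contDiff y T h.pos), Finset.mul_sum,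
    Finset.mul_sum, Finset.mul_sum, ← Finset.sum_add_distrib, ← Finset.sum_add_distrib]
  refine Finset.sum_le_sum fun y _ => ?_
  rw [Lop_const_mul (k.super_contDiff y T h.pos)]
  linear_combination mul_le_mul_of_nonneg_left (k.super_le y (h.mem y) T h.pos x hx) (h.nonneg y)

lemma LocalKernels.IsEquilibrium.isCorrector (h : k.IsEquilibrium T t c) (hA : 0 ≤ A) (hε : 0 ≤ ε)
    (hmass : (2 * 2) ^ k.β * k.highSuper / k.lowSuper * (A * ∑ y, c y) ≤ ε) {E : Set (Euc d)}
    (hEr : E ⊆ ball z k.r) (hE : ∀ x ∈ E, ∃ y : t, regForm k.M T x y ≤ 2 * T) :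
    IsCorrector a b K A ε E (ball z k.r)
      fun x => A * (2 * 2) ^ k.β / k.lowSuper * ∑ y : t, c y * k.super y T x := by
  have hl := k.lowSuper_pos
  set B := A * (2 * 2) ^ k.β / k.lowSuper with hB
  have hB0 : 0 ≤ B := by positivity
  have hP : ContDiff ℝ 2 fun x => ∑ y : t, c y * k.super y T x :=
    ContDiff.sum fun y _ => contDiff_const.mul (k.super_contDiff y T h.pos)
  have hoff : ∀ x ∉ ball z k.r, B * ∑ y : t, c y * k.super y T x = 0 ∧
      Lop a b (fun x => B * ∑ y : t, c y * k.super y T x) x = 0 := fun x hx => by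
    have hzero := fun y : t => k.super_eq_zero y (h.mem y) T h.pos x hx
    rw [Lop_const_mul hP, Lop_sum _ _ fun y : t => contDiff_const.mul (k.super_contDiff y T h.pos)]
    simp only [Lop_const_mul (k.super_contDiff _ T h.pos), hzero, mul_zero, Finset.sum_const_zero,
      and_self]
  have hon : ∀ x ∈ closedBall z k.r, Lop a b (fun x => B * ∑ y : t, c y * k.super y T x) x
      + K * (B * ∑ y : t, c y * k.super y T x)
      ≤ -(A * ((2 * 2) ^ k.β * ∑ y : t, regForm k.M T x y ^ (-k.β) * c y)) + ε := fun x hx => by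
    rw [Lop_const_mul hP]
    have hBl : B * k.lowSuper = A * (2 * 2) ^ k.β := by rw [hB]; field_simp
    have hBh : B * k.highSuper * ∑ y, c y
        = (2 * 2) ^ k.β * k.highSuper / k.lowSuper * (A * ∑ y, c y) := by rw [hB]; field_simp
    linear_combination mul_le_mul_of_nonneg_left (h.Lop_sum_mul_super_le hx) hB0 + hmass + hBh
      - hBl * ∑ y : t, regForm k.M T x y ^ (-k.β) * c y
  have hnonneg : ∀ x, 0 ≤ ∑ y : t, regForm k.M T x y ^ (-k.β) * c y := fun x =>
    Finset.sum_nonneg fun y _ => mul_nonneg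
      (Real.rpow_pos_of_pos (regForm_pos k.posDef.posSemidef h.pos x y) _).le (h.nonneg y)
  refine ⟨contDiff_const.mul hP, fun x => mul_nonneg hB0 (Finset.sum_nonneg fun y _ =>
    mul_nonneg (h.nonneg y) (k.super_nonneg _ T h.pos x)), hoff, fun x => ?_, fun x hx => ?_⟩
  · by_cases hx : x ∈ ball z k.r
    · refine (hon x (ball_subset_closedBall hx)).trans (add_le_of_nonpos_left (neg_nonpos.2 ?_))
      exact mul_nonneg hA (mul_nonneg (by positivity) (hnonneg x))
    · rw [(hoff x hx).1, (hoff x hx).2, mul_zero, add_zero]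
      exact hε
  · obtain ⟨y, hy⟩ := hE x hx
    have hgain := mul_le_mul_of_nonneg_left (h.one_le_mul_sum hy) hA
    linarith [hon x (ball_subset_closedBall (hEr hx))]

end Local

lemma LocalKernels.exists_isCorrector (k : LocalKernels a b z K) (ha : ∀ x, (a x).PosDef)
    (hε : 0 < ε) {H : ℝ} (hH : 0 < H) : ∃ A₀ > 0, ∀ φ : Euc d → ℝ,
      IsSupersolutionOn a b (fun _ => K) (closedBall z 1) φ → (∃ x ∈ ball z k.ρ, φ x ≤ H) →
      ∀ A ≥ A₀, ∀ E, IsCompact E → E ⊆ ball z k.ρ → (∀ x ∈ E, A ≤ φ x) →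
      ∃ v, IsCorrector a b K A ε E (ball z 1) v := by
  set C := (2 * 2) ^ k.β * k.highSuper / k.lowSuper
  have hC0 : 0 ≤ C :=
    div_nonneg (mul_nonneg (by positivity) k.highSuper_nonneg) k.lowSuper_pos.le
  obtain ⟨A₀, hA₀, hmass⟩ := k.exists_mass_le ha hH (η := ε / (C + 1)) (by positivity)
  refine ⟨A₀, hA₀, fun φ hφ hφH A hA E hE hEρ hφE => ?_⟩
  have hA0 : 0 < A := hA₀.trans_le hA
  obtain ⟨T, t, c, h, hnear, hcov⟩ :=
    k.exists_isEquilibrium hφ.contDiff.continuous hA0 hE hEρ hφE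
  have hAc : 0 ≤ A * ∑ y, c y := mul_nonneg hA0.le (Finset.sum_nonneg fun y _ => h.nonneg y)
  have hsmall := (le_div_iff₀ (by positivity)).1 (hmass A hA φ hφ hφH T t c h hnear)
  have hCmass : C * (A * ∑ y, c y) ≤ ε := by linear_combination hsmall + hAc
  exact ⟨_, (h.isCorrector hA0.le hε.le hCmass
    (hEρ.trans (ball_subset_ball k.ρ_le)) hcov).mono le_rfl subset_rfl (ball_subset_ball k.r_le)⟩

lemma IsLocallyElliptic.exists_le_on_ball_of_le_one (hE : IsLocallyElliptic a b) (y : Euc d)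
    {ρ R : ℝ} (hρ : 0 < ρ) (hR : 0 ≤ R) (hK : 0 ≤ K) {D : Set (Euc d)} (hD : IsCompact D)
    (hDR : D ⊆ ball y R) : ∃ H > 0, ∀ φ : Euc d → ℝ,
      IsSupersolutionOn a b (fun _ => K) (closedBall y R) φ → (∃ x ∈ D, φ x ≤ 1) →
      ∃ x ∈ ball y ρ, φ x ≤ H := by
  obtain ⟨w, hw⟩ := hE.exists_isBarrier y (half_pos hρ) hR hK
  obtain ⟨m, hm, hmw⟩ := hD.exists_forall_le' hw.contDiff.continuous.continuousOn
    fun x hx => hw.pos x (hDR hx)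
  refine ⟨2 / m, by positivity, fun φ hφ ⟨x, hxD, hx⟩ => ?_⟩
  by_contra! hlarge
  have hbarrier := hw.mul_le hE.posDef hφ (m := 2 / m) (by positivity)
    (fun p hp => (hlarge p (closedBall_subset_ball (half_lt_self hρ) hp)).le) x
  have htwo : 2 / m * m ≤ 2 / m * w x := by gcongr; exact hmw x hxD
  rw [div_mul_cancel₀ _ hm.ne'] at htwo
  linarith

lemma IsLocallyElliptic.exists_isCorrector (hE : IsLocallyElliptic a b) (hd : 1 ≤ d) {r R : ℝ}
    (hR : 1 ≤ R) (hK : 0 ≤ K) {D : Set (Euc d)} (hD : IsCompact D)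
    (hDR : ∀ y ∈ closedBall z r, D ⊆ ball y R) (hε : 0 < ε) : ∃ A₀ > 0, ∀ φ : Euc d → ℝ,
      IsSupersolutionOn a b (fun _ => K) (closedBall z (r + R)) φ → (∃ x ∈ D, φ x ≤ 1) →
      ∀ A ≥ A₀, ∀ E, IsCompact E → E ⊆ closedBall z r → (∀ x ∈ E, A ≤ φ x) →
      ∃ v, IsCorrector a b K A ε E (closedBall z (r + 1)) v := by
  have k : ∀ y, LocalKernels a b y K := fun y => (hE.nonempty_localKernels hd y hK).some
  obtain ⟨t, ht, hcov⟩ := (isCompact_closedBall z r).elim_nhds_subcover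
    (fun y => ball y ((k y).ρ / 2)) fun y _ => ball_mem_nhds y (half_pos (k y).ρ_pos)
  have hsub : ∀ y : t, ∀ s, closedBall (y : Euc d) s ⊆ closedBall z (r + s) := fun y s =>
    closedBall_subset_closedBall' (by linarith [mem_closedBall.1 (ht y y.2)])
  choose H hH hmoderate using fun y : t =>
    hE.exists_le_on_ball_of_le_one (y : Euc d) (k y).ρ_pos (zero_le_one.trans hR) hK hD
      (hDR y (ht y y.2))
  choose A₀ hA₀ hlocal using fun y : t =>
    (k y).exists_isCorrector hE.posDef (ε := ε / (t.card + 1)) (by positivity) (hH y)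
  have hsum : 0 ≤ ∑ y, A₀ y := Finset.sum_nonneg fun y _ => (hA₀ y).le
  refine ⟨1 + ∑ y, A₀ y, by positivity, fun φ hφ hφD A hA E hEc hEr hφE => ?_⟩
  have hAy : ∀ y, A₀ y ≤ A := fun y => by
    linarith [Finset.single_le_sum (f := A₀) (fun y _ => (hA₀ y).le) (Finset.mem_univ y)]
  have hφy : ∀ y : t, IsSupersolutionOn a b (fun _ => K) (closedBall (y : Euc d) R) φ := fun y =>
    hφ.mono (hsub y R) fun _ _ => le_rfl
  choose v hv using fun y : t =>
    hlocal y φ ((hφy y).mono (closedBall_subset_closedBall hR) fun _ _ => le_rfl)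
      (hmoderate y φ (hφy y) hφD) A (hAy y)
      (E ∩ closedBall (y : Euc d) ((k y).ρ / 2)) (hEc.inter_right isClosed_closedBall)
      (inter_subset_right.trans (closedBall_subset_ball (half_lt_self (k y).ρ_pos)))
      fun x hx => hφE x hx.1
  have hε' : Fintype.card t * (ε / (t.card + 1)) ≤ ε := by
    rw [Fintype.card_coe, mul_div_assoc', div_le_iff₀ (by positivity)]
    nlinarith
  refine ⟨_, (IsCorrector.sum fun y => (hv y).mono le_rfl subset_rfl
    (ball_subset_closedBall.trans (hsub y 1))).mono hε' (fun x hx => ?_) subset_rfl⟩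
  obtain ⟨y, hy, hxy⟩ := mem_iUnion₂.1 (hcov (hEr hx))
  exact mem_iUnion.2 ⟨⟨y, hy⟩, hx, ball_subset_closedBall hxy⟩

end Corrector

/-- A `C²` version of `min φ ψ` for positive functions: the perspective of the concave function
`t ↦ t - convexRamp t`, which lies between `min t 1` and `2`. -/
def smoothMin {d : ℕ} (φ ψ : Euc d → ℝ) (x : Euc d) : ℝ :=
  ψ x * (φ x / ψ x - convexRamp (φ x / ψ x))

section SmoothMin

variable {d : ℕ} {a : Euc d → Matrix (Fin d) (Fin d) ℝ} {b : Euc d → Euc d} {φ ψ : Euc d → ℝ}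
  {x : Euc d}

lemma contDiff_id_sub_convexRamp : ContDiff ℝ 2 fun t : ℝ => t - convexRamp t :=
  contDiff_id.sub contDiff_convexRamp

lemma contDiff_smoothMin (hφ : ContDiff ℝ 2 φ) (hψ : ContDiff ℝ 2 ψ) (hψ0 : ∀ x, 0 < ψ x) :
    ContDiff ℝ 2 (smoothMin φ ψ) :=
  hψ.mul (contDiff_id_sub_convexRamp.comp (hφ.div hψ fun x => (hψ0 x).ne'))

lemma min_le_smoothMin (hψ : 0 < ψ x) : min (φ x) (ψ x) ≤ smoothMin φ ψ x := by
  have hφψ : φ x = ψ x * (φ x / ψ x) := (mul_div_cancel₀ _ hψ.ne').symm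
  have hramp := convexRamp_le_max_sub_one (φ x / ψ x)
  rcases le_total (φ x / ψ x) 1 with ht | ht
  · rw [max_eq_right (by linarith)] at hramp
    calc min (φ x) (ψ x) ≤ ψ x * (φ x / ψ x) := (min_le_left _ _).trans_eq hφψ
      _ ≤ smoothMin φ ψ x := mul_le_mul_of_nonneg_left (by linarith) hψ.le
  · rw [max_eq_left (by linarith)] at hramp
    exact (min_le_right _ _).trans (le_mul_of_one_le_right hψ.le (by linarith))

lemma smoothMin_le (hψ : 0 < ψ x) : smoothMin φ ψ x ≤ 2 * ψ x := by
  rw [mul_comm 2]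
  exact mul_le_mul_of_nonneg_left (by linarith [sub_two_le_convexRamp (φ x / ψ x)]) hψ.le

lemma Lop_smoothMin_le (ha : (a x).PosDef) (hφ : ContDiff ℝ 2 φ) (hψ : ContDiff ℝ 2 ψ)
    (hψ0 : ∀ x, 0 < ψ x) : Lop a b (smoothMin φ ψ) x ≤
      (1 - convexRamp₁ (φ x / ψ x)) * Lop a b φ x
        + (φ x / ψ x * convexRamp₁ (φ x / ψ x) - convexRamp (φ x / ψ x)) * Lop a b ψ x := by
  have hg : ∀ t, HasDerivAt (fun t => t - convexRamp t) (1 - convexRamp₁ t) t := fun t =>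
    (hasDerivAt_id t).sub (hasDerivAt_convexRamp t)
  have hg₁ : ∀ t, HasDerivAt (fun t => 1 - convexRamp₁ t) (-convexRamp₂ t) t := fun t => by
    simpa using (hasDerivAt_convexRamp₁ t).const_sub 1
  exact (Lop_perspective_le ha hφ hψ hψ0 contDiff_id_sub_convexRamp hg (hg₁ _)
    (neg_nonpos.2 (convexRamp₂_nonneg _))).trans_eq (by ring)

/- `P` and `Q` are the shares of `φ` and `ψ` in their smooth minimum. -/
lemma exists_Lop_smoothMin_le (ha : (a x).PosDef) (hφ : ContDiff ℝ 2 φ) (hφ0 : 0 < φ x)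
    (hψ : ContDiff ℝ 2 ψ) (hψ0 : ∀ x, 0 < ψ x) {p q : ℝ} (hp : Lop a b φ x ≤ p * φ x)
    (hq : Lop a b ψ x ≤ q * ψ x) : ∃ P Q, 0 ≤ P ∧ 0 ≤ Q ∧ P + Q = smoothMin φ ψ x ∧
      (φ x ≤ ψ x → Q = 0) ∧ Lop a b (smoothMin φ ψ) x ≤ p * P + q * Q := by
  have hpos := hψ0 x
  set t := φ x / ψ x with ht
  have hP : 0 ≤ 1 - convexRamp₁ t := sub_nonneg.2 (convexRamp₁_le_one t)
  have hQ : 0 ≤ t * convexRamp₁ t - convexRamp t := sub_nonneg.2 (convexRamp_le_id_mul t)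
  refine ⟨(1 - convexRamp₁ t) * φ x, (t * convexRamp₁ t - convexRamp t) * ψ x,
    mul_nonneg hP hφ0.le, mul_nonneg hQ hpos.le, ?_, fun hle => ?_, ?_⟩
  · have hφψ : φ x = ψ x * t := (mul_div_cancel₀ _ hpos.ne').symm
    rw [smoothMin, ← ht, hφψ]
    ring
  · obtain ⟨hramp, hramp₁, -⟩ := convexRamp_of_le ((div_le_one hpos).2 hle)
    rw [hramp, hramp₁, mul_zero, sub_zero, zero_mul]
  · linear_combination Lop_smoothMin_le (b := b) ha hφ hψ hψ0
      + mul_le_mul_of_nonneg_left hp hP + mul_le_mul_of_nonneg_left hq hQ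

end SmoothMin

section Merging

variable {d : ℕ} {a : Euc d → Matrix (Fin d) (Fin d) ℝ} {b : Euc d → Euc d}
  {φ ψ w v W h : Euc d → ℝ}

lemma exists_forall_one_le_mul {X : Type*} [TopologicalSpace X] {f : X → ℝ} (hf : Continuous f)
    (hpos : ∀ x, 0 < f x) {D : Set X} (hD : IsCompact D) (hne : D.Nonempty) :
    ∃ c > 0, (∀ x ∈ D, 1 ≤ c * f x) ∧ ∃ x ∈ D, c * f x ≤ 1 := by
  obtain ⟨p, hp, hmin⟩ := hD.exists_isMinOn hne hf.continuousOn
  refine ⟨(f p)⁻¹, inv_pos.2 (hpos p), fun x hx => ?_, p, hp, (inv_mul_cancel₀ (hpos p).ne').le⟩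
  rw [← inv_mul_cancel₀ (hpos p).ne']
  exact mul_le_mul_of_nonneg_left (hmin hx) (inv_pos.2 (hpos p)).le

lemma exists_closedBall_forall_le (hh : Continuous h) {p : Euc d} {m : ℝ} (hp : m < h p) :
    ∃ r > 0, r ≤ 1 ∧ ∀ x ∈ closedBall p r, m ≤ h x := by
  obtain ⟨r, hr, hmr⟩ := nhds_basis_closedBall.mem_iff.1 (hh.continuousAt.eventually_const_le hp)
  exact ⟨min r 1, by positivity, min_le_right _ _, fun x hx =>
    hmr (closedBall_subset_closedBall (min_le_left _ _) hx)⟩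

lemma IsCorrector.exists_forall_le_mul {K A ε : ℝ} {E B : Set (Euc d)}
    (hv : IsCorrector a b K A ε E B v) (hB : IsCompact B) (hψ : Continuous ψ)
    (hψ0 : ∀ x, 0 < ψ x) : ∃ C ≥ 0, ∀ x, v x ≤ C * ψ x := by
  obtain ⟨C, hC⟩ := hB.exists_bound_of_continuousOn
    (hv.contDiff.continuous.div hψ fun x => (hψ0 x).ne').continuousOn
  refine ⟨max C 0, le_max_right _ _, fun x => ?_⟩
  by_cases hx : x ∈ B
  · rw [← div_le_iff₀ (hψ0 x)]
    exact ((le_abs_self _).trans (hC x hx)).trans (le_max_left _ _)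
  · rw [(hv.eq_zero x hx).1]
    exact mul_nonneg (le_max_right _ _) (hψ0 x).le

lemma IsCorrector.add_mul_le_indicator {K A ε N q : ℝ} {E B : Set (Euc d)}
    (hv : IsCorrector a b K A ε E B v) (hW : ∀ x ∈ B, W x ≤ K) (hEB : E ⊆ B) (hN : 0 ≤ N)
    {x : Euc d} (hq : x ∈ E → q ≤ N * A) (hq0 : x ∉ E → q = 0) :
    q + N * (Lop a b v x + W x * v x) ≤ B.indicator (fun _ => N * ε) x := by
  by_cases hx : x ∈ B
  · rw [indicator_of_mem hx]
    have hWv := mul_le_mul_of_nonneg_right (hW x hx) (hv.nonneg x)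
    by_cases hxE : x ∈ E
    · linear_combination hq hxE + mul_le_mul_of_nonneg_left (hv.le_on x hxE) hN
        + mul_le_mul_of_nonneg_left hWv hN
    · linear_combination hq0 hxE + mul_le_mul_of_nonneg_left (hv.le x) hN
        + mul_le_mul_of_nonneg_left hWv hN
  · rw [indicator_of_notMem hx, hq0 fun hxE => hx (hEB hxE), (hv.eq_zero x hx).1,
      (hv.eq_zero x hx).2, mul_zero, add_zero, mul_zero, add_zero]

section Barrier

variable {p : Euc d} {r R K : ℝ}

lemma IsBarrier.Lop_add_mul_nonneg (hw : IsBarrier a b p r R K w)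
    (hW : ∀ x ∈ ball p R, |W x| ≤ K) {x : Euc d} (hx : r ≤ dist x p) :
    0 ≤ Lop a b w x + W x * w x := by
  by_cases hxR : x ∈ ball p R
  · obtain ⟨c, hc, hle⟩ := hw.strict (dist x p) (mem_ball.1 hxR)
    linarith [hle x hx le_rfl,
      mul_le_mul_of_nonneg_right (abs_le.1 (hW x hxR)).1 (hw.nonneg x)]
  · rw [hw.eq_zero x hxR, hw.Lop_eq_zero x hxR, mul_zero, add_zero]

lemma IsBarrier.exists_neg_le_Lop_add_mul (hE : IsLocallyElliptic a b)
    (hw : IsBarrier a b p r R K w) (hK : 0 ≤ K) (hW : ∀ x ∈ ball p R, |W x| ≤ K) :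
    ∃ C ≥ 0, ∀ x ∈ closedBall p r, -C ≤ Lop a b w x + W x * w x := by
  obtain ⟨C, hC, hLop⟩ := hE.exists_abs_Lop_le hw.contDiff (‖p‖ + r)
  refine ⟨C + K, by positivity, fun x hx => ?_⟩
  have hWw : -K ≤ W x * w x := by
    by_cases hxR : x ∈ ball p R
    · have hKw : K * w x ≤ K := mul_le_of_le_one_right hK (hw.le_one x)
      linarith [mul_le_mul_of_nonneg_right (abs_le.1 (hW x hxR)).1 (hw.nonneg x)]
    · rw [hw.eq_zero x hxR, mul_zero]
      exact neg_nonpos.2 hK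
  linarith [(abs_le.1 (hLop x (norm_le_of_dist_le hx))).1]

/- A small multiple of the barrier trades negativity `m` available on a small ball for negativity
`e` on the whole of `B`. -/
lemma IsBarrier.exists_indicator_le (hE : IsLocallyElliptic a b) (hw : IsBarrier a b p r R K w)
    (hK : 0 ≤ K) (hW : ∀ x ∈ ball p R, |W x| ≤ K) {R₁ : ℝ} (hR₁ : R₁ < R) {B : Set (Euc d)}
    (hB : B ⊆ closedBall p R₁) {m : ℝ} (hm : 0 < m) : ∃ s > 0, s ≤ 1 ∧ ∃ e > 0, ∀ x,
      B.indicator (fun _ => e) x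
        ≤ (closedBall p r).indicator (fun _ => m) x + s * (Lop a b w x + W x * w x) := by
  obtain ⟨C, hC, hlow⟩ := hw.exists_neg_le_Lop_add_mul hE hK hW
  obtain ⟨c, hc, hstrict⟩ := hw.strict R₁ hR₁
  set s := min 1 (m / (2 * (C + 1)))
  have hs0 : 0 < s := by positivity
  have hsC : s * C ≤ m / 2 := by
    have : s * (2 * (C + 1)) ≤ m := (le_div_iff₀ (by positivity)).1 (min_le_right _ _)
    linarith
  refine ⟨s, hs0, min_le_left _ _, min (m / 2) (s * c), by positivity, fun x => ?_⟩
  by_cases hxr : x ∈ closedBall p r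
  · rw [indicator_of_mem hxr]
    have hind : B.indicator (fun _ => min (m / 2) (s * c)) x ≤ m / 2 :=
      (indicator_le_self' (fun _ _ => by positivity) x).trans (min_le_left _ _)
    linarith [mul_le_mul_of_nonneg_left (hlow x hxr) hs0.le]
  have hdist : r ≤ dist x p := (not_le.1 hxr).le
  rw [indicator_of_notMem hxr, zero_add]
  by_cases hxB : x ∈ B
  · rw [indicator_of_mem hxB]
    have hxR₁ : dist x p ≤ R₁ := hB hxB
    have hWw := mul_le_mul_of_nonneg_right
      (abs_le.1 (hW x (mem_ball.2 (hxR₁.trans_lt hR₁)))).1 (hw.nonneg x)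
    calc min (m / 2) (s * c) ≤ s * c := min_le_right _ _
      _ ≤ _ := mul_le_mul_of_nonneg_left (by linarith [hstrict x hdist hxR₁]) hs0.le
  · rw [indicator_of_notMem hxB]
    exact mul_nonneg hs0.le (hw.Lop_add_mul_nonneg hW hdist)

end Barrier

lemma exists_forall_abs_add_one_le (hW : ∀ R > 0, ∃ C, ∀ x : Euc d, ‖x‖ ≤ R → |W x| ≤ C)
    {s : Set (Euc d)} (hs : Bornology.IsBounded s) : ∃ K ≥ 0, ∀ x ∈ s, |W x| + 1 ≤ K := by
  obtain ⟨R, hR, hsR⟩ := hs.exists_pos_norm_le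
  obtain ⟨C, hC⟩ := hW R hR
  refine ⟨max C 0 + 1, by positivity, fun x hx => ?_⟩
  linarith [hC x (hsR x hx), le_max_left C 0]

/- The smooth minimum produces its error `J Q` only where `ψ < φ`. -/
lemma Lop_smoothMin_add_le {N s t η κ J : ℝ} {x : Euc d} (ha : (a x).PosDef)
    (hφ : ContDiff ℝ 2 φ) (hφ0 : 0 < φ x) (hψ : ContDiff ℝ 2 ψ) (hψ0 : ∀ x, 0 < ψ x)
    (hv : ContDiff ℝ 2 v) (hw : ContDiff ℝ 2 w)
    (hLφ : Lop a b φ x ≤ (κ - W x - h x) * φ x) (hLψ : Lop a b ψ x ≤ (J - η - W x) * ψ x)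
    (ht : 0 ≤ t) (hη : 0 ≤ η) (hh : 0 ≤ h x) (hκ0 : 0 ≤ κ) (hκ : 4 * κ ≤ t * η)
    (herr : ∀ Q, 0 ≤ Q → Q ≤ 2 * ψ x → (φ x ≤ ψ x → Q = 0) →
      J * Q + t * (J * ψ x) + N * (Lop a b v x + W x * v x)
        ≤ min (h x) η * min (φ x) (ψ x) + s * (Lop a b w x + W x * w x)) :
    Lop a b (fun y => smoothMin φ ψ y + N * v y - s * w y + t * ψ y) x
      + W x * (smoothMin φ ψ x + N * v x - s * w x + t * ψ x) ≤ -(t * η / 2 * ψ x) := by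
  have hG := contDiff_smoothMin hφ hψ hψ0
  have hGv := hG.add (contDiff_const.mul hv : ContDiff ℝ 2 fun y => N * v y)
  rw [Lop_add (hGv.sub (contDiff_const.mul hw)) (contDiff_const.mul hψ),
    Lop_sub_const_mul hGv hw, Lop_add hG (contDiff_const.mul hv), Lop_const_mul hv,
    Lop_const_mul hψ]
  obtain ⟨P, Q, hP, hQ, hPQ, hQ0, hLG⟩ := exists_Lop_smoothMin_le ha hφ hφ0 hψ hψ0 hLφ hLψ
  have hPQψ : P + Q ≤ 2 * ψ x := hPQ.trans_le (smoothMin_le (hψ0 x))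
  have hκP : κ * P ≤ t * η / 2 * ψ x := by
    linarith [mul_le_mul_of_nonneg_left (by linarith : P ≤ 2 * ψ x) hκ0,
      mul_le_mul_of_nonneg_right hκ (hψ0 x).le]
  have hgain : min (h x) η * min (φ x) (ψ x) ≤ h x * P + η * Q :=
    calc min (h x) η * min (φ x) (ψ x) ≤ min (h x) η * (P + Q) :=
          mul_le_mul_of_nonneg_left (hPQ ▸ min_le_smoothMin (hψ0 x)) (le_min hh hη)
      _ = min (h x) η * P + min (h x) η * Q := mul_add _ _ _
      _ ≤ h x * P + η * Q := add_le_add (mul_le_mul_of_nonneg_right (min_le_left _ _) hP)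
          (mul_le_mul_of_nonneg_right (min_le_right _ _) hQ)
  rw [← hPQ]
  linear_combination hLG + hκP + hgain + mul_le_mul_of_nonneg_left hLψ ht
    + herr Q hQ (by linarith) hQ0

lemma IsSupersolutionOn.exists_neg_of_Lop_add_le {Φ : Euc d → ℝ} {c t C : ℝ}
    (hΦ : ContDiff ℝ 2 Φ) (hψ : ∀ x, 0 < ψ x) (ht : 0 < t) (hlow : ∀ x, t * ψ x ≤ Φ x)
    (hC : 0 < C) (hup : ∀ x, Φ x ≤ C * ψ x) (hc : 0 < c)
    (hLΦ : ∀ x, Lop a b Φ x + W x * Φ x ≤ -(c * ψ x)) :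
    ∃ η > 0, IsSupersolutionOn a b (fun x => -η - W x) univ Φ := by
  refine ⟨c / C, by positivity, hΦ, fun x => (mul_pos ht (hψ x)).trans_le (hlow x), fun x _ => ?_⟩
  have hΦψ : c / C * Φ x ≤ c * ψ x :=
    calc c / C * Φ x ≤ c / C * (C * ψ x) := mul_le_mul_of_nonneg_left (hup x) (by positivity)
      _ = c * ψ x := by field_simp
  linear_combination hLΦ x + hΦψ

lemma exists_isSupersolutionOn_of_merge {N C s t η κ : ℝ} {J : Euc d → ℝ}
    (ha : ∀ x, (a x).PosDef) (hφ : IsSupersolutionOn a b (fun x => κ - W x - h x) univ φ)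
    (hψ : IsSupersolutionOn a b (fun x => J x - η - W x) univ ψ)
    (hv : ContDiff ℝ 2 v) (hv0 : ∀ x, 0 ≤ v x) (hC : 0 ≤ C) (hvψ : ∀ x, v x ≤ C * ψ x)
    (hw : ContDiff ℝ 2 w) (hw0 : ∀ x, 0 ≤ w x) (hwφ : ∀ x, w x ≤ φ x) (hwψ : ∀ x, w x ≤ ψ x)
    (hN : 0 ≤ N) (hs : 0 ≤ s) (hs1 : s ≤ 1) (ht : 0 < t) (hη : 0 < η) (hh : ∀ x, 0 ≤ h x)
    (hκ0 : 0 ≤ κ) (hκ : 4 * κ ≤ t * η)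
    (herr : ∀ x Q, 0 ≤ Q → Q ≤ 2 * ψ x → (φ x ≤ ψ x → Q = 0) →
      J x * Q + t * (J x * ψ x) + N * (Lop a b v x + W x * v x)
        ≤ min (h x) η * min (φ x) (ψ x) + s * (Lop a b w x + W x * w x)) :
    ∃ η' > 0, ∃ Φ, IsSupersolutionOn a b (fun x => -η' - W x) univ Φ := by
  have hΦ : ContDiff ℝ 2 fun x => smoothMin φ ψ x + N * v x - s * w x + t * ψ x :=
    (((contDiff_smoothMin hφ.contDiff hψ.contDiff hψ.pos).add (contDiff_const.mul hv)).sub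
      (contDiff_const.mul hw)).add (contDiff_const.mul hψ.contDiff)
  have hlow : ∀ x, t * ψ x ≤ smoothMin φ ψ x + N * v x - s * w x + t * ψ x := fun x => by
    have hwG := (le_min (hwφ x) (hwψ x)).trans (min_le_smoothMin (hψ.pos x))
    linarith [mul_le_of_le_one_left (hw0 x) hs1, mul_nonneg hN (hv0 x)]
  have hup : ∀ x, smoothMin φ ψ x + N * v x - s * w x + t * ψ x ≤ (2 + N * C + t) * ψ x :=
    fun x => by
      linear_combination smoothMin_le (φ := φ) (hψ.pos x) + mul_nonneg hs (hw0 x)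
        + mul_le_mul_of_nonneg_left (hvψ x) hN
  obtain ⟨η', hη', hΦsup⟩ := IsSupersolutionOn.exists_neg_of_Lop_add_le (W := W) hΦ hψ.pos ht
    hlow (by positivity) hup (by positivity : 0 < t * η / 2) fun x =>
      Lop_smoothMin_add_le (ha x) hφ.contDiff (hφ.pos x) hψ.contDiff hψ.pos hv hw
        (hφ.Lop_le x (mem_univ x)) (hψ.Lop_le x (mem_univ x)) ht.le hη.le (hh x) hκ0 hκ (herr x)
  exact ⟨η', hη', _, hΦsup⟩

lemma IsCorrector.indicator_mul_add_le {K A C t δ e ε Q : ℝ} {B E Z : Set (Euc d)} {x : Euc d}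
    (hv : IsCorrector a b K A ε E Z v) (hW : ∀ x ∈ Z, W x ≤ K) (hEZ : E ⊆ Z) (hBZ : B ⊆ Z)
    (hBE : ∀ x ∈ B, ψ x ≤ φ x → x ∈ E) (hψ : ∀ x ∈ B, ψ x ≤ C * A) (hA : 0 ≤ A) (hC : 0 ≤ C)
    (hδ : 0 ≤ δ) (ht : 0 ≤ t) (hε : 2 * δ * C * ε = e / 2) (htA : t * (δ * (C * A)) = e / 2)
    (hQψ : Q ≤ 2 * ψ x) (hQ0 : φ x ≤ ψ x → Q = 0) :
    B.indicator (fun _ => δ) x * Q + t * (B.indicator (fun _ => δ) x * ψ x)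
      + 2 * δ * C * (Lop a b v x + W x * v x) ≤ Z.indicator (fun _ => e) x := by
  have hN : 0 ≤ 2 * δ * C := by positivity
  by_cases hxB : x ∈ B
  · have hψx := mul_le_mul_of_nonneg_left (hψ x hxB) hδ
    have hv' := hv.add_mul_le_indicator hW hEZ hN (x := x) (q := δ * Q)
      (fun _ => by linarith [mul_le_mul_of_nonneg_left hQψ hδ])
      fun hxE => by rw [hQ0 (not_le.1 fun hle => hxE (hBE x hxB hle)).le, mul_zero]
    rw [indicator_of_mem (hBZ hxB)] at hv' ⊢
    rw [indicator_of_mem hxB]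
    linarith [mul_le_mul_of_nonneg_left hψx ht]
  · have hv' := hv.add_mul_le_indicator hW hEZ hN (x := x) (q := 0) (fun _ => by positivity)
      fun _ => rfl
    have he : 0 ≤ e / 2 := htA ▸ by positivity
    rw [indicator_of_notMem hxB, zero_mul, zero_mul, mul_zero, add_zero]
    refine hv'.trans (indicator_le_indicator ?_)
    linarith

lemma exists_one_le_and_le_on_closedBall (hψ : Continuous ψ) (hψ0 : ∀ x, 0 < ψ x) (p : Euc d)
    {R : ℝ} (hR : 0 ≤ R) : ∃ c > 0, (∀ x ∈ closedBall p R, 1 ≤ c * ψ x) ∧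
      ∃ C > 0, ∀ x ∈ closedBall p R, c * ψ x ≤ C := by
  have hcompact := isCompact_closedBall p R
  obtain ⟨c, hc, hlow, -⟩ :=
    exists_forall_one_le_mul hψ hψ0 hcompact ⟨p, mem_closedBall_self hR⟩
  obtain ⟨C, hC⟩ := hcompact.bddAbove_image (hψ.const_mul c).continuousOn
  exact ⟨c, hc, hlow, max C 1, by positivity, fun x hx =>
    (hC ⟨x, hx, rfl⟩).trans (le_max_left _ _)⟩

lemma indicator_const_le_mul_min {X : Type*} {f g₁ g₂ : X → ℝ} {D : Set X} {m : ℝ} {x : X}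
    (hf : 0 ≤ f x) (hm : ∀ y ∈ D, m ≤ f y) (hg₁ : 0 ≤ g₁ x) (hg₂ : 0 ≤ g₂ x)
    (hD₁ : ∀ y ∈ D, 1 ≤ g₁ y) (hD₂ : ∀ y ∈ D, 1 ≤ g₂ y) :
    D.indicator (fun _ => m) x ≤ f x * min (g₁ x) (g₂ x) := by
  by_cases hx : x ∈ D
  · rw [indicator_of_mem hx]
    exact (hm x hx).trans (le_mul_of_one_le_right hf (le_min (hD₁ x hx) (hD₂ x hx)))
  · rw [indicator_of_notMem hx]
    exact mul_nonneg hf (le_min hg₁ hg₂)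

lemma exists_isSupersolutionOn_of_isCorrector {p z : Euc d} {r₀ r R K A C m s t e ε η δ κ : ℝ}
    (ha : ∀ x, (a x).PosDef) (hr₀R : r₀ ≤ R) (hzR : closedBall z r ⊆ closedBall p R)
    (hφ : IsSupersolutionOn a b (fun x => κ - W x - h x) univ φ)
    (hφK : IsSupersolutionOn a b (fun _ => K) (closedBall p R) φ)
    (hφ1 : ∀ x ∈ closedBall p r₀, 1 ≤ φ x)
    (hψ : IsSupersolutionOn a b (fun x => (ball z r).indicator (fun _ => δ) x - η - W x) univ ψ)
    (hψ1 : ∀ x ∈ closedBall p R, 1 ≤ ψ x) (hψC : ∀ x ∈ closedBall p R, ψ x ≤ C * A)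
    (hA : 0 ≤ A) (hC : 0 ≤ C) (hδ : 0 ≤ δ) (hη : 0 < η) (hh : ∀ x, 0 ≤ h x)
    (hmh : ∀ x ∈ closedBall p r₀, m ≤ min (h x) η)
    (hv : IsCorrector a b K A ε (closedBall z r ∩ {x | ψ x ≤ φ x}) (closedBall z (r + 1)) v)
    (hWK : ∀ x ∈ closedBall z (r + 1), W x ≤ K) (hw : IsBarrier a b p r₀ R K w)
    (hs : 0 ≤ s) (hs1 : s ≤ 1) (hgain : ∀ x, (closedBall z (r + 1)).indicator (fun _ => e) x
      ≤ (closedBall p r₀).indicator (fun _ => m) x + s * (Lop a b w x + W x * w x))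
    (ht : 0 < t) (hε : 2 * δ * C * ε = e / 2) (htA : t * (δ * (C * A)) = e / 2)
    (hκ0 : 0 ≤ κ) (hκ : 4 * κ ≤ t * η) :
    ∃ η' > 0, ∃ Φ, IsSupersolutionOn a b (fun x => -η' - W x) univ Φ := by
  obtain ⟨C₃, hC₃, hvψ⟩ := hv.exists_forall_le_mul (isCompact_closedBall _ _)
    hψ.contDiff.continuous hψ.pos
  have hwφ : ∀ x, w x ≤ φ x := fun x => by
    simpa only [one_mul] using hw.mul_le ha hφK one_pos hφ1 x
  have hwψ : ∀ x, w x ≤ ψ x := fun x => by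
    by_cases hx : x ∈ ball p R
    · exact (hw.le_one x).trans (hψ1 x (ball_subset_closedBall hx))
    · exact (hw.eq_zero x hx).trans_le (hψ.pos x).le
  have hzZ : closedBall z r ⊆ closedBall z (r + 1) := closedBall_subset_closedBall (by linarith)
  refine exists_isSupersolutionOn_of_merge ha hφ hψ hv.contDiff hv.nonneg hC₃ hvψ hw.contDiff
    hw.nonneg hwφ hwψ (by positivity : 0 ≤ 2 * δ * C) hs hs1 ht hη hh hκ0 hκ
    fun x Q _ hQψ hQ0 => ?_
  have herr := hv.indicator_mul_add_le hWK (inter_subset_left.trans hzZ)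
    (ball_subset_closedBall.trans hzZ) (fun y hy hle => ⟨ball_subset_closedBall hy, hle⟩)
    (fun y hy => hψC y (hzR (ball_subset_closedBall hy))) hA hC hδ ht.le hε htA hQψ hQ0
  have hmin := indicator_const_le_mul_min (f := fun y => min (h y) η) (le_min (hh x) hη.le) hmh
    (hφ.pos x).le (hψ.pos x).le hφ1 fun y hy => hψ1 y (closedBall_subset_closedBall hr₀R hy)
  exact herr.trans ((hgain x).trans (add_le_add_left hmin _))

/- `φ` is compared with a high multiple `A ψ`: the higher `A`, the smaller the set `{A ψ ≤ φ}`, and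
the stronger the corrector living on it. -/
lemma IsLocallyElliptic.exists_isSupersolutionOn_of_one_le (hE : IsLocallyElliptic a b)
    (hd : 1 ≤ d) {p z : Euc d} {r₀ r R K C m s e η δ : ℝ} (hr₀ : 0 ≤ r₀) (hR : 1 ≤ R)
    (hr₀R : r₀ ≤ R) (hzR : closedBall z r ⊆ closedBall p R)
    (hDR : ∀ y ∈ closedBall z r, closedBall p r₀ ⊆ ball y R) (hK : 0 ≤ K)
    (hWK : ∀ x ∈ closedBall p R ∪ closedBall z (r + R), |W x| + 1 ≤ K)
    (hψ : IsSupersolutionOn a b (fun x => (ball z r).indicator (fun _ => δ) x - η - W x) univ ψ)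
    (hψ1 : ∀ x ∈ closedBall p R, 1 ≤ ψ x) (hψC : ∀ x ∈ closedBall p R, ψ x ≤ C) (hC : 0 < C)
    (hη : 0 < η) (hδ : 0 < δ) (hh : ∀ x, 0 ≤ h x)
    (hmh : ∀ x ∈ closedBall p r₀, m ≤ min (h x) η) (hw : IsBarrier a b p r₀ R K w) (hs : 0 ≤ s)
    (hs1 : s ≤ 1) (he : 0 < e) (hgain : ∀ x, (closedBall z (r + 1)).indicator (fun _ => e) x
      ≤ (closedBall p r₀).indicator (fun _ => m) x + s * (Lop a b w x + W x * w x))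
    (happrox : ∀ κ > 0, ∃ φ, IsSupersolutionOn a b (fun x => κ - W x - h x) univ φ) :
    ∃ η' > 0, ∃ Φ, IsSupersolutionOn a b (fun x => -η' - W x) univ Φ := by
  have hDcompact := isCompact_closedBall p r₀
  obtain ⟨A₀, -, hcorr⟩ := hE.exists_isCorrector hd hR hK hDcompact hDR
    (by positivity : 0 < e / (4 * δ * C))
  set A := max A₀ 1
  have hA1 : 1 ≤ A := le_max_right _ _
  have hA0 : 0 < A := by linarith
  set t := e / (2 * δ * C * A)
  have ht : 0 < t := by positivity
  have htA : t * (δ * (C * A)) = e / 2 := by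
    simp only [t]
    field_simp
  set κ := min 1 (t * η / 4)
  obtain ⟨φ₁, hφ₁⟩ := happrox κ (by positivity)
  obtain ⟨c, hc, hφ1, hφ1'⟩ := exists_forall_one_le_mul hφ₁.contDiff.continuous hφ₁.pos hDcompact
    ⟨p, mem_closedBall_self hr₀⟩
  have hφ := hφ₁.const_mul hc
  have hφK := hφ.mono (subset_univ (closedBall p R ∪ closedBall z (r + R))) (U' := fun _ => K)
    fun x hx => by linarith [hWK x hx, neg_abs_le (W x), hh x, min_le_left 1 (t * η / 4)]
  have hAψ := hψ.const_mul hA0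
  have hAψA : ∀ x ∈ closedBall p R, A ≤ A * ψ x := fun x hx =>
    le_mul_of_one_le_right hA0.le (hψ1 x hx)
  obtain ⟨v, hv⟩ := hcorr (fun x => c * φ₁ x) (hφK.mono subset_union_right fun _ _ => le_rfl) hφ1'
    A (le_max_left _ _) (closedBall z r ∩ {x | A * ψ x ≤ c * φ₁ x})
    ((isCompact_closedBall z r).inter_right
      (isClosed_le hAψ.contDiff.continuous hφ.contDiff.continuous))
    inter_subset_left fun x hx => (hAψA x (hzR hx.1)).trans hx.2
  refine exists_isSupersolutionOn_of_isCorrector (C := C) hE.posDef hr₀R hzR hφ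
    (hφK.mono subset_union_left fun _ _ => le_rfl) hφ1 hAψ (fun x hx => hA1.trans (hAψA x hx))
    (fun x hx => ?_) hA0.le hC.le hδ.le hη hh hmh hv (fun x hx => ?_) hw hs hs1 hgain ht ?_ htA
    (by positivity) (by linarith [min_le_right 1 (t * η / 4)])
  · rw [mul_comm]
    exact mul_le_mul_of_nonneg_right (hψC x hx) hA0.le
  · have hWx := hWK x (Or.inr (closedBall_subset_closedBall (by linarith) hx))
    linarith [le_abs_self (W x)]
  · field_simp
    norm_num

lemma IsLocallyElliptic.exists_isSupersolutionOn_of_approx (hE : IsLocallyElliptic a b)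
    (hd : 1 ≤ d) (hW : ∀ R > 0, ∃ C, ∀ x : Euc d, ‖x‖ ≤ R → |W x| ≤ C) {p z : Euc d} {r η δ : ℝ}
    (hr : 0 ≤ r) (hη : 0 < η) (hδ : 0 < δ)
    (hψ : IsSupersolutionOn a b (fun x => (ball z r).indicator (fun _ => δ) x - η - W x) univ ψ)
    (hhc : Continuous h) (hh : ∀ x, 0 ≤ h x) (hp : h p ≠ 0)
    (happrox : ∀ κ > 0, ∃ φ, IsSupersolutionOn a b (fun x => κ - W x - h x) univ φ) :
    ∃ η' > 0, ∃ Φ, IsSupersolutionOn a b (fun x => -η' - W x) univ Φ := by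
  have hp0 : 0 < h p := (hh p).lt_of_ne' hp
  obtain ⟨r₀, hr₀, hr₀1, hhD⟩ := exists_closedBall_forall_le hhc (half_lt_self hp0)
  set R := dist p z + r + 3
  have hdist : 0 ≤ dist p z := dist_nonneg
  have hR1 : 1 ≤ R := by linarith
  have hDR : ∀ y ∈ closedBall z r, closedBall p r₀ ⊆ ball y R := fun y hy x hx => by
    rw [mem_closedBall] at hx hy
    rw [mem_ball]
    linarith [dist_triangle x p y, dist_triangle_right p y z]
  have hZ : closedBall z (r + 1) ⊆ closedBall p (dist p z + r + 1) :=
    closedBall_subset_closedBall' (by rw [dist_comm z p]; linarith)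
  have hzR : closedBall z r ⊆ closedBall p R :=
    closedBall_subset_closedBall' (by rw [dist_comm z p]; linarith)
  obtain ⟨K, hK, hWK⟩ := exists_forall_abs_add_one_le hW
    (isBounded_closedBall.union isBounded_closedBall : Bornology.IsBounded
      (closedBall p R ∪ closedBall z (r + R)))
  obtain ⟨w, hw⟩ := hE.exists_isBarrier p hr₀ (by linarith : 0 ≤ R) hK
  obtain ⟨s, hs, hs1, e, he, hgain⟩ := hw.exists_indicator_le hE hK
    (fun x hx => by linarith [hWK x (Or.inl (ball_subset_closedBall hx))])
    (by linarith : dist p z + r + 1 < R) hZ (by positivity : 0 < min (h p / 2) η)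
  obtain ⟨c, hc, hψ1, C, hC, hψC⟩ :=
    exists_one_le_and_le_on_closedBall hψ.contDiff.continuous hψ.pos p (by linarith : 0 ≤ R)
  exact hE.exists_isSupersolutionOn_of_one_le hd hr₀.le hR1 (by linarith) hzR hDR hK hWK
    (hψ.const_mul hc) hψ1 hψC hC hη hδ hh
    (fun x hx => min_le_min_right η (hhD x hx)) hw hs.le hs1 he hgain happrox

end Merging

section Threshold

variable {d : ℕ} {a : Euc d → Matrix (Fin d) (Fin d) ℝ} {b : Euc d → Euc d} {V V' h : Euc d → ℝ}

lemma mem_supersolutions_univ {μ : ℝ} : μ ∈ supersolutions a b V univ ↔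
    ∃ φ, IsSupersolutionOn a b (fun x => μ - V x) univ φ := by
  refine exists_congr fun φ => ⟨fun ⟨hpos, hφ, hsup⟩ => ⟨contDiffOn_univ.1 hφ,
    fun x => hpos x (mem_univ x), fun x hx => ?_⟩, fun hφ => ⟨fun x _ => hφ.pos x,
    hφ.contDiff.contDiffOn, fun x hx => ?_⟩⟩
  · linarith [hsup x hx]
  · linarith [hφ.Lop_le x hx]

lemma exists_isSupersolutionOn_of_lamStar_lt {μ : ℝ} (hfin : lamStarFinite a b V univ)
    (hμ : lamStar a b V univ < μ) :
    ∃ ν < μ, ∃ φ, IsSupersolutionOn a b (fun x => ν - V x) univ φ := by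
  obtain ⟨ν, hν, hνμ⟩ := exists_lt_of_csInf_lt hfin.1 hμ
  exact ⟨ν, hνμ, mem_supersolutions_univ.1 hν⟩

lemma lamStar_le_of_isSupersolutionOn {μ : ℝ} {φ : Euc d → ℝ} (hfin : lamStarFinite a b V univ)
    (hφ : IsSupersolutionOn a b (fun x => μ - V x) univ φ) : lamStar a b V univ ≤ μ :=
  csInf_le hfin.2 (mem_supersolutions_univ.2 ⟨φ, hφ⟩)

lemma supersolutions_mono_of_le {c μ : ℝ} (hVV' : ∀ x, V' x ≤ V x + c)
    (hμ : μ ∈ supersolutions a b V univ) : μ + c ∈ supersolutions a b V' univ := by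
  rw [mem_supersolutions_univ] at hμ ⊢
  obtain ⟨φ, hφ⟩ := hμ
  exact ⟨φ, hφ.mono subset_rfl fun x _ => by linarith [hVV' x]⟩

lemma lamStarFinite.of_le {c : ℝ} (hfin : lamStarFinite a b V univ) (hle : ∀ x, V x ≤ V' x)
    (hVV' : ∀ x, V' x ≤ V x + c) : lamStarFinite a b V' univ := by
  obtain ⟨⟨μ, hμ⟩, B, hB⟩ := hfin
  refine ⟨⟨μ + c, supersolutions_mono_of_le hVV' hμ⟩, B, fun ν hν => hB ?_⟩
  simpa only [add_zero] using
    supersolutions_mono_of_le (fun x => (hle x).trans_eq (add_zero _).symm) hν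

lemma lamStar_le_add {c : ℝ} (hfin : lamStarFinite a b V univ)
    (hfin' : lamStarFinite a b V' univ) (hVV' : ∀ x, V' x ≤ V x + c) :
    lamStar a b V' univ ≤ lamStar a b V univ + c := by
  rw [← sub_le_iff_le_add]
  refine le_csInf hfin.1 fun μ hμ => ?_
  rw [sub_le_iff_le_add]
  exact csInf_le hfin'.2 (supersolutions_mono_of_le hVV' hμ)

/- A barrier in the ball, compared with `φ`, contradicts a supersolution of very negative level. -/
lemma IsLocallyElliptic.exists_forall_not_isSupersolutionOn (hE : IsLocallyElliptic a b)
    (p : Euc d) {R : ℝ} (hR : 0 < R) :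
    ∃ c, ∀ φ, ¬IsSupersolutionOn a b (fun _ => c) (closedBall p R) φ := by
  obtain ⟨w, hw⟩ := hE.exists_isBarrier p (half_pos hR) hR.le le_rfl
  obtain ⟨C, hC, hLop⟩ := hE.exists_abs_Lop_le hw.contDiff (‖p‖ + R)
  obtain ⟨m, hm, hmw⟩ := (isCompact_closedBall p (R / 2)).exists_forall_le'
    hw.contDiff.continuous.continuousOn fun x hx =>
      hw.pos x (closedBall_subset_ball (half_lt_self hR) hx)
  have hpos : 0 < (C + 1) / m := by positivity
  refine ⟨-((C + 1) / m), fun φ hφ => ?_⟩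
  have hle := hφ.le_mul_of_subsolution hE.posDef (isCompact_closedBall p R) hw.contDiff
    (fun y hy => (hw.eq_zero y fun h => hy (ball_subset_closedBall h)).le) le_rfl
    (fun y hy hwy => ?_) p
  · rw [zero_mul] at hle
    exact (hw.pos p (mem_ball_self hR)).not_ge hle
  rw [zero_mul] at hwy
  by_cases hyR : y ∈ closedBall p (R / 2)
  · have hmwy : C + 1 ≤ (C + 1) / m * w y :=
      calc C + 1 = (C + 1) / m * m := by field_simp
        _ ≤ (C + 1) / m * w y := mul_le_mul_of_nonneg_left (hmw y hyR) hpos.le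
    linarith [(abs_le.1 (hLop y (norm_le_of_dist_le hy))).1]
  · have hyb : y ∈ ball p R := not_not.1 fun h => hwy.ne' (hw.eq_zero y h)
    obtain ⟨c, hc, hstrict⟩ := hw.strict (dist y p) hyb
    linarith [hstrict y (not_le.1 hyR).le le_rfl, mul_pos hpos hwy]

lemma IsLocallyElliptic.exists_le_of_mem_supersolutions (hE : IsLocallyElliptic a b)
    (hV : ∀ R > 0, ∃ C, ∀ x : Euc d, ‖x‖ ≤ R → |V x| ≤ C) (lam : ℝ) (z : Euc d) {r : ℝ}
    (hr : 0 < r) : ∃ δ > 0, ∀ μ ∈ supersolutions a b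
      (fun x => V x + (ball z r).indicator (fun _ => δ) x) univ, lam ≤ μ := by
  obtain ⟨c, hc⟩ := hE.exists_forall_not_isSupersolutionOn z (half_pos hr)
  obtain ⟨K, -, hVK⟩ := exists_forall_abs_add_one_le hV
    (isBounded_closedBall : Bornology.IsBounded (closedBall z (r / 2)))
  refine ⟨max (lam + K - c) 1, by positivity, fun μ hμ => ?_⟩
  by_contra! hlt
  obtain ⟨φ, hφ⟩ := mem_supersolutions_univ.1 hμ
  refine hc φ (hφ.mono (subset_univ _) fun x hx => ?_)
  rw [indicator_of_mem (closedBall_subset_ball (half_lt_self hr) hx)]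
  linarith [hVK x hx, neg_abs_le (V x), le_max_left (lam + K - c) 1]

lemma indicator_const_le_add_abs (s : Set (Euc d)) (δ δ' : ℝ) (x : Euc d) :
    s.indicator (fun _ => δ') x ≤ s.indicator (fun _ => δ) x + |δ' - δ| := by
  by_cases hx : x ∈ s
  · rw [indicator_of_mem hx, indicator_of_mem hx]
    linarith [le_abs_self (δ' - δ)]
  · rw [indicator_of_notMem hx, indicator_of_notMem hx]
    linarith [abs_nonneg (δ' - δ)]

lemma lamStarFinite.add_indicator (hfin : lamStarFinite a b V univ) (s : Set (Euc d)) {δ : ℝ}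
    (hδ : 0 ≤ δ) : lamStarFinite a b (fun x => V x + s.indicator (fun _ => δ) x) univ :=
  hfin.of_le (c := δ) (fun x => le_add_of_nonneg_right (indicator_nonneg (fun _ _ => hδ) x))
    fun x => by gcongr; exact indicator_le_self' (fun _ _ => hδ) x

lemma IsLocallyElliptic.exists_lamStar_add_indicator_eq (hE : IsLocallyElliptic a b)
    (hV : ∀ R > 0, ∃ C, ∀ x : Euc d, ‖x‖ ≤ R → |V x| ≤ C) (hfin : lamStarFinite a b V univ)
    {lam : ℝ} (hlam : lamStar a b V univ < lam) (z : Euc d) {r : ℝ} (hr : 0 < r) :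
    ∃ δ > 0, lamStar a b (fun x => V x + (ball z r).indicator (fun _ => δ) x) univ = lam := by
  obtain ⟨δ₁, hδ₁, hge⟩ := hE.exists_le_of_mem_supersolutions hV lam z hr
  let f : ℝ → ℝ := fun δ =>
    lamStar a b (fun x => V x + (ball z r).indicator (fun _ => δ) x) univ
  have hf0 : f 0 = lamStar a b V univ := by simp [f]
  have hf1 : lam ≤ f δ₁ := le_csInf (hfin.add_indicator _ hδ₁.le).1 hge
  have hlip : ∀ δ' ∈ Icc 0 δ₁, ∀ δ ∈ Icc 0 δ₁, f δ' ≤ f δ + dist δ' δ := fun δ' hδ' δ hδ =>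
    lamStar_le_add (hfin.add_indicator _ hδ.1) (hfin.add_indicator _ hδ'.1) fun x => by
      linarith [indicator_const_le_add_abs (ball z r) δ δ' x, Real.dist_eq δ' δ]
  obtain ⟨δ, hδ, hδlam⟩ := intermediate_value_Icc hδ₁.le
    (LipschitzOnWith.of_le_add hlip).continuousOn ⟨(hf0.trans_lt hlam).le, hf1⟩
  refine ⟨δ, hδ.1.lt_of_ne ?_, hδlam⟩
  rintro rfl
  exact hlam.ne (hf0.symm.trans hδlam)

lemma C0plus.exists_le (hh : C0plus h) : ∃ C, ∀ x, h x ≤ C := by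
  obtain ⟨C, hC⟩ := (ZeroAtInftyContinuousMap.isBounded_range
    (⟨⟨h, hh.1⟩, hh.2.2.2⟩ : ZeroAtInftyContinuousMap (Euc d) ℝ)).bddAbove
  exact ⟨C, fun x => hC ⟨x, rfl⟩⟩

lemma exists_forall_abs_add_indicator_sub_le
    (hV : ∀ R > 0, ∃ C, ∀ x : Euc d, ‖x‖ ≤ R → |V x| ≤ C) (s : Set (Euc d)) (δ lam : ℝ) :
    ∀ R > 0, ∃ C, ∀ x : Euc d, ‖x‖ ≤ R → |V x + s.indicator (fun _ => δ) x - lam| ≤ C := by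
  intro R hR
  obtain ⟨C, hC⟩ := hV R hR
  refine ⟨C + |δ| + |lam|, fun x hx => (abs_sub _ _).trans ?_⟩
  have hind : |s.indicator (fun _ => δ) x| ≤ |δ| := norm_indicator_le_norm_self (fun _ => δ) x
  linarith [abs_add_le (V x) (s.indicator (fun _ => δ) x), hC x hx]

end Threshold

section Monotonicity

variable {d : ℕ} {a : Euc d → Matrix (Fin d) (Fin d) ℝ} {b : Euc d → Euc d} {V : Euc d → ℝ}

lemma IsLocallyElliptic.strictMonoRight_add_indicator (hE : IsLocallyElliptic a b) (hd : 1 ≤ d)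
    (hV : ∀ R > 0, ∃ C, ∀ x : Euc d, ‖x‖ ≤ R → |V x| ≤ C) (hfin : lamStarFinite a b V univ)
    {δ : ℝ} (hδ : 0 < δ) {z : Euc d} {r : ℝ} (hr : 0 ≤ r)
    (hlt : lamStar a b V univ <
      lamStar a b (fun x => V x + (ball z r).indicator (fun _ => δ) x) univ) :
    StrictMonoRight a b (fun x => V x + (ball z r).indicator (fun _ => δ) x) := by
  intro h hh
  by_contra! hle
  set lam := lamStar a b (fun x => V x + (ball z r).indicator (fun _ => δ) x) univ
  have hfinδ := hfin.add_indicator (ball z r) hδ.le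
  obtain ⟨C, hC⟩ := hh.exists_le
  have hfinh : lamStarFinite a b
      (fun x => V x + (ball z r).indicator (fun _ => δ) x + h x) univ :=
    hfinδ.of_le (fun x => le_add_of_nonneg_right (hh.2.1 x)) fun x => add_le_add_right (hC x) _
  obtain ⟨p, hp⟩ := hh.2.2.1
  obtain ⟨ν, hν, ψ, hψ⟩ := exists_isSupersolutionOn_of_lamStar_lt hfin hlt
  have happrox : ∀ κ > 0, ∃ φ, IsSupersolutionOn a b
      (fun x => κ - (V x + (ball z r).indicator (fun _ => δ) x - lam) - h x) univ φ :=
    fun κ hκ => by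
      obtain ⟨μ, hμ, φ, hφ⟩ := exists_isSupersolutionOn_of_lamStar_lt hfinh
        (hle.trans_lt (lt_add_of_pos_right lam hκ))
      exact ⟨φ, hφ.mono subset_rfl fun x _ => by linarith⟩
  obtain ⟨η, hη, Φ, hΦ⟩ := hE.exists_isSupersolutionOn_of_approx hd
    (exists_forall_abs_add_indicator_sub_le hV (ball z r) δ lam) hr (sub_pos.2 hν) hδ
    (hψ.mono subset_rfl fun x _ => by linarith) hh.1 hh.2.1 hp happrox
  have hle' : lam ≤ lam - η :=
    lamStar_le_of_isSupersolutionOn hfinδ (hΦ.mono subset_rfl fun x _ => by linarith)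
  linarith

theorem statement8_general (hd : 1 ≤ d) (hE : IsLocallyElliptic a b)
    (hV : ∀ R > 0, ∃ C, ∀ x : Euc d, ‖x‖ ≤ R → |V x| ≤ C) (hfin : lamStarFinite a b V univ)
    {lam : ℝ} (hlam : lamStar a b V univ < lam) (z : Euc d) {r : ℝ} (hr : 0 < r) :
    ∃ δ > 0,
      lam = lamStar a b (fun x => V x + (ball z r).indicator (fun _ => δ) x) univ ∧
      StrictMonoRight a b (fun x => V x + (ball z r).indicator (fun _ => δ) x) := by
  obtain ⟨δ, hδ, rfl⟩ := hE.exists_lamStar_add_indicator_eq hV hfin hlam z hr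
  exact ⟨δ, hδ, rfl, hE.strictMonoRight_add_indicator hd hV hfin hδ hr.le hlam⟩

end Monotonicity

/-- Corollary 3.2: for any `λ > λ*(V)` and any open ball `𝓑` there exists `δ > 0` such
that `λ = λ*(V + δ·1_𝓑)` and `λ*` is strictly right monotone at `V + δ·1_𝓑`. -/
theorem statement8 {d : ℕ} (hd : 1 ≤ d)
    (a : Euc d → Matrix (Fin d) (Fin d) ℝ) (b : Euc d → Euc d)
    (hstand : StandingB a b)
    (V : Euc d → ℝ) (hVmeas : Measurable V)
    (hVlocbdd : ∀ R > 0, ∃ C, ∀ x : Euc d, ‖x‖ ≤ R → |V x| ≤ C)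
    (hVbdd : ∃ m, ∀ x, m ≤ V x)
    (hfin : lamStarFinite a b V Set.univ) :
    ∀ lam : ℝ, lamStar a b V Set.univ < lam →
    ∀ (z : Euc d) (r : ℝ), 0 < r → ∃ δ > 0,
      lam = lamStar a b (fun x => V x + (Metric.ball z r).indicator (fun _ => δ) x) Set.univ ∧
      StrictMonoRight a b (fun x => V x + (Metric.ball z r).indicator (fun _ => δ) x) :=
  fun _ hlam z _ hr => statement8_general hd hstand.isLocallyElliptic hVlocbdd hfin hlam z hr
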